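/- For n = 68533 = 5909 + 62624, the least index i with |a(68533,i)| = M_68533 is L(68533) = (68533·68534 - 2·3735)/4 - 19787. -/

import Mathlib

open Polynomial

/-- `a n i` is the coefficient of `q^i` in `(q;q)_n = ∏_{k=1}^n (1 - q^k)` over `ℤ`. -/
noncomputable def a (n i : ℕ) : ℤ :=
  (∏ k ∈ Finset.Icc 1 n, (1 - (X : Polynomial ℤ) ^ k)).coeff i

/-- `M n` is the maximum of `|a n i|` over `0 ≤ i ≤ n(n+1)/2`. -/
noncomputable def M (n : ℕ) : ℕ :=
  (Finset.range (n * (n + 1) / 2 + 1)).sup fun i => (a n i).natAbs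

/-- `L n` is the least index `i` with `|a n i| = M n`. -/
noncomputable def L (n : ℕ) : ℕ :=
  sInf {i : ℕ | (a n i).natAbs = M n}

namespace QP
open Real Finset

/-- The sine product. -/
noncomputable def S (n : ℕ) (θ : ℝ) : ℝ := ∏ k ∈ range n, (2 * sin (((k : ℝ) + 1) * θ / 2))

lemma S_continuous (n : ℕ) : Continuous (S n) := by
  unfold S; fun_prop

lemma one_sub_exp (x : ℝ) : (1 : ℂ) - Complex.exp (x * Complex.I) =
    Complex.exp (x / 2 * Complex.I) * (-Complex.I) * ((2 * sin (x / 2) : ℝ) : ℂ) := by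
  have h : Complex.exp (x * Complex.I) = Complex.exp (x / 2 * Complex.I) ^ 2 := by
    rw [← Complex.exp_nat_mul]; congr 1; push_cast; ring
  rw [h, Complex.exp_mul_I]
  push_cast
  have h2 := Complex.sin_sq_add_cos_sq ((x : ℂ) / 2)
  set s := Complex.sin ((x : ℂ) / 2)
  set c := Complex.cos ((x : ℂ) / 2)
  have hI : Complex.I ^ 2 = -1 := Complex.I_sq
  linear_combination (-1) * h2 + (s ^ 2) * hI

lemma prod_one_sub (n : ℕ) (θ : ℝ) :
    ∏ k ∈ range n, ((1 : ℂ) - Complex.exp (((k : ℝ) + 1) * θ * Complex.I)) =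
    Complex.exp ((n * (n + 1) / 4 : ℝ) * θ * Complex.I) * (-Complex.I) ^ n * (S n θ : ℝ) := by
  induction n with
  | zero => simp [S]
  | succ n ih =>
    rw [prod_range_succ, ih]
    have := one_sub_exp (((n : ℝ) + 1) * θ)
    push_cast at this ⊢
    rw [this, S, S, prod_range_succ]
    push_cast
    have he : Complex.exp (((n : ℂ) + 1) * ((n : ℂ) + 1 + 1) / 4 * θ * Complex.I) =
      Complex.exp ((n : ℂ) * ((n : ℂ) + 1) / 4 * θ * Complex.I) *
      Complex.exp (((n : ℂ) + 1) * θ / 2 * Complex.I) := by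
      rw [← Complex.exp_add]; congr 1; ring
    rw [he]
    ring

lemma natDegree_le (n : ℕ) :
    (∏ k ∈ Icc 1 n, (1 - (X : Polynomial ℤ) ^ k)).natDegree ≤ n * (n + 1) / 2 := by
  refine (natDegree_prod_le _ _).trans ?_
  have : ∑ k ∈ Icc 1 n, (1 - (X : Polynomial ℤ) ^ k).natDegree ≤ ∑ k ∈ Icc 1 n, k := by
    refine sum_le_sum fun k _ => ?_
    refine (natDegree_sub_le _ _).trans ?_
    simp
  refine this.trans ?_
  have h2 : ∑ k ∈ Icc 1 n, k = ∑ k ∈ range (n + 1), k := by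
    rw [Finset.range_eq_Ico, Finset.sum_eq_sum_Ico_succ_bot (by omega)]
    simp; rfl
  rw [h2, Finset.sum_range_id]
  simp [mul_comm]

lemma coeff_sum (n i : ℕ) (θ : ℝ) (hn : n % 4 = 1) :
    ∑ k ∈ range (n * (n + 1) / 2 + 1), (a n k : ℝ) * cos (((k : ℝ) - i) * θ) =
    S n θ * sin (((n * (n + 1) / 4 : ℝ) - i) * θ) := by
  have h1 : ∑ k ∈ range (n * (n + 1) / 2 + 1), (a n k : ℂ) * Complex.exp (θ * Complex.I) ^ k =
      ∏ k ∈ range n, ((1 : ℂ) - Complex.exp (((k : ℝ) + 1) * θ * Complex.I)) := by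
    have := Polynomial.eval₂_eq_sum_range' (Int.castRingHom ℂ)
      (p := ∏ k ∈ Icc 1 n, (1 - (X : Polynomial ℤ) ^ k)) (n := n * (n + 1) / 2 + 1)
      (Nat.lt_succ_of_le (natDegree_le n)) (Complex.exp (θ * Complex.I))
    unfold a
    simp only [eq_intCast] at this
    rw [← this, eval₂_finsetProd]
    have h3 : Icc 1 n = Ico 1 (n + 1) := by rfl
    rw [h3, prod_Ico_eq_prod_range]
    refine prod_congr (by simp) fun k _ => ?_
    rw [eval₂_sub, eval₂_one, eval₂_pow, eval₂_X, ← Complex.exp_nat_mul]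
    congr 2; push_cast; ring
  rw [prod_one_sub] at h1
  have hI : (-Complex.I) ^ n = -Complex.I := by
    conv_lhs => rw [← Nat.div_add_mod n 4, hn]
    rw [pow_add, pow_mul]
    have : (-Complex.I) ^ 4 = 1 := by
      rw [neg_pow, Complex.I_pow_four]; norm_num
    rw [this]; simp
  rw [hI] at h1
  have h2 := congrArg (fun z => (z * Complex.exp (-(i : ℂ) * θ * Complex.I)).re) h1
  simp only [sum_mul, Complex.re_sum] at h2
  have h4 : ∀ k : ℕ, ((a n k : ℂ) * Complex.exp (θ * Complex.I) ^ k *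
      Complex.exp (-(i : ℂ) * θ * Complex.I)).re = (a n k : ℝ) * cos (((k : ℝ) - i) * θ) := by
    intro k
    rw [← Complex.exp_nat_mul, mul_assoc, ← Complex.exp_add]
    have : (k : ℂ) * (θ * Complex.I) + -(i : ℂ) * θ * Complex.I =
      ((((k : ℝ) - i) * θ : ℝ) : ℂ) * Complex.I := by push_cast; ring
    rw [this, ← Complex.ofReal_intCast, Complex.re_ofReal_mul, Complex.exp_ofReal_mul_I_re]
  simp only [h4] at h2
  rw [h2]
  have h5 : Complex.exp ((n * (n + 1) / 4 : ℝ) * θ * Complex.I) * -Complex.I * (S n θ : ℝ) *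
      Complex.exp (-(i : ℂ) * θ * Complex.I) =
      ((S n θ : ℝ) : ℂ) * (Complex.exp (((((n * (n + 1) / 4 : ℝ) - i) * θ : ℝ) : ℂ) * Complex.I) * -Complex.I) := by
    have : Complex.exp (((((n * (n + 1) / 4 : ℝ) - i) * θ : ℝ) : ℂ) * Complex.I) =
      Complex.exp ((n * (n + 1) / 4 : ℝ) * θ * Complex.I) * Complex.exp (-(i : ℂ) * θ * Complex.I) := by
      rw [← Complex.exp_add]; congr 1; push_cast; ring
    rw [this]; ring
  rw [h5, Complex.re_ofReal_mul]
  congr 1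
  rw [Complex.mul_re, Complex.exp_ofReal_mul_I_re, Complex.exp_ofReal_mul_I_im]
  simp

/-- Fourier coefficient. -/
noncomputable def F (n : ℕ) (x : ℝ) : ℝ := ∫ θ in (0 : ℝ)..π, S n θ * sin (x * θ)

lemma integral_cos_int (m : ℤ) : ∫ θ in (0 : ℝ)..π, cos ((m : ℝ) * θ) = if m = 0 then π else 0 := by
  split_ifs with h
  · subst h; simp
  · have hm : (m : ℝ) ≠ 0 := by exact_mod_cast h
    rw [intervalIntegral.integral_comp_mul_left (fun x => cos x) hm]
    simp [Real.sin_int_mul_pi]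

lemma coeff_formula (n i : ℕ) (hn : n % 4 = 1) (hi : i ≤ n * (n + 1) / 2) :
    (a n i : ℝ) * π = F n ((n * (n + 1) / 4 : ℝ) - i) := by
  unfold F
  simp_rw [← coeff_sum n i _ hn]
  rw [intervalIntegral.integral_finsetSum]
  · have : ∀ k ∈ range (n * (n + 1) / 2 + 1), ∫ θ in (0 : ℝ)..π, (a n k : ℝ) * cos (((k : ℝ) - i) * θ) =
        if k = i then (a n i : ℝ) * π else 0 := by
      intro k _
      rw [intervalIntegral.integral_const_mul]
      have h := integral_cos_int ((k : ℤ) - i)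
      push_cast at h
      rw [h]
      split_ifs with h1 h2 h2
      · subst h2; rfl
      · omega
      · omega
      · simp
    rw [sum_congr rfl this, sum_ite_eq']
    rw [if_pos]
    simp; omega
  · intro k _
    apply Continuous.intervalIntegrable
    fun_prop

end QP

namespace QP
open Real Finset

/-- Dirichlet-type cosine sum. -/
noncomputable def D (n : ℕ) (φ : ℝ) : ℝ := ∑ k ∈ range n, cos (((k : ℝ) + 1) * φ)

lemma D_closed (n : ℕ) (φ : ℝ) : 2 * sin (φ / 2) * D n φ = sin ((n + 1 / 2) * φ) - sin (φ / 2) := by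
  unfold D
  induction n with
  | zero => simp; ring_nf
  | succ n ih =>
    rw [sum_range_succ, mul_add, ih]
    have h1 : (n + 1 / 2 : ℝ) * φ = ((n : ℝ) + 1) * φ - φ / 2 := by ring
    have h2 : (((n + 1 : ℕ) : ℝ) + 1 / 2 : ℝ) * φ = ((n : ℝ) + 1) * φ + φ / 2 := by push_cast; ring
    rw [h1, h2, sin_sub, sin_add]; ring

lemma D_good (n : ℕ) (φ s : ℝ) (hs : 0 < s) (h : s ≤ |sin (φ / 2)|) : -D n φ ≤ 1 / 2 + 1 / (2 * s) := by
  have h0 := D_closed n φ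
  have h1 := abs_le.1 (abs_sin_le_one ((n + 1 / 2) * φ))
  have hne : 0 < |sin (φ / 2)| := by linarith
  have h3 : |sin (φ / 2)| * (-D n φ - 1 / 2) ≤ 1 / 2 := by
    rcases abs_cases (sin (φ / 2)) with ⟨h4, _⟩ | ⟨h4, _⟩ <;> rw [h4] <;> nlinarith
  by_cases h5 : -D n φ - 1 / 2 ≤ 0
  · have : 0 < 1 / (2 * s) := by positivity
    linarith
  · have : s * (-D n φ - 1 / 2) ≤ 1 / 2 := by nlinarith
    have h6 : -D n φ - 1 / 2 ≤ 1 / (2 * s) := by rw [le_div_iff₀ (by positivity)]; linarith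
    linarith

/-- small-angle bound -/
lemma D_small (n : ℕ) (φ p : ℝ) (h0 : 0 < φ) (h1 : φ ≤ 0.21) (hp : 0 ≤ p)
    (h : -sin ((n + 1 / 2) * φ) ≤ p) : -D n φ ≤ 1 / 2 + 1.0019 * p / φ := by
  have hc := D_closed n φ
  have hs := sin_gt_sub_cube (x := φ / 2) (by linarith)
  have h3 : φ / 2 * (1 / 1.0019) ≤ sin (φ / 2) := by nlinarith [mul_pos h0 h0]
  have h4 : 0 < sin (φ / 2) := by linarith [show 0 < φ / 2 * (1 / 1.0019) by positivity]
  have h5 : sin (φ / 2) * (-D n φ - 1 / 2) ≤ p / 2 := by nlinarith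
  by_cases h6 : -D n φ - 1 / 2 ≤ 0
  · have : 0 ≤ 1.0019 * p / φ := by positivity
    linarith
  · have : φ / 2 * (1 / 1.0019) * (-D n φ - 1 / 2) ≤ p / 2 := by nlinarith
    have h6 : -D n φ - 1 / 2 ≤ 1.0019 * p / φ := by rw [le_div_iff₀ h0]; linarith
    linarith

lemma D_neg (n : ℕ) (φ : ℝ) : D n (-φ) = D n φ := by
  unfold D; simp

lemma D_periodic (n : ℕ) (φ : ℝ) (m : ℤ) : D n (φ - m * (2 * π)) = D n φ := by
  unfold D
  refine sum_congr rfl fun k _ => ?_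
  have : ((k : ℝ) + 1) * (φ - m * (2 * π)) = ((k : ℝ) + 1) * φ - (((k + 1) * m : ℤ) : ℝ) * (2 * π) := by
    push_cast; ring
  rw [this, Real.cos_sub_int_mul_two_pi]

lemma neg_sin_le (x : ℝ) (hx : 0 < x) : -sin x ≤ x / (π + 1) := by
  have hpi := pi_gt_three
  rcases le_or_gt (π + 1) x with h | h
  · have : 1 ≤ x / (π + 1) := by rw [le_div_iff₀ (by linarith)]; linarith
    linarith [neg_one_le_sin x]
  · rcases le_or_gt π x with h2 | h2
    · have h3 := sin_le (x := x - π) (by linarith)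
      rw [sin_sub_pi] at h3
      refine h3.trans ?_
      rw [le_div_iff₀ (by linarith)]
      nlinarith
    · have := sin_pos_of_pos_of_lt_pi hx h2
      have : 0 < x / (π + 1) := by positivity
      linarith

lemma D_univ (n : ℕ) (hn : 10000 ≤ n) (φ : ℝ) : -D n φ ≤ 0.243 * n := by
  have hn' : (10000 : ℝ) ≤ n := by exact_mod_cast hn
  -- reduce
  wlog hφ : 0 ≤ φ ∧ φ ≤ π generalizing φ
  · set m := round (φ / (2 * π)) with hm
    have h1 := abs_sub_round (φ / (2 * π))
    rw [← hm] at h1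
    have h2 : |φ - m * (2 * π)| ≤ π := by
      have : φ - m * (2 * π) = (φ / (2 * π) - m) * (2 * π) := by field_simp
      rw [this, abs_mul, abs_of_pos (by positivity : 0 < 2 * π)]
      nlinarith [pi_pos]
    rcases abs_cases (φ - m * (2 * π)) with ⟨h3, h4⟩ | ⟨h3, h4⟩
    · have := this (φ - m * (2 * π)) ⟨h4, by linarith⟩
      rwa [D_periodic] at this
    · have := this (-(φ - m * (2 * π))) ⟨by linarith, by linarith⟩
      rwa [D_neg, D_periodic] at this
  obtain ⟨h0, h1⟩ := hφ
  rcases h0.eq_or_lt with h0 | h0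
  · subst h0
    have : D n 0 = n := by simp [D]
    rw [this]; linarith
  rcases le_or_gt φ 0.21 with h2 | h2
  · have h3 := neg_sin_le ((n + 1 / 2) * φ) (by positivity)
    have h4 := D_small n φ _ h0 h2 (by positivity) h3
    have h5 : 1.0019 * ((n + 1 / 2) * φ / (π + 1)) / φ = 1.0019 * (n + 1 / 2) / (π + 1) := by
      field_simp
    rw [h5] at h4
    have h6 : 1.0019 * (n + 1 / 2) / (π + 1) ≤ 0.24194 * (n + 1 / 2) := by
      rw [div_le_iff₀ (by positivity)]
      nlinarith [pi_gt_d6]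
    linarith
  · have h3 : 0.1 ≤ |sin (φ / 2)| := by
      have h4 : sin (φ / 2) ≥ 2 / π * (φ / 2) := Real.mul_le_sin (by linarith) (by linarith)
      have h5 : 2 / π * (φ / 2) = φ / π := by ring
      have : 0.21 / 3.15 ≤ φ / π := by
        gcongr; linarith [pi_lt_d2]
      rcases le_or_gt (φ/2) 1 with h6 | h6
      · have h7 := sin_gt_sub_cube (x := φ / 2) (by linarith)
        rw [abs_of_pos (by linarith [show (0 : ℝ) < 0.21 / 3.15 by norm_num])]
        nlinarith [mul_pos h0 h0, sq_nonneg (φ - 0.21)]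
      · rw [abs_of_pos (by linarith [show (0 : ℝ) < 0.21 / 3.15 by norm_num])]
        have : 2 / 3.15 ≤ φ / π := by
          gcongr <;> linarith [pi_lt_d2]
        linarith [show (0.1 : ℝ) ≤ 2 / 3.15 by norm_num]
    have := D_good n φ 0.1 (by norm_num) h3
    norm_num at this
    linarith

lemma one_sub_norm_le (w : ℂ) (hw : ‖w‖ = 1) : ‖1 - w‖ ≤ 40 / 37 * ‖1 - (17 / 20 : ℝ) * w‖ := by
  have h1 : ‖1 - w‖ ^ 2 ≤ (40 / 37 * ‖1 - (17 / 20 : ℝ) * w‖) ^ 2 := by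
    rw [mul_pow, ← Complex.normSq_eq_norm_sq, ← Complex.normSq_eq_norm_sq]
    have h2 : Complex.normSq w = 1 := by rw [Complex.normSq_eq_norm_sq, hw]; norm_num
    rw [Complex.normSq_apply] at h2
    rw [Complex.normSq_apply, Complex.normSq_apply]
    simp only [Complex.sub_re, Complex.one_re, Complex.sub_im, Complex.one_im, Complex.re_ofReal_mul, Complex.im_ofReal_mul]
    nlinarith [sq_nonneg (w.re + 1), sq_nonneg w.im]
  exact (le_abs_self _).trans (abs_le_of_sq_le_sq h1 (by positivity))

lemma log_norm_le (φ : ℝ) : ‖(1 : ℂ) - (17 / 20 : ℝ) * Complex.exp (φ * Complex.I)‖ ≤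
    exp (0.001 - ∑ m ∈ range 32, (17 / 20 : ℝ) ^ (m + 1) / (m + 1) * cos (((m : ℝ) + 1) * φ)) := by
  set z : ℂ := -((17 / 20 : ℝ) * Complex.exp (φ * Complex.I)) with hz
  have hnz : ‖z‖ = 17 / 20 := by
    rw [hz, norm_neg, norm_mul, Complex.norm_exp_ofReal_mul_I]; norm_num
  have h1 := Complex.norm_log_sub_logTaylor_le 32 (z := z) (by rw [hnz]; norm_num)
  rw [hnz] at h1
  have h2 : (Complex.log (1 + z)).re - (Complex.logTaylor 33 z).re ≤ 0.001 := by
    rw [← Complex.sub_re]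
    refine (Complex.re_le_norm _).trans (h1.trans ?_)
    norm_num
  have h3 : (Complex.logTaylor 33 z).re =
      -∑ m ∈ range 32, (17 / 20 : ℝ) ^ (m + 1) / (m + 1) * cos (((m : ℝ) + 1) * φ) := by
    unfold Complex.logTaylor
    rw [sum_range_succ', Complex.add_re, Complex.re_sum, ← sum_neg_distrib]
    simp only [Nat.cast_zero, div_zero, Complex.zero_re, add_zero]
    refine sum_congr rfl fun m _ => ?_
    have : (-1 : ℂ) ^ (m + 1 + 1) * z ^ (m + 1) / ((m + 1 : ℕ) : ℂ) =
       ((-((17 / 20 : ℝ) ^ (m + 1) / (m + 1)) : ℝ) : ℂ) * Complex.exp (((((m : ℝ) + 1) * φ : ℝ) : ℂ) * Complex.I) := by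
      rw [hz, neg_pow (_ * _), mul_pow, ← Complex.exp_nat_mul, pow_succ (-1 : ℂ) (m + 1)]
      have h5 : (-1 : ℂ) ^ (m + 1) * (-1) ^ (m + 1) = 1 := by
        rw [← mul_pow]; simp
      have h6 : ((m + 1 : ℕ) : ℂ) * (φ * Complex.I) = ((((m : ℝ) + 1) * φ : ℝ) : ℂ) * Complex.I := by
        push_cast; ring
      rw [h6]
      push_cast
      linear_combination (-(17 / 20 : ℂ) ^ (m + 1) * Complex.exp (((m : ℂ) + 1) * φ * Complex.I) / (m + 1)) * h5
    rw [this, Complex.re_ofReal_mul, Complex.exp_ofReal_mul_I_re]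
    ring
  rw [Complex.log_re, h3] at h2
  have hpos : 0 < ‖1 + z‖ := by
    have := norm_sub_norm_le 1 (-z)
    rw [norm_neg, hnz, norm_one, sub_neg_eq_add] at this
    linarith
  have h4 : (1 : ℂ) - (17 / 20 : ℝ) * Complex.exp (φ * Complex.I) = 1 + z := by rw [hz]; ring
  rw [h4, ← exp_log hpos]
  apply exp_le_exp.2
  linarith

lemma S_abs_le (n : ℕ) (θ : ℝ) : |S n θ| ≤
    exp (0.079 * n + ∑ m ∈ range 32, (17 / 20 : ℝ) ^ (m + 1) / (m + 1) * (-D n (((m : ℝ) + 1) * θ))) := by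
  have h1 : ∀ k ∈ range n, |2 * sin (((k : ℝ) + 1) * θ / 2)| ≤
     exp (0.079 - ∑ m ∈ range 32, (17 / 20 : ℝ) ^ (m + 1) / (m + 1) * cos (((m : ℝ) + 1) * (((k : ℝ) + 1) * θ))) := by
    intro k _
    have h2 := congrArg norm (one_sub_exp (((k : ℝ) + 1) * θ))
    have h4 : ‖Complex.exp ((((k : ℝ) + 1) * θ : ℝ) / 2 * Complex.I)‖ = 1 := by
      have := Complex.norm_exp_ofReal_mul_I (((k : ℝ) + 1) * θ / 2)
      push_cast at this ⊢; exact this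
    rw [norm_mul, norm_mul, norm_neg, Complex.norm_I, h4, Complex.norm_real, one_mul, one_mul, Real.norm_eq_abs] at h2
    rw [← h2]
    refine (one_sub_norm_le _ (Complex.norm_exp_ofReal_mul_I _)).trans ?_
    have h3 := log_norm_le (((k : ℝ) + 1) * θ)
    have h5 : (40 / 37 : ℝ) ≤ exp 0.078 := by
      have := Real.sum_le_exp_of_nonneg (x := 0.078) (by norm_num) 4
      refine le_trans ?_ this
      norm_num [sum_range_succ, Nat.factorial]
    calc _ ≤ exp 0.078 * exp (0.001 - ∑ m ∈ range 32, (17 / 20 : ℝ) ^ (m + 1) / (m + 1) * cos (((m : ℝ) + 1) * (((k : ℝ) + 1) * θ))) := by gcongr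
      _ = _ := by rw [← exp_add]; congr 1; ring
  unfold S
  rw [abs_prod]
  refine (prod_le_prod (fun _ _ => abs_nonneg _) h1).trans ?_
  rw [← exp_sum]
  apply exp_le_exp.2
  rw [sum_sub_distrib, sum_const, card_range, nsmul_eq_mul, sum_comm]
  apply le_of_eq
  rw [sub_eq_add_neg, ← sum_neg_distrib, mul_comm]
  congr 1
  refine sum_congr rfl fun m _ => ?_
  rw [← mul_sum, D, mul_neg]
  congr 3
  ext k
  ring_nf

end QP

namespace QP
open Real Finset

lemma tail_sum (n : ℕ) (θ C : ℝ) (c : ℕ → ℝ) (h : ∀ m ∈ range 32, -D n (((m : ℝ) + 1) * θ) ≤ c m)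
    (hc : 0.079 * n + ∑ m ∈ range 32, (17 / 20 : ℝ) ^ (m + 1) / (m + 1) * c m ≤ C) :
    |S n θ| ≤ exp C := by
  refine (S_abs_le n θ).trans (exp_le_exp.2 (le_trans ?_ hc))
  gcongr with m hm
  exact h m hm

lemma tail_A_gen (n : ℕ) (θ Y Y0 : ℝ) (p : ℕ → ℝ) (hY : (n + 1 / 2) * θ = Y) (h0 : 0 < Y0) (hY0 : Y0 ≤ Y)
    (m : ℕ) (hθ : ((m : ℝ) + 1) * θ ≤ 0.21)
    (hp0 : 0 ≤ p m) (hp : -sin (((m : ℝ) + 1) * Y) ≤ p m) :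
    -D n (((m : ℝ) + 1) * θ) ≤ 1 / 2 + 1.0019 * (n + 1 / 2) / Y0 * (p m / (m + 1)) := by
  have hθ0 : 0 < θ := by
    by_contra h
    have : (n + 1 / 2) * θ ≤ 0 := mul_nonpos_of_nonneg_of_nonpos (by positivity) (by linarith)
    linarith
  have h1 : (n + 1 / 2) * (((m : ℝ) + 1) * θ) = ((m : ℝ) + 1) * Y := by rw [← hY]; ring
  have h2 := D_small n (((m : ℝ) + 1) * θ) (p m) (by positivity) hθ hp0 (by rw [h1]; exact hp)
  refine h2.trans ?_
  have h3 : 1.0019 * p m / (((m : ℝ) + 1) * θ) = 1.0019 * (n + 1 / 2) / Y * (p m / (m + 1)) := by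
    rw [← hY]; field_simp
  rw [h3]
  gcongr

lemma tail_A (n : ℕ) (hn : 68000 ≤ n) (θ : ℝ) (h1 : 2 * π / n ≤ θ) (h2 : θ ≤ 0.0041) :
    |S n θ| ≤ exp (0.19 * n) := by
  have hn' : (68000 : ℝ) ≤ n := by exact_mod_cast hn
  have hpi := pi_gt_d6
  set Y := (n + 1 / 2) * θ with hY
  have hY2 : 2 * π ≤ Y := by
    rw [div_le_iff₀ (by positivity)] at h1
    have : 0 < θ := by
      by_contra h
      have : θ * n ≤ 0 := mul_nonpos_of_nonpos_of_nonneg (by linarith) (by positivity)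
      linarith
    nlinarith
  have hb : ∀ m ∈ range 32, ((m : ℝ) + 1) * θ ≤ 0.21 := by
    intro m hm
    have : (m : ℝ) + 1 ≤ 32 := by exact_mod_cast (mem_range.1 hm)
    nlinarith [pi_pos, h1, show 0 < 2 * π / n by positivity]
  rcases le_or_gt Y (3 * π) with h3 | h3
  · refine tail_sum n θ _ (fun m => 1 / 2 + 1.0019 * (n + 1 / 2) / 6.28 * ((if m = 0 then 0 else 1) / (m + 1))) ?_ ?_
    · intro m hm
      refine tail_A_gen n θ Y 6.28 (fun m => if m = 0 then 0 else 1) rfl (by norm_num) (by linarith) m (hb m hm) ?_ ?_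
      · split_ifs <;> norm_num
      · split_ifs with h
        · subst h
          have : 0 ≤ sin (Y - 2 * π) := sin_nonneg_of_nonneg_of_le_pi (by linarith) (by linarith)
          rw [sin_sub_two_pi] at this
          simpa using this
        · linarith [neg_one_le_sin (((m : ℝ) + 1) * Y)]
    · norm_num [sum_range_succ]; linarith
  rcases le_or_gt Y (3.5 * π) with h4 | h4
  · refine tail_sum n θ _ (fun m => 1 / 2 + 1.0019 * (n + 1 / 2) / 9.4247 * ((if m = 1 then 0 else 1) / (m + 1))) ?_ ?_
    · intro m hm
      refine tail_A_gen n θ Y 9.4247 (fun m => if m = 1 then 0 else 1) rfl (by norm_num) (by linarith) m (hb m hm) ?_ ?_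
      · split_ifs <;> norm_num
      · split_ifs with h
        · subst h
          have : 0 ≤ sin (2 * Y - (3 : ℤ) * (2 * π)) := sin_nonneg_of_nonneg_of_le_pi (by push_cast; linarith) (by push_cast; linarith)
          rw [sin_sub_int_mul_two_pi] at this
          norm_num
          exact this
        · linarith [neg_one_le_sin (((m : ℝ) + 1) * Y)]
    · norm_num [sum_range_succ]; linarith
  · refine tail_sum n θ _ (fun m => 1 / 2 + 1.0019 * (n + 1 / 2) / 10.995 * (1 / (m + 1))) ?_ ?_
    · intro m hm
      refine tail_A_gen n θ Y 10.995 (fun m => 1) rfl (by norm_num) (by linarith) m (hb m hm) (by norm_num) ?_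
      linarith [neg_one_le_sin (((m : ℝ) + 1) * Y)]
    · norm_num [sum_range_succ]; linarith

lemma D_odd_bound (n : ℕ) (ψ : ℝ) (h0 : 0 ≤ ψ) (h1 : ψ ≤ 0.0041) (m : ℕ) (hm : m ∈ range 32) (ho : m % 2 = 0) :
    -D n (((m : ℝ) + 1) * (π - ψ)) ≤ 2 := by
  have hm' : (m : ℝ) + 1 ≤ 32 := by exact_mod_cast (mem_range.1 hm)
  have : (1 / 2 : ℝ) ≤ |sin (((m : ℝ) + 1) * (π - ψ) / 2)| := by
    obtain ⟨l, hl⟩ : ∃ l, m = 2 * l := ⟨m / 2, by omega⟩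
    have e : ((m : ℝ) + 1) * (π - ψ) / 2 = (π / 2 - ((m : ℝ) + 1) * ψ / 2) + (l : ℕ) * π := by
      rw [hl]; push_cast; ring
    rw [e, sin_add_nat_mul_pi, abs_mul, abs_pow, abs_neg, abs_one, one_pow, one_mul, sin_pi_div_two_sub]
    have := one_sub_sq_div_two_le_cos (x := ((m : ℝ) + 1) * ψ / 2)
    have h3 : ((m : ℝ) + 1) * ψ / 2 ≤ 0.07 := by nlinarith
    have h4 : 0 ≤ ((m : ℝ) + 1) * ψ / 2 := by positivity
    refine le_trans ?_ (le_abs_self _)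
    nlinarith
  have := D_good n _ _ (by norm_num) this
  norm_num at this
  linarith

lemma D_even (n : ℕ) (ψ : ℝ) (m l : ℕ) (ho : m + 1 = 2 * (l + 1)) :
    D n (((m : ℝ) + 1) * (π - ψ)) = D n (((l : ℝ) + 1) * (2 * ψ)) := by
  have e : ((m : ℝ) + 1) = 2 * (l + 1) := by exact_mod_cast ho
  rw [← D_neg, ← D_periodic n _ (-(l + 1))]
  congr 1
  rw [e]; push_cast; ring

lemma tail_B (n : ℕ) (hn : 68000 ≤ n) (ψ : ℝ) (h1 : 0 ≤ ψ) (h2 : ψ ≤ 0.0041) :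
    |S n (π - ψ)| ≤ exp (0.19 * n) := by
  have hn' : (68000 : ℝ) ≤ n := by exact_mod_cast hn
  have hpi := pi_gt_d6
  set Y := (n + 1 / 2) * (2 * ψ) with hY
  have hY0 : 0 ≤ Y := by positivity
  have hb : ∀ l : ℕ, l < 16 → ((l : ℝ) + 1) * (2 * ψ) ≤ 0.21 := by
    intro l hl
    have : (l : ℝ) + 1 ≤ 16 := by exact_mod_cast Nat.succ_le_of_lt hl
    nlinarith
  have hev : ∀ m ∈ range 32, m % 2 = 1 → m + 1 = 2 * (m / 2 + 1) ∧ m / 2 < 16 := by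
    intro m hm h; have := mem_range.1 hm; omega
  rcases le_or_gt Y π with h3 | h3
  · refine tail_sum n _ _ (fun m => if m % 2 = 0 then 2 else if m = 1 then 2 else 0.243 * n) ?_ ?_
    · intro m hm
      split_ifs with h4 h5
      · exact D_odd_bound n ψ h1 h2 m hm h4
      · subst h5
        rw [D_even n ψ 1 0 rfl]
        rcases h1.eq_or_lt with h6 | h6
        · subst h6; simp [D]; linarith
        · have := D_small n (((0 : ℕ) + 1) * (2 * ψ)) 0 (by push_cast; linarith) (hb 0 (by norm_num)) le_rfl (by
            have : (n + 1 / 2 : ℝ) * (((0 : ℕ) + 1) * (2 * ψ)) = Y := by rw [hY]; push_cast; ring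
            rw [this]
            linarith [sin_nonneg_of_nonneg_of_le_pi hY0 h3])
          refine this.trans ?_
          norm_num
      · exact D_univ n (by omega) _
    · norm_num [sum_range_succ]; linarith
  rcases le_or_gt Y (1.5 * π) with h3 | h3
  · refine tail_sum n _ _ (fun m => if m % 2 = 0 then 2 else if m = 1 then 0.243 * n else
       1 / 2 + 1.0019 * (n + 1 / 2) / 3.1415 * ((if m = 3 then 0 else 1) / ((m / 2 : ℕ) + 1))) ?_ ?_
    · intro m hm
      split_ifs with h4 h5 h6
      · exact D_odd_bound n ψ h1 h2 m hm h4
      · exact D_univ n (by omega) _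
      · obtain ⟨h7, h8⟩ := hev m hm (by omega)
        rw [D_even n ψ m (m / 2) h7]
        refine tail_A_gen n (2 * ψ) Y 3.1415 (fun m => 0) rfl (by norm_num) (by linarith) (m / 2) (hb _ h8) le_rfl ?_
        subst h6
        have : 0 ≤ sin (2 * Y - 2 * π) := sin_nonneg_of_nonneg_of_le_pi (by linarith) (by linarith)
        rw [sin_sub_two_pi] at this
        norm_num
        exact this
      · obtain ⟨h7, h8⟩ := hev m hm (by omega)
        rw [D_even n ψ m (m / 2) h7]
        refine tail_A_gen n (2 * ψ) Y 3.1415 (fun m => 1) rfl (by norm_num) (by linarith) (m / 2) (hb _ h8) (by norm_num) ?_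
        linarith [neg_one_le_sin ((((m / 2 : ℕ) : ℝ) + 1) * Y)]
    · norm_num [sum_range_succ]; linarith
  · refine tail_sum n _ _ (fun m => if m % 2 = 0 then 2 else
       1 / 2 + 1.0019 * (n + 1 / 2) / 4.71 * (1 / ((m / 2 : ℕ) + 1))) ?_ ?_
    · intro m hm
      split_ifs with h4
      · exact D_odd_bound n ψ h1 h2 m hm h4
      · obtain ⟨h7, h8⟩ := hev m hm (by omega)
        rw [D_even n ψ m (m / 2) h7]
        refine tail_A_gen n (2 * ψ) Y 4.71 (fun m => 1) rfl (by norm_num) (by linarith) (m / 2) (hb _ h8) (by norm_num) ?_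
        linarith [neg_one_le_sin ((((m / 2 : ℕ) : ℝ) + 1) * Y)]
    · norm_num [sum_range_succ]; linarith

lemma tail_C (n : ℕ) (hn : 68000 ≤ n) (θ : ℝ) (h1 : 0.002 ≤ |sin (θ / 2)|) (h2 : 0.002 ≤ |sin θ|) :
    |S n θ| ≤ exp (0.19 * n) := by
  classical
  have hn' : (68000 : ℝ) ≤ n := by exact_mod_cast hn
  let bad : ℕ → ℝ := fun m => if |sin (((m : ℝ) + 1) * θ / 2)| < 0.001 then 1 else 0
  have hb01 : ∀ m, 0 ≤ bad m ∧ bad m ≤ 1 := by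
    intro m; simp only [bad]; split_ifs <;> norm_num
  have hb1 : ∀ m, bad m + bad (m + 1) ≤ 1 := by
    intro m; simp only [bad]
    split_ifs with h3 h4 <;> norm_num
    push_cast at h4
    have e : θ / 2 = ((m : ℝ) + 1 + 1) * θ / 2 - ((m : ℝ) + 1) * θ / 2 := by ring
    rw [e, sin_sub] at h1
    refine absurd h1 (not_le.2 ?_)
    refine (abs_sub _ _).trans_lt ?_
    rw [abs_mul, abs_mul]
    nlinarith [abs_cos_le_one (((m : ℝ) + 1) * θ / 2), abs_cos_le_one (((m : ℝ) + 1 + 1) * θ / 2),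
      abs_nonneg (sin (((m : ℝ) + 1) * θ / 2)), abs_nonneg (sin (((m : ℝ) + 1 + 1) * θ / 2)),
      abs_nonneg (cos (((m : ℝ) + 1) * θ / 2)), abs_nonneg (cos (((m : ℝ) + 1 + 1) * θ / 2))]
  have hb2 : ∀ m, bad m + bad (m + 2) ≤ 1 := by
    intro m; simp only [bad]
    split_ifs with h3 h4 <;> norm_num
    push_cast at h4
    have e : θ = ((m : ℝ) + 2 + 1) * θ / 2 - ((m : ℝ) + 1) * θ / 2 := by ring
    rw [e, sin_sub] at h2
    refine absurd h2 (not_le.2 ?_)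
    refine (abs_sub _ _).trans_lt ?_
    rw [abs_mul, abs_mul]
    nlinarith [abs_cos_le_one (((m : ℝ) + 1) * θ / 2), abs_cos_le_one (((m : ℝ) + 2 + 1) * θ / 2),
      abs_nonneg (sin (((m : ℝ) + 1) * θ / 2)), abs_nonneg (sin (((m : ℝ) + 2 + 1) * θ / 2)),
      abs_nonneg (cos (((m : ℝ) + 1) * θ / 2)), abs_nonneg (cos (((m : ℝ) + 2 + 1) * θ / 2))]
  have hb3 : ∀ m, bad m + bad (m + 1) + bad (m + 2) ≤ 1 := by
    intro m
    have h3 := hb1 m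
    have h4 := hb2 m
    have h5 := hb1 (m + 1)
    have h6 := hb01 m
    have : bad m = 0 ∨ bad m = 1 := by simp only [bad]; split_ifs <;> simp
    rcases this with h | h
    · rw [h]; simpa using h5
    · have := hb01 (m + 1); have := hb01 (m + 2); linarith
  have hb0 : bad 0 = 0 := by
    simp only [bad]; rw [if_neg]; push_cast; rw [zero_add, one_mul]; linarith
  have hb0' : bad 1 = 0 := by
    simp only [bad]; rw [if_neg]; push_cast
    rw [show ((1 : ℝ) + 1) * θ / 2 = θ by ring]; linarith
  have key : ∀ m ∈ range 32, -D n (((m : ℝ) + 1) * θ) ≤ 501 + 0.243 * n * bad m := by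
    intro m _
    by_cases h : |sin (((m : ℝ) + 1) * θ / 2)| < 0.001
    · simp only [bad]; rw [if_pos h]
      linarith [D_univ n (by omega) (((m : ℝ) + 1) * θ)]
    · have := D_good n (((m : ℝ) + 1) * θ) 0.001 (by norm_num) (not_lt.1 h)
      have h4 := (hb01 m).1
      norm_num at this
      nlinarith
  refine tail_sum n _ _ _ key ?_
  have hsum : ∑ m ∈ range 32, (17 / 20 : ℝ) ^ (m + 1) / (m + 1) * bad m ≤
      ∑ j ∈ range 10, (17 / 20 : ℝ) ^ (3 * j + 3) / (3 * j + 3) := by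
    have t : ∀ x y z A B C : ℝ, 0 ≤ x → 0 ≤ y → 0 ≤ z → B ≤ A → C ≤ A → 0 ≤ A → x + y + z ≤ 1 →
        A * x + B * y + C * z ≤ A := by
      intro x y z A B C hx hy hz hB hC hA h; nlinarith
    have t' : ∀ m A B C, B ≤ A → C ≤ A → 0 ≤ A → A * bad m + B * bad (m + 1) + C * bad (m + 2) ≤ A :=
      fun m A B C h h' h'' => t _ _ _ A B C (hb01 _).1 (hb01 _).1 (hb01 _).1 h h' h'' (hb3 m)
    simp only [sum_range_succ, sum_range_zero, hb0, hb0']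
    have u := fun m => t' m ((17 / 20 : ℝ) ^ (m + 1) / (m + 1)) ((17 / 20 : ℝ) ^ (m + 2) / (m + 2)) ((17 / 20 : ℝ) ^ (m + 3) / (m + 3))
      (by have hP : 0 < (17 / 20 : ℝ) ^ (m + 1) := by positivity
          rw [div_le_div_iff₀ (by positivity) (by positivity), pow_succ _ (m + 1)]
          nlinarith [mul_nonneg hP.le (Nat.cast_nonneg (α := ℝ) m)])
      (by have hP : 0 < (17 / 20 : ℝ) ^ (m + 1) := by positivity
          rw [div_le_div_iff₀ (by positivity) (by positivity), show m + 3 = m + 1 + 2 by ring, pow_add _ (m + 1) 2]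
          nlinarith [mul_nonneg hP.le (Nat.cast_nonneg (α := ℝ) m)]) (by positivity)
    have u0 := u 2
    have u1 := u 5
    have u2 := u 8
    have u3 := u 11
    have u4 := u 14
    have u5 := u 17
    have u6 := u 20
    have u7 := u 23
    have u8 := u 26
    have u9 := u 29
    norm_num at u0 u1 u2 u3 u4 u5 u6 u7 u8 u9 ⊢
    linarith
  have hs2 : ∑ m ∈ range 32, (17 / 20 : ℝ) ^ (m + 1) / (m + 1) * (501 + 0.243 * n * bad m) =
     501 * ∑ m ∈ range 32, (17 / 20 : ℝ) ^ (m + 1) / (m + 1) +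
     0.243 * n * ∑ m ∈ range 32, (17 / 20 : ℝ) ^ (m + 1) / (m + 1) * bad m := by
    rw [mul_sum, mul_sum, ← sum_add_distrib]
    exact sum_congr rfl fun m _ => by ring
  rw [hs2]
  have h3 : ∑ j ∈ range 10, (17 / 20 : ℝ) ^ (3 * j + 3) / (3 * j + 3) ≤ 0.35 := by
    norm_num [sum_range_succ]
  have h4 : ∑ m ∈ range 32, (17 / 20 : ℝ) ^ (m + 1) / (m + 1) ≤ 1.9 := by
    norm_num [sum_range_succ]
  nlinarith

theorem S_tail (n : ℕ) (hn : 68000 ≤ n) (θ : ℝ) (h1 : 2 * π / n ≤ θ) (h2 : θ ≤ π) :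
    |S n θ| ≤ exp (0.19 * n) := by
  have hn' : (68000 : ℝ) ≤ n := by exact_mod_cast hn
  have hpi := pi_gt_three
  have hpi' := pi_lt_d2
  have h0 : 0 < θ := lt_of_lt_of_le (by positivity) h1
  rcases le_or_gt θ 0.0041 with h | h
  · exact tail_A n hn θ h1 h
  rcases le_or_gt (π - θ) 0.0041 with h3 | h3
  · have := tail_B n hn (π - θ) (by linarith) h3
    rwa [sub_sub_cancel] at this
  have aux : ∀ x : ℝ, 0.00205 ≤ x → x ≤ π / 2 → 0.002 ≤ sin x := by
    intro x hx hx2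
    rcases le_or_gt x 1 with h4 | h4
    · have := sin_gt_sub_cube (x := x) (by linarith)
      nlinarith [sq_nonneg (x - 0.00205), mul_nonneg (sub_nonneg.2 hx) (sub_nonneg.2 h4), mul_nonneg (sub_nonneg.2 hx) (sq_nonneg x)]
    · have := mul_le_sin (x := x) (by linarith) hx2
      have : 2 / 4 ≤ 2 / π := by gcongr; linarith
      nlinarith
  apply tail_C n hn θ
  · exact (aux (θ / 2) (by linarith) (by linarith)).trans (le_abs_self _)
  · refine le_trans ?_ (le_abs_self _)
    rcases le_or_gt θ (π / 2) with h4 | h4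
    · exact aux θ (by linarith) h4
    · rw [← sin_pi_sub]; exact aux _ (by linarith) (by linarith)

end QP

namespace QP
open Real Finset

lemma S_mul_S (n r : ℕ) : S n (2 * π / (n + r + 1)) * S r (2 * π / (n + r + 1)) = n + r + 1 := by
  set N : ℕ := n + r + 1 with hN
  have hNr : (N : ℝ) = n + r + 1 := by rw [hN]; push_cast; ring
  rw [← hNr]
  set θ : ℝ := 2 * π / N with hθ
  have hN0 : (0 : ℝ) < N := by rw [hNr]; positivity
  have hprim := Complex.isPrimitiveRoot_exp N (by omega)
  have hp := IsPrimitiveRoot.prod_one_sub_pow_eq_order hprim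
  have h1 : ∏ k ∈ range (n + r), (1 - Complex.exp (2 * π * Complex.I / N) ^ (k + 1)) =
      ∏ k ∈ range (n + r), ((1 : ℂ) - Complex.exp (((k : ℝ) + 1) * θ * Complex.I)) := by
    refine prod_congr rfl fun k _ => ?_
    rw [← Complex.exp_nat_mul, hθ]
    congr 2; push_cast; ring
  rw [h1, prod_one_sub] at hp
  have h2 := congrArg norm hp
  have h4 : ∀ x : ℝ, ‖Complex.exp (x * θ * Complex.I)‖ = 1 := by
    intro x
    have := Complex.norm_exp_ofReal_mul_I (x * θ)
    push_cast at this ⊢; exact this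
  rw [norm_mul, norm_mul, norm_pow, norm_neg, Complex.norm_I, h4, Complex.norm_real, one_pow, one_mul, one_mul] at h2
  have h5 : S (n + r) θ = S n θ * S r θ := by
    unfold S
    rw [prod_range_add]
    congr 1
    rw [← prod_range_reflect]
    refine prod_congr rfl fun k hk => ?_
    have hk := mem_range.1 hk
    congr 1
    rw [← sin_pi_sub]
    congr 1
    have : ((n + (r - 1 - k) : ℕ) : ℝ) = N - 1 - (k + 1) := by
      rw [hNr, Nat.sub_sub, Nat.cast_add, Nat.cast_sub (by omega)]; push_cast; ring
    rw [this, hθ]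
    field_simp
    ring
  have hpos : ∀ m ≤ n + r, 0 < S m θ := by
    intro m hm
    unfold S
    refine prod_pos fun k hk => ?_
    have hk := mem_range.1 hk
    have : 0 < sin (((k : ℝ) + 1) * θ / 2) := by
      apply sin_pos_of_pos_of_lt_pi
      · rw [hθ]; positivity
      · have hk' : (k : ℝ) + 1 < N := by rw [hN]; exact_mod_cast (by omega : k + 1 < n + r + 1)
        rw [hθ]
        have : ((k : ℝ) + 1) * (2 * π / N) / 2 = ((k : ℝ) + 1) / N * π := by ring
        rw [this]
        have : ((k : ℝ) + 1) / N < 1 := by rw [div_lt_one hN0]; exact hk'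
        nlinarith [pi_pos]
    linarith
  rw [← h5, ← Real.norm_of_nonneg (hpos (n + r) le_rfl).le, h2, hNr]
  have : ((n + r : ℕ) : ℂ) + 1 = ((n + r + 1 : ℝ) : ℂ) := by push_cast; ring
  rw [this, Complex.norm_real, Real.norm_of_nonneg (by positivity)]

lemma factorial_le (r : ℕ) : ((r + 1).factorial : ℝ) ≤ exp 1 * √(r + 1) * ((r + 1) / exp 1) ^ (r + 1) := by
  have h := Stirling.stirlingSeq'_antitone (Nat.zero_le r)
  simp only [Function.comp, Nat.succ_eq_add_one, zero_add, Stirling.stirlingSeq_one] at h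
  unfold Stirling.stirlingSeq at h
  rw [div_le_iff₀ (by positivity)] at h
  refine h.trans (le_of_eq ?_)
  push_cast
  rw [sqrt_mul (by norm_num)]
  have : √2 ≠ 0 := by positivity
  field_simp

lemma S_le_factorial (θ : ℝ) (hθ0 : 0 < θ) (r : ℕ) (hr : r * θ < 2 * π) :
    S r θ ≤ (r.factorial : ℝ) * θ ^ r ∧ 0 < S r θ := by
  induction r with
  | zero => simp [S]
  | succ r ih =>
    push_cast at hr
    obtain ⟨h3, h3'⟩ := ih (by linarith)
    have hs : S (r + 1) θ = S r θ * (2 * sin (((r : ℝ) + 1) * θ / 2)) := by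
      unfold S; rw [prod_range_succ]
    have hs1 : 2 * sin (((r : ℝ) + 1) * θ / 2) ≤ ((r : ℝ) + 1) * θ := by
      linarith [sin_le (x := ((r : ℝ) + 1) * θ / 2) (by positivity)]
    have hs2 : 0 < sin (((r : ℝ) + 1) * θ / 2) :=
      sin_pos_of_pos_of_lt_pi (by positivity) (by linarith)
    rw [hs]
    constructor
    · rw [Nat.factorial_succ, pow_succ]
      push_cast
      calc S r θ * (2 * sin (((r : ℝ) + 1) * θ / 2)) ≤ ((r.factorial : ℝ) * θ ^ r) * (((r : ℝ) + 1) * θ) :=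
            mul_le_mul h3 hs1 (by positivity) (by positivity)
        _ = _ := by ring
    · positivity

lemma S_main_lower_aux (n r : ℕ) (hn : (n : ℝ) = 68533) (hr : (r : ℝ) + 1 = 18082) :
    exp (0.192 * n) ≤ S n (2 * π / 86616) := by
  have h := S_mul_S n (r + 1)
  have e : ((n : ℝ) + (r + 1 : ℕ) + 1) = 86616 := by push_cast; linarith
  rw [e] at h
  set θ := 2 * π / 86616 with hθ
  have hθ0 : 0 < θ := by positivity
  obtain ⟨hle, hrpos⟩ := S_le_factorial θ hθ0 (r + 1) (by push_cast; rw [hr, hθ]; linarith [pi_pos])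
  have hf := factorial_le r
  rw [hr] at hf
  have h3 : S (r + 1) θ ≤ exp 1 * √(18082) * ((18082 * θ) / exp 1) ^ (r + 1) := by
    refine hle.trans ?_
    calc _ ≤ (exp 1 * √18082 * (18082 / exp 1) ^ (r + 1)) * θ ^ (r + 1) := by gcongr
      _ = _ := by
          rw [mul_assoc, ← mul_pow]
          congr 2
          ring
  have h4 : 18082 * θ / exp 1 ≤ exp (-0.7278) := by
    have : exp (-0.7278) = exp 0.2722 / exp 1 := by rw [← exp_sub]; norm_num
    rw [this]
    gcongr
    have h5 := Real.sum_le_exp_of_nonneg (x := 0.2722) (by norm_num) 6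
    refine le_trans ?_ h5
    rw [hθ]
    have := pi_lt_d4
    norm_num [sum_range_succ, Nat.factorial]
    linarith
  have h5 : S (r + 1) θ ≤ exp 1 * 135 * exp (-0.7278 * 18082) := by
    refine h3.trans ?_
    have h6 : √18082 ≤ 135 := by
      rw [sqrt_le_left (by norm_num)]; norm_num
    have h7 : exp (-0.7278 * 18082) = exp (-0.7278) ^ (r + 1) := by
      rw [← exp_nat_mul]; push_cast; rw [hr]; congr 1; ring
    rw [h7]
    gcongr
  have hSn : 0 < S n θ := by
    by_contra hneg
    nlinarith
  have h8 : 86616 ≤ S n θ * (exp 1 * 135 * exp (-0.7278 * 18082)) := by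
    rw [← h]; gcongr
  have he : exp 1 ≤ 2.7183 := by linarith [exp_one_lt_d9]
  have h10 : exp (0.192 * n) ≤ exp (0.7278 * 18082) := by
    apply exp_le_exp.2; rw [hn]; norm_num
  refine h10.trans ?_
  have h11 : exp (0.7278 * 18082) * exp (-0.7278 * 18082) = 1 := by
    rw [← exp_add]; norm_num
  have h12 := exp_pos (-0.7278 * 18082)
  set E := exp (-0.7278 * 18082)
  have h9 : 1 ≤ S n θ * E := by
    by_contra hneg
    push Not at hneg
    nlinarith [exp_pos 1, mul_pos hSn h12]
  by_contra hneg
  push Not at hneg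
  nlinarith

lemma S_main_lower (n : ℕ) (hn : (n : ℝ) = 68533) :
    exp (0.192 * n) ≤ S n (2 * π / 86616) := by
  exact S_main_lower_aux n 18081 hn (by norm_num)

end QP

namespace QP
open Real Finset

lemma inc {f f' : ℝ → ℝ} {p q : ℝ} (hpq : p ≤ q) (hc : ContinuousOn f (Set.Icc p q))
    (hd : ∀ x ∈ Set.Ioo p q, HasDerivAt f (f' x) x) (h : ∀ x ∈ Set.Ioo p q, 0 ≤ f' x) : f p ≤ f q := by
  have := monotoneOn_of_deriv_nonneg (convex_Icc p q) hc
    (fun x hx => by rw [interior_Icc] at hx; exact (hd x hx).differentiableAt.differentiableWithinAt)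
    (fun x hx => by rw [interior_Icc] at hx; rw [(hd x hx).deriv]; exact h x hx)
  exact this (Set.left_mem_Icc.2 hpq) (Set.right_mem_Icc.2 hpq) hpq

lemma inc' {f f' : ℝ → ℝ} {p q : ℝ} (hpq : p ≤ q)
    (hd : ∀ x ∈ Set.Icc p q, HasDerivAt f (f' x) x) (h : ∀ x ∈ Set.Icc p q, 0 ≤ f' x) : f p ≤ f q :=
  inc hpq (fun x hx => (hd x hx).continuousAt.continuousWithinAt)
    (fun x hx => hd x (Set.Ioo_subset_Icc_self hx)) (fun x hx => h x (Set.Ioo_subset_Icc_self hx))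

lemma quad_left {f f' f'' : ℝ → ℝ} {C u t : ℝ} (hut : u ≤ t) (hc : ContinuousOn f (Set.Icc u t))
    (hd : ∀ x ∈ Set.Ioc u t, HasDerivAt f (f' x) x) (hd2 : ∀ x ∈ Set.Ioc u t, HasDerivAt f' (f'' x) x)
    (h : ∀ x ∈ Set.Ioc u t, f'' x ≤ C) : f u ≤ f t + f' t * (u - t) + C / 2 * (u - t) ^ 2 := by
  have h1 : ∀ x ∈ Set.Ioc u t, f' t - f' x ≤ C * (t - x) := by
    intro x hx
    have := inc' (f := fun x => C * x - f' x) (f' := fun x => C - f'' x) hx.2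
      (fun y hy => by
        refine (((hasDerivAt_id y).const_mul C).sub (hd2 y ⟨lt_of_lt_of_le hx.1 hy.1, hy.2⟩)).congr_deriv ?_
        simp)
      (fun y hy => by linarith [h y ⟨lt_of_lt_of_le hx.1 hy.1, hy.2⟩])
    linarith
  have h2 := inc (f := fun x => f x - (f t + f' t * (x - t) + C / 2 * (x - t) ^ 2))
    (f' := fun x => f' x - (f' t + C * (x - t))) hut
    (hc.sub (by fun_prop))
    (fun x hx => by
      have h3 := (hd x ⟨hx.1, hx.2.le⟩).sub (((((hasDerivAt_id x).sub_const t).const_mul (f' t)).const_add (f t)).add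
        ((((hasDerivAt_id x).sub_const t).pow 2).const_mul (C / 2)))
      refine h3.congr_deriv ?_
      simp; ring)
    (fun x hx => by linarith [h1 x ⟨hx.1, hx.2.le⟩])
  simp at h2
  linarith

lemma quad_right {f f' f'' : ℝ → ℝ} {C u t : ℝ} (hut : t ≤ u)
    (hd : ∀ x ∈ Set.Icc t u, HasDerivAt f (f' x) x) (hd2 : ∀ x ∈ Set.Icc t u, HasDerivAt f' (f'' x) x)
    (h : ∀ x ∈ Set.Icc t u, f'' x ≤ C) : f u ≤ f t + f' t * (u - t) + C / 2 * (u - t) ^ 2 := by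
  have h1 : ∀ x ∈ Set.Icc t u, f' x - f' t ≤ C * (x - t) := by
    intro x hx
    have := inc' (f := fun x => C * x - f' x) (f' := fun x => C - f'' x) hx.1
      (fun y hy => by
        refine (((hasDerivAt_id y).const_mul C).sub (hd2 y ⟨hy.1, hy.2.trans hx.2⟩)).congr_deriv ?_
        simp)
      (fun y hy => by linarith [h y ⟨hy.1, hy.2.trans hx.2⟩])
    linarith
  have h2 := inc' (f := fun x => (f t + f' t * (x - t) + C / 2 * (x - t) ^ 2) - f x)
    (f' := fun x => (f' t + C * (x - t)) - f' x) hut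
    (fun x hx => by
      have h3 := (((((hasDerivAt_id x).sub_const t).const_mul (f' t)).const_add (f t)).add
        ((((hasDerivAt_id x).sub_const t).pow 2).const_mul (C / 2))).sub (hd x hx)
      refine h3.congr_deriv ?_
      simp; ring)
    (fun x hx => by linarith [h1 x hx])
  simp at h2
  linarith

/-- `t cot t`, with value 1 at 0 -/
noncomputable def bt (t : ℝ) : ℝ := cos t / sinc t
/-- first derivative of `bt` -/
noncomputable def bt1 (t : ℝ) : ℝ := (sin t * cos t - t) / sin t ^ 2
/-- second derivative of `bt` -/
noncomputable def bt2 (t : ℝ) : ℝ := -2 * (sin t - t * cos t) / sin t ^ 3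

lemma bt_eq {t : ℝ} (h : t ≠ 0) : bt t = t * cos t / sin t := by
  unfold bt; rw [sinc_of_ne_zero h]
  by_cases hs : sin t = 0
  · simp [hs]
  · field_simp

lemma bt_zero : bt 0 = 1 := by simp [bt]

lemma sinc_pos {t : ℝ} (h0 : 0 ≤ t) (h1 : t < π) : 0 < sinc t := by
  rcases h0.eq_or_lt with h | h
  · subst h; simp
  · rw [sinc_of_ne_zero h.ne']; exact div_pos (sin_pos_of_pos_of_lt_pi h h1) h

lemma bt_cont {y : ℝ} (hy : y < π) : ContinuousOn bt (Set.Icc 0 y) := by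
  unfold bt
  refine ContinuousOn.div (by fun_prop) continuous_sinc.continuousOn ?_
  intro x hx
  exact (sinc_pos hx.1 (lt_of_le_of_lt hx.2 hy)).ne'

lemma bt_hasDeriv {t : ℝ} (h0 : 0 < t) (h1 : t < π) : HasDerivAt bt (bt1 t) t := by
  have hs : sin t ≠ 0 := (sin_pos_of_pos_of_lt_pi h0 h1).ne'
  have h : HasDerivAt (fun t => t * cos t / sin t) (bt1 t) t := by
    have := (((hasDerivAt_id t).mul (hasDerivAt_cos t)).div (hasDerivAt_sin t) hs)
    refine this.congr_deriv ?_
    unfold bt1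
    simp
    field_simp
    linear_combination (-t) * sin_sq_add_cos_sq t
  refine h.congr_of_eventuallyEq ?_
  filter_upwards [lt_mem_nhds h0] with x hx
  exact bt_eq (ne_of_gt hx)

lemma bt1_hasDeriv {t : ℝ} (h0 : 0 < t) (h1 : t < π) : HasDerivAt bt1 (bt2 t) t := by
  have hs : sin t ≠ 0 := (sin_pos_of_pos_of_lt_pi h0 h1).ne'
  have := ((((hasDerivAt_sin t).mul (hasDerivAt_cos t)).sub (hasDerivAt_id t)).div ((hasDerivAt_sin t).pow 2) (pow_ne_zero 2 hs))
  refine this.congr_deriv ?_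
  unfold bt2
  simp
  field_simp
  have := sin_sq_add_cos_sq t
  linear_combination (-1 * sin t) * this

lemma cusa {x : ℝ} (hx : 0 ≤ x) : 3 * sin x ≤ x * (2 + cos x) := by
  rcases le_or_gt x π with h | h
  · have g1 : ∀ y ∈ Set.Icc 0 x, 0 ≤ sin y - y * cos y := by
      intro y hy
      have := inc' (f := fun y => sin y - y * cos y) (f' := fun y => y * sin y) hy.1 (fun z _ => by
        refine ((hasDerivAt_sin z).sub ((hasDerivAt_id z).mul (hasDerivAt_cos z))).congr_deriv ?_
        simp) (fun z hz => mul_nonneg hz.1 (sin_nonneg_of_nonneg_of_le_pi hz.1 (hz.2.trans (hy.2.trans h))))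
      simpa using this
    have g2 : ∀ y ∈ Set.Icc 0 x, 0 ≤ 2 - 2 * cos y - y * sin y := by
      intro y hy
      have := inc' (f := fun y => 2 - 2 * cos y - y * sin y) (f' := fun y => sin y - y * cos y) hy.1 (fun z _ => by
        refine ((((hasDerivAt_cos z).const_mul 2).const_sub 2).sub ((hasDerivAt_id z).mul (hasDerivAt_sin z))).congr_deriv ?_
        simp; ring) (fun z hz => g1 z ⟨hz.1, hz.2.trans hy.2⟩)
      simpa using this
    have := inc' (f := fun y => y * (2 + cos y) - 3 * sin y) (f' := fun y => 2 - 2 * cos y - y * sin y) hx (fun z _ => by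
        refine (((hasDerivAt_id z).mul ((hasDerivAt_cos z).const_add 2)).sub ((hasDerivAt_sin z).const_mul 3)).congr_deriv ?_
        simp; ring) (fun z hz => g2 z hz)
    simp at this
    linarith
  · nlinarith [pi_gt_three, sin_le_one x, neg_one_le_cos x]

lemma bt2_hasDeriv {t : ℝ} (h0 : 0 < t) (h1 : t < π) :
    HasDerivAt bt2 ((6 * sin t * cos t - 2 * t - 4 * t * cos t ^ 2) / sin t ^ 4) t := by
  have hs : sin t ≠ 0 := (sin_pos_of_pos_of_lt_pi h0 h1).ne'
  have := ((((hasDerivAt_sin t).sub ((hasDerivAt_id t).mul (hasDerivAt_cos t))).const_mul (-2)).div ((hasDerivAt_sin t).pow 3) (pow_ne_zero 3 hs))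
  refine this.congr_deriv ?_
  simp
  field_simp
  have := sin_sq_add_cos_sq t
  linear_combination (-2 * t) * this

lemma bt2_anti {u t : ℝ} (h0 : 0 < u) (hut : u ≤ t) (h1 : t < π) : bt2 t ≤ bt2 u := by
  have := inc' (f := fun x => -bt2 x) (f' := fun t => -((6 * sin t * cos t - 2 * t - 4 * t * cos t ^ 2) / sin t ^ 4)) hut
    (fun x hx => (bt2_hasDeriv (h0.trans_le hx.1) (lt_of_le_of_lt hx.2 h1)).neg) (fun x hx => by
      have hc := cusa (x := 2 * x) (by linarith [h0.trans_le hx.1])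
      rw [sin_two_mul, cos_two_mul] at hc
      rw [← neg_div]
      apply div_nonneg _ (by positivity)
      linarith)
  linarith

lemma bt2_le {t : ℝ} (h0 : 0 < t) (h1 : t < π) : bt2 t ≤ -2 / 3 := by
  have hs := sin_pos_of_pos_of_lt_pi h0 h1
  have := inc' (f := fun t => sin t - t * cos t - sin t ^ 3 / 3) (f' := fun t => sin t * (t - sin t * cos t)) h0.le
    (fun x _ => by
      refine (((hasDerivAt_sin x).sub ((hasDerivAt_id x).mul (hasDerivAt_cos x))).sub (((hasDerivAt_sin x).pow 3).div_const 3)).congr_deriv ?_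
      simp; ring) (fun x hx => by
      have h3 : sin x * cos x ≤ x := by
        have := sin_le (x := 2 * x) (by linarith [hx.1])
        rw [sin_two_mul] at this; linarith
      exact mul_nonneg (sin_nonneg_of_nonneg_of_le_pi hx.1 (hx.2.trans h1.le)) (by linarith))
  simp at this
  unfold bt2
  rw [div_le_iff₀ (by positivity)]
  linarith

lemma bt1_neg {t : ℝ} (h0 : 0 < t) (h1 : t < π) : bt1 t < 0 := by
  have hs := sin_pos_of_pos_of_lt_pi h0 h1
  unfold bt1
  apply div_neg_of_neg_of_pos _ (by positivity)
  have := sin_lt (x := 2 * t) (by linarith)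
  rw [sin_two_mul] at this; linarith

lemma bt1_anti {u t : ℝ} (h0 : 0 < u) (hut : u ≤ t) (h1 : t < π) : bt1 t ≤ bt1 u := by
  have := inc' (f := fun x => -bt1 x) (f' := fun t => -bt2 t) hut
    (fun x hx => (bt1_hasDeriv (h0.trans_le hx.1) (lt_of_le_of_lt hx.2 h1)).neg)
    (fun x hx => by linarith [bt2_le (h0.trans_le hx.1) (lt_of_le_of_lt hx.2 h1)])
  linarith

lemma bt_anti {u t : ℝ} (h0 : 0 ≤ u) (hut : u ≤ t) (h1 : t < π) : bt t ≤ bt u := by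
  have := inc (f := fun x => -bt x) (f' := fun t => -bt1 t) hut
    ((bt_cont h1).mono (Set.Icc_subset_Icc_left h0)).neg
    (fun x hx => (bt_hasDeriv (h0.trans_lt hx.1) (hx.2.trans h1)).neg)
    (fun x hx => by linarith [bt1_neg (h0.trans_lt hx.1) (hx.2.trans h1)])
  linarith

lemma bt_le_one {t : ℝ} (h0 : 0 ≤ t) (h1 : t < π) : bt t ≤ 1 := by
  have := bt_anti le_rfl h0 h1
  rwa [bt_zero] at this

/-- upper quadratic bound -/
lemma bt_upper {u t : ℝ} (hu0 : 0 ≤ u) (hu : u < π) (ht0 : 0 < t) (ht : t < π) :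
    bt u ≤ bt t + bt1 t * (u - t) - (u - t) ^ 2 / 3 := by
  rcases le_total u t with h | h
  · have := quad_left (f := bt) (f' := bt1) (f'' := bt2) (C := -2 / 3) h
      ((bt_cont ht).mono (Set.Icc_subset_Icc_left hu0))
      (fun x hx => bt_hasDeriv (hu0.trans_lt hx.1) (hx.2.trans_lt ht))
      (fun x hx => bt1_hasDeriv (hu0.trans_lt hx.1) (hx.2.trans_lt ht))
      (fun x hx => bt2_le (hu0.trans_lt hx.1) (hx.2.trans_lt ht))
    linarith
  · have := quad_right (f := bt) (f' := bt1) (f'' := bt2) (C := -2 / 3) h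
      (fun x hx => bt_hasDeriv (ht0.trans_le hx.1) (hx.2.trans_lt hu))
      (fun x hx => bt1_hasDeriv (ht0.trans_le hx.1) (hx.2.trans_lt hu))
      (fun x hx => bt2_le (ht0.trans_le hx.1) (hx.2.trans_lt hu))
    linarith

/-- lower quadratic bound -/
lemma bt_lower {u t T : ℝ} (hu0 : 0 < u) (hu : u ≤ T) (ht0 : 0 < t) (ht : t ≤ T) (hT : T < π) :
    bt t + bt1 t * (u - t) + bt2 T / 2 * (u - t) ^ 2 ≤ bt u := by
  rcases le_total u t with h | h
  · have := quad_left (f := fun x => -bt x) (f' := fun x => -bt1 x) (f'' := fun x => -bt2 x) (C := -bt2 T) h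
      ((bt_cont (ht.trans_lt hT)).mono (Set.Icc_subset_Icc_left hu0.le)).neg
      (fun x hx => (bt_hasDeriv (hu0.trans hx.1) (hx.2.trans_lt (ht.trans_lt hT))).neg)
      (fun x hx => (bt1_hasDeriv (hu0.trans hx.1) (hx.2.trans_lt (ht.trans_lt hT))).neg)
      (fun x hx => by linarith [bt2_anti (hu0.trans hx.1) (hx.2.trans ht) hT])
    linarith
  · have := quad_right (f := fun x => -bt x) (f' := fun x => -bt1 x) (f'' := fun x => -bt2 x) (C := -bt2 T) h
      (fun x hx => (bt_hasDeriv (ht0.trans_le hx.1) (hx.2.trans_lt (hu.trans_lt hT))).neg)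
      (fun x hx => (bt1_hasDeriv (ht0.trans_le hx.1) (hx.2.trans_lt (hu.trans_lt hT))).neg)
      (fun x hx => by linarith [bt2_anti (ht0.trans_le hx.1) (hx.2.trans hu) hT])
    linarith

/-- concavity in chord form -/
lemma bt_concave {y : ℝ} (hy : y < π) : ConcaveOn ℝ (Set.Icc 0 y) bt := by
  refine AntitoneOn.concaveOn_of_deriv (convex_Icc 0 y) (bt_cont hy) ?_ ?_
  · intro x hx
    rw [interior_Icc] at hx
    exact (bt_hasDeriv hx.1 (hx.2.trans hy)).differentiableAt.differentiableWithinAt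
  · intro x hx z hz hxz
    rw [interior_Icc] at hx hz
    rw [(bt_hasDeriv hx.1 (hx.2.trans hy)).deriv, (bt_hasDeriv hz.1 (hz.2.trans hy)).deriv]
    exact bt1_anti hx.1 hxz (hz.2.trans hy)

end QP

namespace QP
open Real Finset

/-- the logarithmic derivative `θ S'/S` -/
noncomputable def Bn (n : ℕ) (θ : ℝ) : ℝ := ∑ k ∈ range n, bt (((k : ℝ) + 1) * (θ / 2))

lemma S_succ (n : ℕ) (θ : ℝ) : S (n + 1) θ = S n θ * (2 * sin (((n : ℝ) + 1) * (θ / 2))) := by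
  unfold S; rw [prod_range_succ, mul_div_assoc]

lemma S_pos (n : ℕ) {θ : ℝ} (h0 : 0 < θ) (h1 : n * (θ / 2) < π) : 0 < S n θ := by
  unfold S
  apply prod_pos
  intro k hk
  have hk' : (k : ℝ) + 1 ≤ n := by exact_mod_cast mem_range.1 hk
  have := sin_pos_of_pos_of_lt_pi (x := (k + 1) * θ / 2) (by positivity) (by nlinarith)
  positivity

lemma S_hasDeriv (n : ℕ) {θ : ℝ} (h0 : 0 < θ) (h1 : n * (θ / 2) < π) :
    HasDerivAt (S n) (S n θ * Bn n θ / θ) θ := by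
  induction n with
  | zero =>
    have : S 0 = fun _ => (1 : ℝ) := by funext x; simp [S]
    rw [this]; simpa [Bn] using hasDerivAt_const θ (1 : ℝ)
  | succ n ih =>
    push_cast at h1
    have ih' := ih (by nlinarith)
    have : S (n + 1) = fun θ => S n θ * (2 * sin (((n : ℝ) + 1) * (θ / 2))) := by
      funext x; exact S_succ n x
    have hp : (0 : ℝ) < ((n : ℝ) + 1) * (θ / 2) := by positivity
    have hs := sin_pos_of_pos_of_lt_pi hp h1
    have h2 : HasDerivAt (fun θ : ℝ => ((n : ℝ) + 1) * (θ / 2)) (((n : ℝ) + 1) / 2) θ := by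
      refine (((hasDerivAt_id θ).div_const 2).const_mul ((n : ℝ) + 1)).congr_deriv ?_
      ring
    rw [this]
    refine (ih'.mul ((h2.sin).const_mul 2)).congr_deriv ?_
    have hB : Bn (n + 1) θ = Bn n θ + bt (((n : ℝ) + 1) * (θ / 2)) := by
      unfold Bn; rw [sum_range_succ]
    rw [hB, bt_eq hp.ne']
    beta_reduce
    generalize hw : ((n : ℝ) + 1) * (θ / 2) = w at *
    rw [show ((n : ℝ) + 1) / 2 = w / θ by rw [← hw]; field_simp]
    field_simp

/-- primitive of `bt` -/
noncomputable def Ph (t : ℝ) : ℝ := ∫ x in (0 : ℝ)..t, bt x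

lemma bt_meas : Measurable bt := by
  unfold bt
  exact (continuous_cos.measurable).div continuous_sinc.measurable

lemma bt_intble {y : ℝ} (h0 : 0 ≤ y) (hy : y < π) : IntervalIntegrable bt MeasureTheory.volume 0 y := by
  apply ContinuousOn.intervalIntegrable
  rw [Set.uIcc_of_le h0]; exact bt_cont hy

lemma Ph_hasDeriv {t : ℝ} (h0 : 0 < t) (h1 : t < π) : HasDerivAt Ph (bt t) t := by
  apply intervalIntegral.integral_hasDerivAt_right (bt_intble h0.le h1)
  · exact bt_meas.stronglyMeasurable.stronglyMeasurableAtFilter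
  · exact (bt_hasDeriv h0 h1).continuousAt

lemma Ph_zero : Ph 0 = 0 := by simp [Ph]

lemma Ph_cont {y : ℝ} (h0 : 0 ≤ y) (hy : y < π) : ContinuousOn Ph (Set.Icc 0 y) := by
  have := intervalIntegral.continuousOn_primitive_interval (f := bt) (μ := MeasureTheory.volume) (a := 0) (b := y)
    (by rw [Set.uIcc_of_le h0]; exact (bt_cont hy).integrableOn_Icc)
  rwa [Set.uIcc_of_le h0] at this

/-- value at `π/2` -/
lemma Ph_half : Ph (π / 2) = π / 2 * log 2 := by
  have hpi := pi_pos
  have hc : ContinuousOn (fun x => (1 / sinc x) * (sin x * log (sin x))) (Set.Icc 0 (π / 2)) := by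
    apply ContinuousOn.mul
    · apply ContinuousOn.div continuousOn_const continuous_sinc.continuousOn
      intro x hx
      exact (sinc_pos hx.1 (by linarith [hx.2])).ne'
    · exact (Real.continuous_mul_log.comp continuous_sin).continuousOn
  have h1 : ∀ x ∈ Set.Ioo 0 (π / 2), HasDerivAt (fun x => (1 / sinc x) * (sin x * log (sin x))) (log (sin x) + bt x) x := by
    intro x hx
    have hs := sin_pos_of_pos_of_lt_pi hx.1 (by linarith [hx.2])
    have : HasDerivAt (fun x => x * log (sin x)) (log (sin x) + bt x) x := by
      refine ((hasDerivAt_id x).mul ((hasDerivAt_sin x).log hs.ne')).congr_deriv ?_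
      rw [bt_eq hx.1.ne']; simp; ring
    refine this.congr_of_eventuallyEq ?_
    filter_upwards [lt_mem_nhds hx.1, gt_mem_nhds hx.2] with w hw hw2
    have hs := sin_pos_of_pos_of_lt_pi hw (by linarith [hw2])
    rw [sinc_of_ne_zero (ne_of_gt hw)]
    field_simp
  have hi1 : IntervalIntegrable (fun x => log (sin x)) MeasureTheory.volume 0 (π / 2) := by
    exact intervalIntegrable_log_sin
  have hi2 := bt_intble (y := π / 2) (by positivity) (by linarith)
  have := intervalIntegral.integral_eq_sub_of_hasDerivAt_of_le (by positivity) hc h1 (hi1.add hi2)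
  rw [intervalIntegral.integral_add hi1 hi2, integral_log_sin_zero_pi_div_two] at this
  simp at this
  unfold Ph
  linarith

lemma Ph_reflect {z : ℝ} (h0 : 0 < z) (h1 : z ≤ π / 2) : Ph (π - z) = π * log (2 * sin z) - Ph z := by
  have hpi := pi_pos
  have hd : ∀ x ∈ Set.Icc z (π / 2), HasDerivAt (fun x => Ph (π - x) + Ph x - π * log (sin x)) 0 x := by
    intro x hx
    have hx0 : 0 < x := h0.trans_le hx.1
    have hs := sin_pos_of_pos_of_lt_pi hx0 (by linarith [hx.2])
    have e1 : HasDerivAt (fun x => Ph (π - x)) (bt (π - x) * (-1)) x := by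
      have := Ph_hasDeriv (t := π - x) (by linarith [hx.2]) (by linarith)
      exact this.comp x ((hasDerivAt_id x).const_sub π)
    refine ((e1.add (Ph_hasDeriv hx0 (by linarith [hx.2]))).sub (((hasDerivAt_sin x).log hs.ne').const_mul π)).congr_deriv ?_
    rw [bt_eq (show π - x ≠ 0 by linarith [hx.2]), bt_eq hx0.ne', sin_pi_sub, cos_pi_sub]
    field_simp
    ring
  have a1 := inc' h1 hd (fun _ _ => le_rfl)
  have a2 := inc' (f := fun x => -(Ph (π - x) + Ph x - π * log (sin x))) (f' := fun _ => -0) h1 (fun x hx => (hd x hx).neg) (fun _ _ => by simp)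
  have hs := sin_pos_of_pos_of_lt_pi h0 (by linarith)
  rw [log_mul (by norm_num) hs.ne']
  simp at a1 a2
  rw [show π - π / 2 = π / 2 by ring, Ph_half] at a1 a2
  linarith

/-! Taylor ladder -/
lemma c2 {x : ℝ} (_ : 0 ≤ x) : 1 - x ^ 2 / 2 ≤ cos x := by linarith [one_sub_sq_div_two_le_cos (x := x)]

lemma s3 {x : ℝ} (hx : 0 ≤ x) : x - x ^ 3 / 6 ≤ sin x := by
  have := inc' (f := fun x => sin x - (x - x ^ 3 / 6)) (f' := fun x => cos x - (1 - x ^ 2 / 2)) hx (fun y _ => by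
    refine ((hasDerivAt_sin y).sub ((hasDerivAt_id y).sub (((hasDerivAt_id y).pow 3).div_const 6))).congr_deriv ?_
    simp; ring) (fun y hy => by linarith [c2 hy.1])
  simp at this; linarith

lemma c4 {x : ℝ} (hx : 0 ≤ x) : cos x ≤ 1 - x ^ 2 / 2 + x ^ 4 / 24 := by
  have := inc' (f := fun x => (1 - x ^ 2 / 2 + x ^ 4 / 24) - cos x) (f' := fun x => sin x - (x - x ^ 3 / 6)) hx (fun y _ => by
    refine ((((((hasDerivAt_id y).pow 2).div_const 2).const_sub 1).add (((hasDerivAt_id y).pow 4).div_const 24)).sub (hasDerivAt_cos y)).congr_deriv ?_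
    simp; ring) (fun y hy => by linarith [s3 hy.1])
  simp at this; linarith

lemma s5 {x : ℝ} (hx : 0 ≤ x) : sin x ≤ x - x ^ 3 / 6 + x ^ 5 / 120 := by
  have := inc' (f := fun x => (x - x ^ 3 / 6 + x ^ 5 / 120) - sin x) (f' := fun x => (1 - x ^ 2 / 2 + x ^ 4 / 24) - cos x) hx (fun y _ => by
    refine ((((hasDerivAt_id y).sub (((hasDerivAt_id y).pow 3).div_const 6)).add (((hasDerivAt_id y).pow 5).div_const 120)).sub (hasDerivAt_sin y)).congr_deriv ?_
    simp; ring) (fun y hy => by linarith [c4 hy.1])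
  simp at this; linarith

lemma c6 {x : ℝ} (hx : 0 ≤ x) : 1 - x ^ 2 / 2 + x ^ 4 / 24 - x ^ 6 / 720 ≤ cos x := by
  have := inc' (f := fun x => cos x - (1 - x ^ 2 / 2 + x ^ 4 / 24 - x ^ 6 / 720)) (f' := fun x => (x - x ^ 3 / 6 + x ^ 5 / 120) - sin x) hx (fun y _ => by
    refine ((hasDerivAt_cos y).sub ((((((hasDerivAt_id y).pow 2).div_const 2).const_sub 1).add (((hasDerivAt_id y).pow 4).div_const 24)).sub (((hasDerivAt_id y).pow 6).div_const 720))).congr_deriv ?_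
    simp; ring) (fun y hy => by linarith [s5 hy.1])
  simp at this; linarith

lemma s7 {x : ℝ} (hx : 0 ≤ x) : x - x ^ 3 / 6 + x ^ 5 / 120 - x ^ 7 / 5040 ≤ sin x := by
  have := inc' (f := fun x => sin x - (x - x ^ 3 / 6 + x ^ 5 / 120 - x ^ 7 / 5040)) (f' := fun x => cos x - (1 - x ^ 2 / 2 + x ^ 4 / 24 - x ^ 6 / 720)) hx (fun y _ => by
    refine ((hasDerivAt_sin y).sub ((((hasDerivAt_id y).sub (((hasDerivAt_id y).pow 3).div_const 6)).add (((hasDerivAt_id y).pow 5).div_const 120)).sub (((hasDerivAt_id y).pow 7).div_const 5040))).congr_deriv ?_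
    simp; ring) (fun y hy => by linarith [c6 hy.1])
  simp at this; linarith

lemma c8 {x : ℝ} (hx : 0 ≤ x) : cos x ≤ 1 - x ^ 2 / 2 + x ^ 4 / 24 - x ^ 6 / 720 + x ^ 8 / 40320 := by
  have := inc' (f := fun x => (1 - x ^ 2 / 2 + x ^ 4 / 24 - x ^ 6 / 720 + x ^ 8 / 40320) - cos x) (f' := fun x => sin x - (x - x ^ 3 / 6 + x ^ 5 / 120 - x ^ 7 / 5040)) hx (fun y _ => by
    refine (((((((hasDerivAt_id y).pow 2).div_const 2).const_sub 1).add (((hasDerivAt_id y).pow 4).div_const 24)).sub (((hasDerivAt_id y).pow 6).div_const 720)).add (((hasDerivAt_id y).pow 8).div_const 40320)).sub (hasDerivAt_cos y) |>.congr_deriv ?_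
    simp; ring) (fun y hy => by linarith [s7 hy.1])
  simp at this; linarith

lemma s9 {x : ℝ} (hx : 0 ≤ x) : sin x ≤ x - x ^ 3 / 6 + x ^ 5 / 120 - x ^ 7 / 5040 + x ^ 9 / 362880 := by
  have := inc' (f := fun x => (x - x ^ 3 / 6 + x ^ 5 / 120 - x ^ 7 / 5040 + x ^ 9 / 362880) - sin x) (f' := fun x => (1 - x ^ 2 / 2 + x ^ 4 / 24 - x ^ 6 / 720 + x ^ 8 / 40320) - cos x) hx (fun y _ => by
    refine (((((hasDerivAt_id y).sub (((hasDerivAt_id y).pow 3).div_const 6)).add (((hasDerivAt_id y).pow 5).div_const 120)).sub (((hasDerivAt_id y).pow 7).div_const 5040)).add (((hasDerivAt_id y).pow 9).div_const 362880)).sub (hasDerivAt_sin y) |>.congr_deriv ?_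
    simp; ring) (fun y hy => by linarith [c8 hy.1])
  simp at this; linarith

lemma bt_up {u : ℝ} (h0 : 0 < u) (h1 : u ≤ 0.66) : bt u ≤ 1 - u ^ 2 / 3 - u ^ 4 / 45 - 0.0021 * u ^ 6 := by
  have hs := sin_pos_of_pos_of_lt_pi h0 (by linarith [pi_gt_three])
  rw [bt_eq h0.ne', div_le_iff₀ hs]
  have hP : 0 ≤ 1 - u ^ 2 / 3 - u ^ 4 / 45 - 0.0021 * u ^ 6 := by
    have : u ^ 2 ≤ 1 := by nlinarith
    have : u ^ 4 ≤ 1 := by nlinarith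
    have : u ^ 6 ≤ 1 := by nlinarith
    linarith
  have e1 := mul_le_mul_of_nonneg_left (s7 h0.le) hP
  have e2 := mul_le_mul_of_nonneg_left (c8 h0.le) h0.le
  refine e2.trans (le_trans ?_ e1)
  have hv : u ^ 2 ≤ 0.44 := by nlinarith
  set v := u ^ 2 with hvd
  have hv0 : 0 ≤ v := sq_nonneg u
  have key : 0 ≤ v ^ 3 * (1.6 / 100000 + v * (0.0002 - 0.00002 * v)) := by
    apply mul_nonneg (by positivity)
    nlinarith
  have hid : (1 - u ^ 2 / 3 - u ^ 4 / 45 - 0.0021 * u ^ 6) * (u - u ^ 3 / 6 + u ^ 5 / 120 - u ^ 7 / 5040) -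
      u * (1 - u ^ 2 / 2 + u ^ 4 / 24 - u ^ 6 / 720 + u ^ 8 / 40320) =
      u * ((1 - v / 3 - v ^ 2 / 45 - 0.0021 * v ^ 3) * (1 - v / 6 + v ^ 2 / 120 - v ^ 3 / 5040) -
        (1 - v / 2 + v ^ 2 / 24 - v ^ 3 / 720 + v ^ 4 / 40320)) := by
    rw [hvd]; ring
  have : 0 ≤ u * ((1 - v / 3 - v ^ 2 / 45 - 0.0021 * v ^ 3) * (1 - v / 6 + v ^ 2 / 120 - v ^ 3 / 5040) -
        (1 - v / 2 + v ^ 2 / 24 - v ^ 3 / 720 + v ^ 4 / 40320)) := by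
    apply mul_nonneg h0.le
    nlinarith [pow_nonneg hv0 3, pow_nonneg hv0 4, pow_nonneg hv0 5, pow_nonneg hv0 6]
  rw [← hvd] at *
  linarith

lemma bt_dn {u : ℝ} (h0 : 0 < u) (h1 : u ≤ 0.66) : 1 - u ^ 2 / 3 - u ^ 4 / 45 - 0.0023 * u ^ 6 ≤ bt u := by
  have hs := sin_pos_of_pos_of_lt_pi h0 (by linarith [pi_gt_three])
  rw [bt_eq h0.ne', le_div_iff₀ hs]
  have hP : 0 ≤ 1 - u ^ 2 / 3 - u ^ 4 / 45 - 0.0023 * u ^ 6 := by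
    have : u ^ 2 ≤ 1 := by nlinarith
    have : u ^ 4 ≤ 1 := by nlinarith
    have : u ^ 6 ≤ 1 := by nlinarith
    linarith
  have e1 := mul_le_mul_of_nonneg_left (s9 h0.le) hP
  have e2 := mul_le_mul_of_nonneg_left (c6 h0.le) h0.le
  refine e1.trans (le_trans ?_ e2)
  have hv : u ^ 2 ≤ 0.44 := by nlinarith
  set v := u ^ 2 with hvd
  have hv0 : 0 ≤ v := sq_nonneg u
  have hid : (1 - u ^ 2 / 3 - u ^ 4 / 45 - 0.0023 * u ^ 6) * (u - u ^ 3 / 6 + u ^ 5 / 120 - u ^ 7 / 5040 + u ^ 9 / 362880) -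
      u * (1 - u ^ 2 / 2 + u ^ 4 / 24 - u ^ 6 / 720) =
      u * ((1 - v / 3 - v ^ 2 / 45 - 0.0023 * v ^ 3) * (1 - v / 6 + v ^ 2 / 120 - v ^ 3 / 5040 + v ^ 4 / 362880) -
        (1 - v / 2 + v ^ 2 / 24 - v ^ 3 / 720)) := by
    rw [hvd]; ring
  have k4 : v ^ 4 ≤ 0.44 * v ^ 3 := by nlinarith [pow_nonneg hv0 3]
  have : u * ((1 - v / 3 - v ^ 2 / 45 - 0.0023 * v ^ 3) * (1 - v / 6 + v ^ 2 / 120 - v ^ 3 / 5040 + v ^ 4 / 362880) -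
        (1 - v / 2 + v ^ 2 / 24 - v ^ 3 / 720)) ≤ 0 := by
    apply mul_nonpos_of_nonneg_of_nonpos h0.le
    have k5 : v ^ 5 ≤ v ^ 4 := by nlinarith [pow_nonneg hv0 4]
    have k6 : v ^ 6 ≤ v ^ 5 := by nlinarith [pow_nonneg hv0 5]
    nlinarith [pow_nonneg hv0 3, pow_nonneg hv0 4, pow_nonneg hv0 5, pow_nonneg hv0 6, pow_nonneg hv0 7]
  rw [← hvd] at *
  linarith

lemma Ph_up {z : ℝ} (h0 : 0 < z) (h1 : z ≤ 0.66) : Ph z ≤ z - z ^ 3 / 9 - z ^ 5 / 225 - 0.0003 * z ^ 7 := by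
  have := inc (f := fun x => (x - x ^ 3 / 9 - x ^ 5 / 225 - 0.0003 * x ^ 7) - Ph x)
    (f' := fun u => (1 - u ^ 2 / 3 - u ^ 4 / 45 - 0.0021 * u ^ 6) - bt u) h0.le
    (ContinuousOn.sub (by fun_prop) (Ph_cont h0.le (by linarith [pi_gt_three]))) (fun y hy => by
      refine ((((hasDerivAt_id y).sub (((hasDerivAt_id y).pow 3).div_const 9)).sub (((hasDerivAt_id y).pow 5).div_const 225)).sub (((hasDerivAt_id y).pow 7).const_mul 0.0003)).sub (Ph_hasDeriv hy.1 (by linarith [pi_gt_three, hy.2])) |>.congr_deriv ?_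
      simp; ring) (fun y hy => by linarith [bt_up hy.1 (by linarith [hy.2])])
  simp [Ph_zero] at this; linarith

lemma Ph_dn {z : ℝ} (h0 : 0 < z) (h1 : z ≤ 0.66) : z - z ^ 3 / 9 - z ^ 5 / 225 - 0.0023 / 7 * z ^ 7 ≤ Ph z := by
  have := inc (f := fun x => Ph x - (x - x ^ 3 / 9 - x ^ 5 / 225 - 0.0023 / 7 * x ^ 7))
    (f' := fun u => bt u - (1 - u ^ 2 / 3 - u ^ 4 / 45 - 0.0023 * u ^ 6)) h0.le
    (ContinuousOn.sub (Ph_cont h0.le (by linarith [pi_gt_three])) (by fun_prop)) (fun y hy => by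
      refine (Ph_hasDeriv hy.1 (by linarith [pi_gt_three, hy.2])).sub ((((hasDerivAt_id y).sub (((hasDerivAt_id y).pow 3).div_const 9)).sub (((hasDerivAt_id y).pow 5).div_const 225)).sub (((hasDerivAt_id y).pow 7).const_mul (0.0023 / 7))) |>.congr_deriv ?_
      simp; ring) (fun y hy => by linarith [bt_dn hy.1 (by linarith [hy.2])])
  simp [Ph_zero] at this; linarith

end QP

namespace QP
open Real Finset

/-- first order coefficient -/
noncomputable def Qn (n : ℕ) (θ : ℝ) : ℝ :=
  ∑ k ∈ range n, -((((k : ℝ) + 1) * (θ / 2)) * bt1 (((k : ℝ) + 1) * (θ / 2)))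
/-- second order coefficient -/
noncomputable def Rn (n : ℕ) (θ : ℝ) : ℝ :=
  ∑ k ∈ range n, -((((k : ℝ) + 1) * (θ / 2)) ^ 2 * bt2 (((k : ℝ) + 1) * (θ / 2)))

lemma step_le {g G : ℝ → ℝ} {p q C : ℝ} (hpq : p ≤ q) (hc : ContinuousOn G (Set.Icc p q))
    (hd : ∀ x ∈ Set.Ioo p q, HasDerivAt G (g x) x) (h : ∀ x ∈ Set.Ioo p q, g x ≤ C) :
    G q - G p ≤ (q - p) * C := by
  have := inc (f := fun x => C * x - G x) (f' := fun x => C - g x) hpq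
    (ContinuousOn.sub (by fun_prop) hc) (fun x hx => by
      refine (((hasDerivAt_id x).const_mul C).sub (hd x hx)).congr_deriv ?_
      simp) (fun x hx => by linarith [h x hx])
  linarith

lemma step_ge {g G : ℝ → ℝ} {p q C : ℝ} (hpq : p ≤ q) (hc : ContinuousOn G (Set.Icc p q))
    (hd : ∀ x ∈ Set.Ioo p q, HasDerivAt G (g x) x) (h : ∀ x ∈ Set.Ioo p q, C ≤ g x) :
    (q - p) * C ≤ G q - G p := by
  have := step_le (G := fun x => -G x) (g := fun x => -g x) (C := -C) hpq hc.neg (fun x hx => (hd x hx).neg)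
    (fun x hx => by linarith [h x hx])
  linarith

lemma sum_ge_of_mono {g G : ℝ → ℝ} {h y : ℝ} (h0 : 0 < h) (n : ℕ) (hn : n * h ≤ y)
    (hc : ContinuousOn G (Set.Icc 0 y))
    (hd : ∀ x, 0 < x → x ≤ y → HasDerivAt G (g x) x)
    (hm : ∀ u t, 0 < u → u ≤ t → t ≤ y → g u ≤ g t) :
    G (n * h) - G 0 ≤ h * ∑ k ∈ range n, g (((k : ℝ) + 1) * h) := by
  induction n with
  | zero => simp
  | succ n ih =>
    push_cast at hn ⊢
    have h1 := ih (by nlinarith)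
    have hn0 : (0 : ℝ) ≤ n * h := by positivity
    rw [sum_range_succ, mul_add]
    have := step_le (G := G) (g := g) (p := n * h) (q := (n + 1) * h) (C := g ((n + 1) * h)) (by nlinarith)
      (hc.mono (Set.Icc_subset_Icc hn0 hn)) (fun x hx => hd x (by linarith [hx.1]) (by linarith [hx.2]))
      (fun x hx => hm x _ (by linarith [hx.1]) hx.2.le hn)
    have e : ((n + 1) * h - n * h) * g ((n + 1) * h) = h * g ((n + 1) * h) := by ring
    linarith

lemma sum_le_of_mono {g G : ℝ → ℝ} {h y : ℝ} (h0 : 0 < h) (n : ℕ) (hn1 : 1 ≤ n) (hn : n * h ≤ y)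
    (hc : ContinuousOn G (Set.Icc 0 y))
    (hd : ∀ x, 0 < x → x ≤ y → HasDerivAt G (g x) x)
    (hm : ∀ u t, 0 < u → u ≤ t → t ≤ y → g u ≤ g t) (hp : ∀ x, 0 < x → x ≤ y → 0 ≤ g x) :
    h * ∑ k ∈ range n, g (((k : ℝ) + 1) * h) ≤ G (n * h) - G 0 + h * g (n * h) := by
  induction n, hn1 using Nat.le_induction with
  | base =>
    push_cast at hn
    simp
    rw [one_mul] at hn
    have := inc (f := G) (f' := g) h0.le (hc.mono (Set.Icc_subset_Icc_right hn))
      (fun x hx => hd x hx.1 (by linarith [hx.2])) (fun x hx => hp x hx.1 (by linarith [hx.2]))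
    exact this
  | succ n hn1 ih =>
    push_cast at hn ⊢
    have h1 := ih (by nlinarith)
    have hn1' : (1 : ℝ) ≤ n := by exact_mod_cast hn1
    have hn0 : (0 : ℝ) < n * h := by positivity
    rw [sum_range_succ, mul_add]
    have := step_ge (G := G) (g := g) (p := n * h) (q := (n + 1) * h) (C := g (n * h)) (by nlinarith)
      (hc.mono (Set.Icc_subset_Icc hn0.le hn)) (fun x hx => hd x (by linarith [hx.1]) (by linarith [hx.2]))
      (fun x hx => hm _ x hn0 hx.1.le (by linarith [hx.2]))
    have e : ((n + 1) * h - n * h) * g (n * h) = h * g (n * h) := by ring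
    linarith

section
variable {n : ℕ} {θ : ℝ}

lemma Bn_le (h0 : 0 < θ) (h1 : n * (θ / 2) < π) : (θ / 2) * Bn n θ ≤ Ph (n * (θ / 2)) := by
  have := sum_ge_of_mono (g := fun x => -bt x) (G := fun x => -Ph x) (h := θ / 2) (y := n * (θ / 2)) (by positivity)
    n le_rfl (Ph_cont (by positivity) h1).neg (fun x hx hxy => (Ph_hasDeriv hx (by linarith)).neg)
    (fun u t hu hut hty => by linarith [bt_anti hu.le hut (by linarith)])
  rw [sum_neg_distrib, Ph_zero] at this
  unfold Bn; linarith

lemma Bn_ge (hn : 1 ≤ n) (h0 : 0 < θ) (h1 : n * (θ / 2) < π) :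
    Ph (n * (θ / 2)) - (θ / 2) * (1 - bt (n * (θ / 2))) ≤ (θ / 2) * Bn n θ := by
  have := sum_le_of_mono (g := fun x => 1 - bt x) (G := fun x => x - Ph x) (h := θ / 2) (y := n * (θ / 2)) (by positivity)
    n hn le_rfl (continuousOn_id.sub (Ph_cont (by positivity) h1)) (fun x hx hxy => (hasDerivAt_id x).sub (Ph_hasDeriv hx (by linarith)))
    (fun u t hu hut hty => by linarith [bt_anti hu.le hut (by linarith)])
    (fun x hx hxy => by linarith [bt_le_one hx.le (by linarith)])
  rw [sum_sub_distrib, Ph_zero] at this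
  simp at this
  unfold Bn; linarith

lemma trap_step {p q : ℝ} (hp : 0 ≤ p) (hpq : p ≤ q) (hq : q < π) :
    (q - p) * ((bt p + bt q) / 2) ≤ Ph q - Ph p := by
  have := inc (f := fun x => Ph x - (x - p) * ((bt p + bt x) / 2))
    (f' := fun x => bt x - (((bt p + bt x) / 2) + (x - p) * (bt1 x / 2))) hpq
    (((Ph_cont (hp.trans hpq) hq).mono (Set.Icc_subset_Icc_left hp)).sub
      (ContinuousOn.mul (by fun_prop) ((continuousOn_const.add ((bt_cont hq).mono (Set.Icc_subset_Icc_left hp))).div_const 2)))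
    (fun x hx => by
      have hx0 : 0 < x := by linarith [hx.1]
      have hx1 : x < π := by linarith [hx.2]
      refine ((Ph_hasDeriv hx0 hx1).sub (((hasDerivAt_id x).sub_const p).mul (((bt_hasDeriv hx0 hx1).const_add (bt p)).div_const 2))).congr_deriv ?_
      simp)
    (fun x hx => by
      have hx0 : 0 < x := by linarith [hx.1]
      have hx1 : x < π := by linarith [hx.2]
      have := bt_upper hp (by linarith [hx.1]) hx0 hx1
      nlinarith [sq_nonneg (p - x)])
  simp at this
  linarith

lemma Bn_trap (h0 : 0 < θ) (h1 : n * (θ / 2) < π) :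
    (θ / 2) * Bn n θ ≤ Ph (n * (θ / 2)) + (θ / 2) * (bt (n * (θ / 2)) - 1) / 2 := by
  induction n with
  | zero => simp [Bn, Ph_zero, bt_zero]
  | succ n ih =>
    push_cast at h1 ⊢
    have h2 := ih (by nlinarith)
    have := trap_step (p := n * (θ / 2)) (q := (n + 1) * (θ / 2)) (by positivity) (by nlinarith) h1
    have hB : Bn (n + 1) θ = Bn n θ + bt (((n : ℝ) + 1) * (θ / 2)) := by
      unfold Bn; rw [sum_range_succ]
    rw [hB]
    have e : ((n + 1) * (θ / 2) - n * (θ / 2)) = θ / 2 := by ring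
    rw [e] at this
    linarith

lemma G1_cont {y : ℝ} (h0 : 0 ≤ y) (h1 : y < π) : ContinuousOn (fun t => Ph t - t * bt t) (Set.Icc 0 y) :=
  (Ph_cont h0 h1).sub (continuousOn_id.mul (bt_cont h1))

lemma G1_hasDeriv {t : ℝ} (h0 : 0 < t) (h1 : t < π) : HasDerivAt (fun t => Ph t - t * bt t) (-(t * bt1 t)) t := by
  refine ((Ph_hasDeriv h0 h1).sub ((hasDerivAt_id t).mul (bt_hasDeriv h0 h1))).congr_deriv ?_
  simp

lemma g1_mono {u t : ℝ} (h0 : 0 < u) (hut : u ≤ t) (h1 : t < π) : -(u * bt1 u) ≤ -(t * bt1 t) := by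
  have := bt1_anti h0 hut h1
  have := bt1_neg h0 (hut.trans_lt h1)
  nlinarith

lemma Qn_ge (h0 : 0 < θ) (h1 : n * (θ / 2) < π) :
    Ph (n * (θ / 2)) - (n * (θ / 2)) * bt (n * (θ / 2)) ≤ (θ / 2) * Qn n θ := by
  have := sum_ge_of_mono (g := fun t => -(t * bt1 t)) (G := fun t => Ph t - t * bt t) (h := θ / 2) (y := n * (θ / 2)) (by positivity)
    n le_rfl (G1_cont (by positivity) h1) (fun x hx hxy => G1_hasDeriv hx (by linarith))
    (fun u t hu hut hty => g1_mono hu hut (by linarith))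
  simp only [Ph_zero, zero_mul, sub_zero] at this
  exact this

lemma Qn_le (hn : 1 ≤ n) (h0 : 0 < θ) (h1 : n * (θ / 2) < π) :
    (θ / 2) * Qn n θ ≤ Ph (n * (θ / 2)) - (n * (θ / 2)) * bt (n * (θ / 2)) + (θ / 2) * -((n * (θ / 2)) * bt1 (n * (θ / 2))) := by
  have := sum_le_of_mono (g := fun t => -(t * bt1 t)) (G := fun t => Ph t - t * bt t) (h := θ / 2) (y := n * (θ / 2)) (by positivity)
    n hn le_rfl (G1_cont (by positivity) h1) (fun x hx hxy => G1_hasDeriv hx (by linarith))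
    (fun u t hu hut hty => g1_mono hu hut (by linarith))
    (fun x hx hxy => by nlinarith [bt1_neg hx (by linarith)])
  simp only [Ph_zero, zero_mul, sub_zero] at this
  exact this

lemma Rn_le (hn : 1 ≤ n) (h0 : 0 < θ) (h1 : n * (θ / 2) < π) :
    (θ / 2) * Rn n θ ≤ 2 * (n * (θ / 2)) * bt (n * (θ / 2)) - 2 * Ph (n * (θ / 2)) - (n * (θ / 2)) ^ 2 * bt1 (n * (θ / 2))
      + (θ / 2) * -((n * (θ / 2)) ^ 2 * bt2 (n * (θ / 2))) := by
  have := sum_le_of_mono (g := fun t => -(t ^ 2 * bt2 t)) (G := fun t => 2 * t * bt t - 2 * Ph t - t ^ 2 * bt1 t) (h := θ / 2) (y := n * (θ / 2)) (by positivity)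
    n hn le_rfl ?_ (fun x hx hxy => ?_)
    (fun u t hu hut hty => ?_)
    (fun x hx hxy => by nlinarith [bt2_le hx (by linarith), pow_pos hx 2])
  · simp only [Ph_zero, zero_mul, sub_zero, mul_zero, zero_pow (two_ne_zero)] at this
    exact this
  · apply ContinuousOn.sub
    · exact ((continuousOn_const.mul continuousOn_id).mul (bt_cont h1)).sub (continuousOn_const.mul (Ph_cont (by positivity) h1))
    · have : ContinuousOn (fun t => (sin t * cos t - t) / sinc t ^ 2) (Set.Icc 0 (n * (θ / 2))) := by
        refine ContinuousOn.div (by fun_prop) (continuous_sinc.continuousOn.pow 2) ?_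
        intro x hx
        exact pow_ne_zero 2 (sinc_pos hx.1 (by linarith [hx.2])).ne'
      refine this.congr ?_
      intro x hx
      rcases hx.1.eq_or_lt with h | h
      · subst h; simp
      · have := sin_pos_of_pos_of_lt_pi h (by linarith [hx.2])
        simp only [bt1, sinc_of_ne_zero h.ne']
        field_simp
  · have hx1 : x < π := by linarith
    refine (((((hasDerivAt_id x).const_mul 2).mul (bt_hasDeriv hx hx1)).sub ((Ph_hasDeriv hx hx1).const_mul 2)).sub
      (((hasDerivAt_id x).pow 2).mul (bt1_hasDeriv hx hx1))).congr_deriv ?_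
    simp
  · have e1 := bt2_anti hu hut (by linarith)
    have e2 := bt2_le hu (by linarith)
    have : u ^ 2 ≤ t ^ 2 := by nlinarith
    nlinarith [pow_pos hu 2]
end

lemma trig_bd {z zl zu : ℝ} (h0 : 0 ≤ zl) (h1 : zl ≤ z) (h2 : z ≤ zu) (h3 : zu ≤ 1) :
    zl - zl ^ 3 / 6 + zl ^ 5 / 120 - zl ^ 7 / 5040 ≤ sin z ∧
    sin z ≤ zu - zu ^ 3 / 6 + zu ^ 5 / 120 - zu ^ 7 / 5040 + zu ^ 9 / 362880 ∧
    1 - zu ^ 2 / 2 + zu ^ 4 / 24 - zu ^ 6 / 720 ≤ cos z ∧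
    cos z ≤ 1 - zl ^ 2 / 2 + zl ^ 4 / 24 - zl ^ 6 / 720 + zl ^ 8 / 40320 := by
  have hp := pi_gt_three
  refine ⟨(s7 h0).trans ?_, le_trans ?_ (s9 (by linarith)), (c6 (by linarith)).trans ?_, le_trans ?_ (c8 h0)⟩
  · exact sin_le_sin_of_le_of_le_pi_div_two (by linarith) (by linarith) h1
  · exact sin_le_sin_of_le_of_le_pi_div_two (by linarith) (by linarith) h2
  · exact cos_le_cos_of_nonneg_of_le_pi (by linarith) (by linarith) h2
  · exact cos_le_cos_of_nonneg_of_le_pi (by linarith) (by linarith) h1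

lemma bt_refl {z : ℝ} (h1 : z < 1) : bt (π - z) = -((π - z) * cos z / sin z) := by
  rw [bt_eq (by linarith [pi_gt_three]), sin_pi_sub, cos_pi_sub]; ring

lemma bt1_refl (z : ℝ) : bt1 (π - z) = -((sin z * cos z + (π - z)) / sin z ^ 2) := by
  unfold bt1; rw [sin_pi_sub, cos_pi_sub]; ring

lemma bt2_refl (z : ℝ) : bt2 (π - z) = -2 * (sin z + (π - z) * cos z) / sin z ^ 3 := by
  unfold bt2; rw [sin_pi_sub, cos_pi_sub]; ring

lemma bdX {y c s yl yu cl cu sl su : ℝ} (hyl : 0 < yl) (hcl : 0 < cl) (hsl : 0 < sl)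
    (y1 : yl ≤ y) (y2 : y ≤ yu) (q1 : cl ≤ c) (q2 : c ≤ cu) (t1 : sl ≤ s) (t2 : s ≤ su) :
    yl * cl / su ≤ y * c / s ∧ y * c / s ≤ yu * cu / sl ∧ 
    -(y * -((s * c + y) / s ^ 2)) ≤ yu * ((su * cu + yu) / sl ^ 2) ∧
    -(y ^ 2 * (-2 * (s + y * c) / s ^ 3)) ≤ yu ^ 2 * (2 * (su + yu * cu) / sl ^ 3) := by
  have hy := hyl.trans_le y1
  have hc := hcl.trans_le q1
  have hs := hsl.trans_le t1
  have hyu := hy.trans_le y2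
  have hcu := hc.trans_le q2
  have hsu := hs.trans_le t2
  refine ⟨by gcongr, by gcongr, ?_, ?_⟩
  · have : -(y * -((s * c + y) / s ^ 2)) = y * ((s * c + y) / s ^ 2) := by ring
    rw [this]; gcongr
  · have : -(y ^ 2 * (-2 * (s + y * c) / s ^ 3)) = y ^ 2 * (2 * (s + y * c) / s ^ 3) := by ring
    rw [this]; gcongr

lemma fin_trap {h B X P l b : ℝ} (h0 : 0 < h) (h1 : h * B ≤ P + h * (-X - 1) / 2) (hX : l ≤ X)
    (hP : P ≤ h * (b + (l + 1) / 2)) : B ≤ b := by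
  have : h * B ≤ h * b := by nlinarith
  exact le_of_mul_le_mul_left this h0

lemma fin_bge {h B X P u b : ℝ} (h0 : 0 < h) (h1 : P - h * (1 - -X) ≤ h * B) (hX : X ≤ u)
    (hP : h * (b + 1 + u) ≤ P) : b ≤ B := by
  have : h * b ≤ h * B := by nlinarith
  exact le_of_mul_le_mul_left this h0

lemma finQ1 {h Q X P N l q : ℝ} (h0 : 0 < h) (hN : 0 < N) (h1 : P - N * h * -X ≤ h * Q) (hX : l ≤ X)
    (hP : -P ≤ N * h * (l - q)) : q * N ≤ Q := by
  have : N * h * l ≤ N * h * X := by gcongr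
  have : h * (q * N) ≤ h * Q := by nlinarith
  exact le_of_mul_le_mul_left this h0

lemma finQ2 {h Q X P N u q G g : ℝ} (h0 : 0 < h) (hN : 0 < N) (h1 : h * Q ≤ P - N * h * -X + h * G) (hX : X ≤ u)
    (hG : G ≤ g) (hP : P ≤ h * (N * (q - u) - g)) : Q ≤ q * N := by
  have : N * h * X ≤ N * h * u := by gcongr
  have : h * G ≤ h * g := by gcongr
  have : h * Q ≤ h * (q * N) := by nlinarith
  exact le_of_mul_le_mul_left this h0

lemma finR {h R X P N l r G g V v : ℝ} (h0 : 0 < h) (hN : 0 < N)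
    (h1 : h * R ≤ 2 * (N * h) * -X - 2 * P - (N * h) ^ 2 * G + h * V) (hX : l ≤ X)
    (hG : -((N * h) * G) ≤ g) (hV : V ≤ v) (hP : -2 * P ≤ h * (N * (r + 2 * l - g) - v)) : R ≤ r * N := by
  have : N * h * l ≤ N * h * X := by gcongr
  have : h * V ≤ h * v := by gcongr
  have : N * h * -((N * h) * G) ≤ N * h * g := by gcongr
  have : h * R ≤ h * (r * N) := by nlinarith
  exact le_of_mul_le_mul_left this h0

lemma num1 (n : ℕ) (hn : (n : ℝ) = 68533) :
    Bn n (2 * π / 86616) ≤ -2.4 ∧ 3.229 * n ≤ Qn n (2 * π / 86616) ∧ Qn n (2 * π / 86616) ≤ 3.231 * n := by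
  have hpl := pi_gt_d20
  have hpu := pi_lt_d20
  have hn1 : 1 ≤ n := by
    have : (1 : ℝ) ≤ n := by rw [hn]; norm_num
    exact_mod_cast this
  have hn0 : (0 : ℝ) < n := by exact_mod_cast hn1
  obtain ⟨t, ht⟩ : ∃ t, t = 2 * π / 86616 := ⟨_, rfl⟩
  have hθ : (0 : ℝ) < t := by rw [ht]; positivity
  obtain ⟨z, hz⟩ : ∃ z, z = 18083 * π / 86616 := ⟨_, rfl⟩
  have hy : n * (t / 2) = π - z := by rw [hn, hz, ht]; ring
  have hzl : 0.655876742 ≤ z := by rw [hz]; linarith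
  have hzu : z ≤ 0.655876743 := by rw [hz]; linarith
  obtain ⟨a1, a2, a3, a4⟩ := trig_bd (by norm_num) hzl hzu (by norm_num)
  norm_num at a1 a2 a3 a4
  have b1 : 0.609854 ≤ sin z := by linarith
  have b2 : sin z ≤ 0.60985431 := by linarith
  have b3 : 0.79251 ≤ cos z := by linarith
  have b4 : cos z ≤ 0.79252 := by linarith
  have hs : 0 < sin z := by linarith
  have hyπ : n * (t / 2) < π := by rw [hy]; linarith
  have hyl : 2.4857159 ≤ π - z := by linarith
  have hyu : π - z ≤ 2.4857160 := by linarith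
  have hh0 : 0 < t / 2 := by positivity
  have P := Ph_reflect (z := z) (by linarith) (by linarith)
  have hlog : log (2 * sin z) ≤ 0.1986125 := by
    rw [log_le_iff_le_exp (by positivity)]
    have := sum_le_exp_of_nonneg (x := 0.1986125) (by norm_num) 7
    norm_num [sum_range_succ, Nat.factorial] at this
    linarith
  have hlog' : 0.1986 ≤ log (2 * sin z) := by
    rw [le_log_iff_exp_le (by positivity)]
    have := exp_bound' (x := 0.1986) (by norm_num) (by norm_num) (n := 7) (by norm_num)
    norm_num [sum_range_succ, Nat.factorial] at this
    linarith
  have P1 := Ph_dn (z := z) (by linarith) (by linarith)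
  have P2 := Ph_up (z := z) (by linarith) (by linarith)
  have q3 : z ^ 3 ≤ 0.655876743 ^ 3 := by gcongr
  have q5 : z ^ 5 ≤ 0.655876743 ^ 5 := by gcongr
  have q7 : z ^ 7 ≤ 0.655876743 ^ 7 := by gcongr
  have r3 : 0.655876742 ^ 3 ≤ z ^ 3 := by gcongr
  have r5 : 0.655876742 ^ 5 ≤ z ^ 5 := by gcongr
  have r7 : 0.655876742 ^ 7 ≤ z ^ 7 := by gcongr
  norm_num at q3 q5 q7 r3 r5 r7
  have l1 : π * log (2 * sin z) ≤ π * 0.1986125 := by gcongr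
  have l2 : π * 0.1986 ≤ π * log (2 * sin z) := by gcongr
  obtain ⟨x1, x2, x3, x4⟩ := bdX (by norm_num) (by norm_num) (by norm_num) hyl hyu b3 b4 b1 b2
  rw [← bt1_refl] at x3
  rw [← bt2_refl] at x4
  norm_num at x1 x2 x3 x4
  have hb := bt_refl (z := z) (by linarith)
  generalize (π - z) * cos z / sin z = X at *
  rw [← hy] at P hb x3 x4
  have hPu : Ph (n * (t / 2)) ≤ -0.000011 := by rw [P]; linarith
  have hPl : -0.001 ≤ Ph (n * (t / 2)) := by rw [P]; linarith
  have T := Bn_trap hθ hyπ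
  have Q1 := Qn_ge hθ hyπ
  have Q2 := Qn_le hn1 hθ hyπ
  rw [hb] at T Q1 Q2
  rw [← ht]
  clear P P1 P2 l1 l2 hlog hlog' q3 q5 q7 r3 r5 r7 a1 a2 a3 a4
  generalize Ph (n * (t / 2)) = PP at *
  refine ⟨fin_trap (l := 3.23) hh0 T (by linarith) ?_, finQ1 (l := 3.23) hh0 hn0 Q1 (by linarith) ?_,
    finQ2 (u := 3.2305) (g := 30) hh0 hn0 Q2 (by linarith) (by linarith) ?_⟩
  · rw [ht]; linarith
  · rw [hn, ht]; linarith
  · rw [hn, ht]; linarith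

lemma num2 (n : ℕ) (hn : (n : ℝ) = 68533) :
    5.5 ≤ Bn n (2 * π / 86620) ∧ Bn n (2 * π / 86620) ≤ 10 ∧
    3.229 * n ≤ Qn n (2 * π / 86620) ∧ Qn n (2 * π / 86620) ≤ 3.23 * n := by
  have hpl := pi_gt_d20
  have hpu := pi_lt_d20
  have hn1 : 1 ≤ n := by
    have : (1 : ℝ) ≤ n := by rw [hn]; norm_num
    exact_mod_cast this
  have hn0 : (0 : ℝ) < n := by exact_mod_cast hn1
  obtain ⟨t, ht⟩ : ∃ t, t = 2 * π / 86620 := ⟨_, rfl⟩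
  have hθ : (0 : ℝ) < t := by rw [ht]; positivity
  obtain ⟨z, hz⟩ : ∃ z, z = 18087 * π / 86620 := ⟨_, rfl⟩
  have hy : n * (t / 2) = π - z := by rw [hn, hz, ht]; ring
  have hzl : 0.6559915299 ≤ z := by rw [hz]; linarith
  have hzu : z ≤ 0.6559915300 := by rw [hz]; linarith
  obtain ⟨a1, a2, a3, a4⟩ := trig_bd (by norm_num) hzl hzu (by norm_num)
  norm_num at a1 a2 a3 a4
  have b1 : 0.6099452 ≤ sin z := by linarith
  have b2 : sin z ≤ 0.60994528 := by linarith
  have b3 : 0.79244 ≤ cos z := by linarith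
  have b4 : cos z ≤ 0.792444 := by linarith
  have hs : 0 < sin z := by linarith
  have hyπ : n * (t / 2) < π := by rw [hy]; linarith
  have hyl : 2.4856011 ≤ π - z := by linarith
  have hyu : π - z ≤ 2.4856012 := by linarith
  have hh0 : 0 < t / 2 := by positivity
  have P := Ph_reflect (z := z) (by linarith) (by linarith)
  have hlog : log (2 * sin z) ≤ 0.1987614 := by
    rw [log_le_iff_le_exp (by positivity)]
    have := sum_le_exp_of_nonneg (x := 0.1987614) (by norm_num) 7
    norm_num [sum_range_succ, Nat.factorial] at this
    linarith
  have hlog' : 0.1987606 ≤ log (2 * sin z) := by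
    rw [le_log_iff_exp_le (by positivity)]
    have := exp_bound' (x := 0.1987606) (by norm_num) (by norm_num) (n := 7) (by norm_num)
    norm_num [sum_range_succ, Nat.factorial] at this
    linarith
  have P1 := Ph_dn (z := z) (by linarith) (by linarith)
  have P2 := Ph_up (z := z) (by linarith) (by linarith)
  have q3 : z ^ 3 ≤ 0.6559915300 ^ 3 := by gcongr
  have q5 : z ^ 5 ≤ 0.6559915300 ^ 5 := by gcongr
  have q7 : z ^ 7 ≤ 0.6559915300 ^ 7 := by gcongr
  have r3 : 0.6559915299 ^ 3 ≤ z ^ 3 := by gcongr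
  have r5 : 0.6559915299 ^ 5 ≤ z ^ 5 := by gcongr
  have r7 : 0.6559915299 ^ 7 ≤ z ^ 7 := by gcongr
  norm_num at q3 q5 q7 r3 r5 r7
  have l1 : π * log (2 * sin z) ≤ π * 0.1987614 := by gcongr
  have l2 : π * 0.1987606 ≤ π * log (2 * sin z) := by gcongr
  obtain ⟨x1, x2, x3, x4⟩ := bdX (by norm_num) (by norm_num) (by norm_num) hyl hyu b3 b4 b1 b2
  rw [← bt1_refl] at x3
  rw [← bt2_refl] at x4
  norm_num at x1 x2 x3 x4
  have hb := bt_refl (z := z) (by linarith)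
  generalize (π - z) * cos z / sin z = X at *
  rw [← hy] at P hb x3 x4
  have hPu : Ph (n * (t / 2)) ≤ 0.00036 := by rw [P]; linarith
  have hPl : 0.0003535 ≤ Ph (n * (t / 2)) := by rw [P]; linarith
  have T := Bn_ge hn1 hθ hyπ
  have T' := Bn_le hθ hyπ
  have Q1 := Qn_ge hθ hyπ
  have Q2 := Qn_le hn1 hθ hyπ
  rw [hb] at T Q1 Q2
  rw [← ht]
  clear P P1 P2 l1 l2 hlog hlog' q3 q5 q7 r3 r5 r7 a1 a2 a3 a4
  generalize Ph (n * (t / 2)) = PP at *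
  refine ⟨fin_bge (u := 3.2294) hh0 T (by linarith) ?_, ?_, finQ1 (l := 3.2291) hh0 hn0 Q1 (by linarith) ?_,
    finQ2 (u := 3.2294) (g := 20) hh0 hn0 Q2 (by linarith) (by linarith) ?_⟩
  · rw [ht]; linarith
  · refine le_of_mul_le_mul_left (T'.trans (hPu.trans ?_)) hh0
    rw [ht]; linarith
  · rw [hn, ht]; linarith
  · rw [hn, ht]; linarith

lemma num3 (n : ℕ) (hn : (n : ℝ) = 68533) :
    Qn n (1.02 * (2 * π / 86620)) ≤ 3.6 * n ∧ Rn n (1.02 * (2 * π / 86620)) ≤ 16.3 * n := by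
  have hpl := pi_gt_d20
  have hpu := pi_lt_d20
  have hn1 : 1 ≤ n := by
    have : (1 : ℝ) ≤ n := by rw [hn]; norm_num
    exact_mod_cast this
  have hn0 : (0 : ℝ) < n := by exact_mod_cast hn1
  obtain ⟨t, ht⟩ : ∃ t, t = 1.02 * (2 * π / 86620) := ⟨_, rfl⟩
  have hθ : (0 : ℝ) < t := by rw [ht]; positivity
  obtain ⟨z, hz⟩ : ∃ z, z = (86620 - 1.02 * 68533) * π / 86620 := ⟨_, rfl⟩
  have hy : n * (t / 2) = π - z := by rw [hn, hz, ht]; ring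
  have hzl : 0.606279 ≤ z := by rw [hz]; linarith
  have hzu : z ≤ 0.60628 := by rw [hz]; linarith
  obtain ⟨a1, a2, a3, a4⟩ := trig_bd (by norm_num) hzl hzu (by norm_num)
  norm_num at a1 a2 a3 a4
  have b1 : 0.56981 ≤ sin z := by linarith
  have b2 : sin z ≤ 0.569817 := by linarith
  have b3 : 0.821772 ≤ cos z := by linarith
  have b4 : cos z ≤ 0.821775 := by linarith
  have hs : 0 < sin z := by linarith
  have hyπ : n * (t / 2) < π := by rw [hy]; linarith
  have hyl : 2.53531 ≤ π - z := by linarith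
  have hyu : π - z ≤ 2.535315 := by linarith
  have hh0 : 0 < t / 2 := by positivity
  have P := Ph_reflect (z := z) (by linarith) (by linarith)
  have hlog : log (2 * sin z) ≤ 0.1308 := by
    rw [log_le_iff_le_exp (by positivity)]
    have := sum_le_exp_of_nonneg (x := 0.1308) (by norm_num) 7
    norm_num [sum_range_succ, Nat.factorial] at this
    linarith
  have hlog' : 0.1306 ≤ log (2 * sin z) := by
    rw [le_log_iff_exp_le (by positivity)]
    have := exp_bound' (x := 0.1306) (by norm_num) (by norm_num) (n := 7) (by norm_num)
    norm_num [sum_range_succ, Nat.factorial] at this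
    linarith
  have P1 := Ph_dn (z := z) (by linarith) (by linarith)
  have P2 := Ph_up (z := z) (by linarith) (by linarith)
  have q3 : z ^ 3 ≤ 0.60628 ^ 3 := by gcongr
  have q5 : z ^ 5 ≤ 0.60628 ^ 5 := by gcongr
  have q7 : z ^ 7 ≤ 0.60628 ^ 7 := by gcongr
  have r3 : 0.606279 ^ 3 ≤ z ^ 3 := by gcongr
  have r5 : 0.606279 ^ 5 ≤ z ^ 5 := by gcongr
  have r7 : 0.606279 ^ 7 ≤ z ^ 7 := by gcongr
  norm_num at q3 q5 q7 r3 r5 r7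
  have l1 : π * log (2 * sin z) ≤ π * 0.1308 := by gcongr
  have l2 : π * 0.1306 ≤ π * log (2 * sin z) := by gcongr
  obtain ⟨x1, x2, x3, x4⟩ := bdX (by norm_num) (by norm_num) (by norm_num) hyl hyu b3 b4 b1 b2
  rw [← bt1_refl] at x3
  rw [← bt2_refl] at x4
  norm_num at x1 x2 x3 x4
  have hb := bt_refl (z := z) (by linarith)
  generalize (π - z) * cos z / sin z = X at *
  rw [← hy] at P hb x3 x4
  have hPu : Ph (n * (t / 2)) ≤ -0.165 := by rw [P]; linarith
  have hPl : -0.172 ≤ Ph (n * (t / 2)) := by rw [P]; linarith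
  have R := Rn_le hn1 hθ hyπ
  have Q2 := Qn_le hn1 hθ hyπ
  rw [hb] at R Q2
  rw [← ht]
  clear P P1 P2 l1 l2 hlog hlog' q3 q5 q7 r3 r5 r7 a1 a2 a3 a4
  generalize Ph (n * (t / 2)) = PP at *
  refine ⟨finQ2 (u := 3.6566) (g := 30) hh0 hn0 Q2 (by linarith) (by linarith) ?_,
    finR (l := 3.6563) (g := 23.454) (v := 200) hh0 hn0 R (by linarith) (by linarith) (by linarith) ?_⟩
  · rw [hn, ht]; linarith
  · rw [hn, ht]; linarith

end QP

namespace QP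
open Real Finset

section
variable {n : ℕ} {θ : ℝ}

lemma tk {k : ℕ} (hk : k ∈ range n) (h0 : 0 < θ) :
    0 < ((k : ℝ) + 1) * (θ / 2) ∧ ((k : ℝ) + 1) * (θ / 2) ≤ n * (θ / 2) := by
  have hk' : (k : ℝ) + 1 ≤ n := by exact_mod_cast mem_range.1 hk
  exact ⟨by positivity, by gcongr⟩

lemma sum_sq_ge (n : ℕ) : (n : ℝ) ^ 3 / 3 ≤ ∑ k ∈ range n, ((k : ℝ) + 1) ^ 2 := by
  induction n with
  | zero => simp
  | succ n ih =>
    rw [sum_range_succ]; push_cast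
    have : (0 : ℝ) ≤ n := by positivity
    nlinarith

lemma Bn_tangent {θ' s : ℝ} (h0 : 0 < θ) (h1 : n * (θ / 2) < π) (hs : θ' = θ * (1 + s))
    (h0' : 0 < θ') (h1' : n * (θ' / 2) < π) :
    Bn n θ' ≤ Bn n θ - Qn n θ * s - (n * (θ / 2)) ^ 2 * n / 9 * s ^ 2 := by
  have h2 : Bn n θ' ≤ ∑ k ∈ range n, (bt (((k : ℝ) + 1) * (θ / 2)) - -((((k : ℝ) + 1) * (θ / 2)) * bt1 (((k : ℝ) + 1) * (θ / 2))) * s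
      - (θ / 2) ^ 2 * s ^ 2 / 3 * ((k : ℝ) + 1) ^ 2) := by
    unfold Bn
    refine sum_le_sum fun k hk => ?_
    have a1 := tk hk h0
    have a2 := tk hk h0'
    have := bt_upper a2.1.le (a2.2.trans_lt h1') a1.1 (a1.2.trans_lt h1)
    refine this.trans (le_of_eq ?_)
    rw [hs]; ring
  rw [sum_sub_distrib, sum_sub_distrib, ← mul_sum, ← sum_mul] at h2
  have h3 := sum_sq_ge n
  have h4 : (θ / 2) ^ 2 * s ^ 2 / 3 * ((n : ℝ) ^ 3 / 3) ≤ (θ / 2) ^ 2 * s ^ 2 / 3 * ∑ k ∈ range n, ((k : ℝ) + 1) ^ 2 := by gcongr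
  have e : (θ / 2) ^ 2 * s ^ 2 / 3 * ((n : ℝ) ^ 3 / 3) = (n * (θ / 2)) ^ 2 * n / 9 * s ^ 2 := by ring
  unfold Qn
  change _ ≤ Bn n θ - _ - _ at h2
  linarith

lemma Bn_lower {θ' s T : ℝ} (h0 : 0 < θ) (hs : θ' = θ * (1 + s)) (hT0 : 0 < T)
    (h0' : 0 < θ') (hT : n * (T / 2) < π) (hθT : θ ≤ T) (hθT' : θ' ≤ T) :
    Bn n θ - Qn n θ * s - Rn n T * (θ / T) ^ 2 / 2 * s ^ 2 ≤ Bn n θ' := by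
  have h2 : ∑ k ∈ range n, (bt (((k : ℝ) + 1) * (θ / 2)) - -((((k : ℝ) + 1) * (θ / 2)) * bt1 (((k : ℝ) + 1) * (θ / 2))) * s
      - -((((k : ℝ) + 1) * (T / 2)) ^ 2 * bt2 (((k : ℝ) + 1) * (T / 2))) * ((θ / T) ^ 2 / 2 * s ^ 2)) ≤ Bn n θ' := by
    unfold Bn
    refine sum_le_sum fun k hk => ?_
    have a1 := tk hk h0
    have a2 := tk hk h0'
    have a3 := tk hk hT0
    have := bt_lower (u := ((k : ℝ) + 1) * (θ' / 2)) (t := ((k : ℝ) + 1) * (θ / 2)) (T := ((k : ℝ) + 1) * (T / 2))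
      a2.1 (by gcongr) a1.1 (by gcongr) (a3.2.trans_lt hT)
    refine le_trans (le_of_eq ?_) this
    rw [hs]; field_simp; ring
  rw [sum_sub_distrib, sum_sub_distrib, ← sum_mul, ← sum_mul] at h2
  unfold Qn Rn
  change Bn n θ - _ - _ ≤ _ at h2
  linarith

lemma Bn_anti {θ' : ℝ} (h0 : 0 < θ) (h : θ ≤ θ') (h1' : n * (θ' / 2) < π) : Bn n θ' ≤ Bn n θ := by
  unfold Bn
  refine sum_le_sum fun k hk => ?_
  have a1 := tk hk h0
  have a2 := tk hk (h0.trans_le h)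
  exact bt_anti a1.1.le (by gcongr) (a2.2.trans_lt h1')

lemma Bn_lip {θ' T : ℝ} (h0 : 0 < θ) (h : θ ≤ θ') (hT : θ' ≤ T) (h1' : n * (T / 2) < π) :
    Bn n θ - Bn n θ' ≤ Qn n T * ((θ' - θ) / T) := by
  have hT0 : 0 < T := by linarith
  unfold Bn Qn
  rw [← sum_sub_distrib, sum_mul]
  refine sum_le_sum fun k hk => ?_
  have a1 := tk hk h0
  have a2 := tk hk (h0.trans_le h)
  have a3 := tk hk hT0
  have m1 : ((k : ℝ) + 1) * (θ / 2) ≤ ((k : ℝ) + 1) * (θ' / 2) := by gcongr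
  have m2 : ((k : ℝ) + 1) * (θ' / 2) ≤ ((k : ℝ) + 1) * (T / 2) := by gcongr
  have := step_ge (G := bt) (g := bt1) (C := bt1 (((k : ℝ) + 1) * (T / 2))) m1
    ((bt_cont (a2.2.trans_lt (lt_of_le_of_lt (by gcongr) h1'))).mono (Set.Icc_subset_Icc_left a1.1.le))
    (fun x hx => bt_hasDeriv (by linarith [hx.1]) (by linarith [hx.2]))
    (fun x hx => bt1_anti (by linarith [hx.1]) (by linarith [hx.2]) (by linarith))
  have e : -(((k : ℝ) + 1) * (T / 2) * bt1 (((k : ℝ) + 1) * (T / 2))) * ((θ' - θ) / T) =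
    -((((k : ℝ) + 1) * (θ' / 2) - ((k : ℝ) + 1) * (θ / 2)) * bt1 (((k : ℝ) + 1) * (T / 2))) := by
    field_simp
  rw [e]; linarith

/-- chord concavity from 0 -/
lemma Bn_chord {l : ℝ} (h0 : 0 < θ) (h1 : n * (θ / 2) < π) (hl0 : 0 ≤ l) (hl1 : l ≤ 1) :
    (1 - l) * n + l * Bn n θ ≤ Bn n (l * θ) := by
  unfold Bn
  have : (1 - l) * n + l * ∑ k ∈ range n, bt (((k : ℝ) + 1) * (θ / 2)) =
      ∑ k ∈ range n, ((1 - l) * bt 0 + l * bt (((k : ℝ) + 1) * (θ / 2))) := by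
    rw [mul_sum, sum_add_distrib]; simp [bt_zero]; ring
  rw [this]
  refine sum_le_sum fun k hk => ?_
  have a1 := tk hk h0
  have := (bt_concave h1).2 (show (0 : ℝ) ∈ _ from ⟨le_rfl, by linarith⟩) (show ((k : ℝ) + 1) * (θ / 2) ∈ _ from ⟨a1.1.le, a1.2⟩)
    (show (0 : ℝ) ≤ 1 - l by linarith) hl0 (by ring)
  simp only [smul_eq_mul] at this
  refine this.trans (le_of_eq ?_)
  congr 1; ring

lemma Bn_le_n (h0 : 0 < θ) (h1 : n * (θ / 2) < π) : Bn n θ ≤ n := by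
  have : Bn n θ ≤ ∑ k ∈ range n, (1 : ℝ) := by
    unfold Bn
    refine sum_le_sum fun k hk => ?_
    have a1 := tk hk h0
    exact bt_le_one a1.1.le (a1.2.trans_lt h1)
  simpa using this
end

lemma S_pow_lower {n : ℕ} {θ1 θ : ℝ} (h1 : n * (θ1 / 2) < π) (hθ0 : 0 ≤ θ) (hθ : θ ≤ θ1) (h0 : 0 < θ1) :
    S n θ1 * (θ / θ1) ^ n ≤ S n θ := by
  unfold S
  have hpw : (θ / θ1) ^ n = ∏ k ∈ range n, θ / θ1 := by rw [prod_const, card_range]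
  rw [hpw, ← prod_mul_distrib]
  have hl1 : θ / θ1 ≤ 1 := by rw [div_le_one h0]; exact hθ
  have hl0 : 0 ≤ θ / θ1 := by positivity
  apply prod_le_prod
  · intro k hk
    have a1 := tk hk h0
    have := sin_pos_of_pos_of_lt_pi a1.1 (a1.2.trans_lt h1)
    rw [mul_div_assoc]
    positivity
  · intro k hk
    have a1 := tk hk h0
    have := strictConcaveOn_sin_Icc.concaveOn.2 (show (0 : ℝ) ∈ _ from ⟨le_rfl, pi_pos.le⟩)
      (show ((k : ℝ) + 1) * (θ1 / 2) ∈ _ from ⟨a1.1.le, (a1.2.trans_lt h1).le⟩) (show (0 : ℝ) ≤ 1 - θ / θ1 by linarith) hl0 (by ring)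
    simp only [smul_eq_mul, mul_zero, sin_zero, zero_add] at this
    rw [mul_div_assoc, mul_div_assoc]
    rw [show θ / θ1 * (((k : ℝ) + 1) * (θ1 / 2)) = ((k : ℝ) + 1) * (θ / 2) by field_simp] at this
    linarith

lemma S_nonneg (n : ℕ) {θ : ℝ} (h0 : 0 ≤ θ) (h1 : n * (θ / 2) ≤ π) : 0 ≤ S n θ := by
  unfold S
  apply prod_nonneg
  intro k hk
  have hk' : (k : ℝ) + 1 ≤ n := by exact_mod_cast mem_range.1 hk
  have := sin_nonneg_of_nonneg_of_le_pi (x := (k + 1) * θ / 2) (by positivity) (by nlinarith)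
  positivity

open MeasureTheory in
lemma weight_lower (n : ℕ) (hn : (n : ℝ) = 68533) {W : ℝ → ℝ} (hW : Continuous W)
    (hW1 : ∀ x, 0 ≤ x → x ≤ 2 * π / 86616 → (x / π) ^ 3 ≤ W x) (hW0 : ∀ x, 0 ≤ x → x ≤ 2 * π / n → 0 ≤ W x) :
    π * exp (0.19 * n) ≤ 0.00000000000000000001 * ∫ x in (0 : ℝ)..(2 * π / n), S n x * W x := by
  have hpl := pi_gt_d20
  have hpu := pi_lt_d20
  have hpi := pi_pos
  obtain ⟨t, ht⟩ : ∃ t, t = 2 * π / 86616 := ⟨_, rfl⟩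
  rw [← ht] at hW1
  have ht0 : 0 < t := by rw [ht]; positivity
  have htb : t ≤ 2 * π / n := by rw [hn, ht]; gcongr; norm_num
  have hy : n * (t / 2) < π := by rw [hn, ht]; linarith
  have hcont : Continuous fun x => S n x * W x := (S_continuous n).mul hW
  have hSn : ∀ x, 0 ≤ x → x ≤ 2 * π / n → 0 ≤ S n x := fun x h0 h1 => S_nonneg n h0 (by
    rw [le_div_iff₀ (by rw [hn]; norm_num)] at h1; linarith)
  have h1 : ∫ x in (0 : ℝ)..t, S n t / (t ^ n * π ^ 3) * x ^ (n + 3) ≤ ∫ x in (0 : ℝ)..t, S n x * W x := by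
    apply intervalIntegral.integral_mono_on ht0.le
    · exact (by fun_prop : Continuous fun x : ℝ => S n t / (t ^ n * π ^ 3) * x ^ (n + 3)).intervalIntegrable _ _
    · exact hcont.intervalIntegrable _ _
    · intro x hx
      have a1 := S_pow_lower hy hx.1 hx.2 ht0
      have a2 := hW1 x hx.1 hx.2
      have a3 := hSn t ht0.le htb
      have a4 : 0 ≤ x := hx.1
      calc S n t / (t ^ n * π ^ 3) * x ^ (n + 3) = (S n t * (x / t) ^ n) * (x / π) ^ 3 := by
            rw [div_pow, div_pow, pow_add]; field_simp
        _ ≤ S n x * W x := by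
            apply mul_le_mul a1 a2 (by positivity) (hSn x hx.1 (hx.2.trans htb))
  have h2 : ∫ x in (0 : ℝ)..t, S n x * W x ≤ ∫ x in (0 : ℝ)..(2 * π / n), S n x * W x := by
    rw [← intervalIntegral.integral_add_adjacent_intervals (hcont.intervalIntegrable 0 t) (hcont.intervalIntegrable t (2 * π / n))]
    have : 0 ≤ ∫ x in t..(2 * π / n), S n x * W x := by
      apply intervalIntegral.integral_nonneg htb
      intro x hx
      exact mul_nonneg (hSn x (ht0.le.trans hx.1) hx.2) (hW0 x (ht0.le.trans hx.1) hx.2)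
    linarith
  rw [intervalIntegral.integral_const_mul, integral_pow] at h1
  have e1 : S n t / (t ^ n * π ^ 3) * ((t ^ (n + 3 + 1) - 0 ^ (n + 3 + 1)) / (((n + 3 : ℕ) : ℝ) + 1)) = S n t * (t ^ 4 / (π ^ 3 * (n + 4))) := by
    rw [zero_pow (by omega), sub_zero, show n + 3 + 1 = n + 4 by ring, pow_add]
    push_cast
    field_simp
    ring
  rw [e1] at h1
  have h3 := S_main_lower n hn
  rw [← ht] at h3
  have h4 : (0.000000000000000000000001 : ℝ) ≤ t ^ 4 / (π ^ 3 * (n + 4)) := by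
    have b1 : (0.00007 : ℝ) ≤ t := by rw [ht]; linarith
    rw [hn]
    calc (0.000000000000000000000001 : ℝ) ≤ (0.00007) ^ 4 / (3.2 ^ 3 * (68533 + 4)) := by norm_num
      _ ≤ t ^ 4 / (π ^ 3 * (68533 + 4)) := by gcongr; linarith
  have h5 : exp (0.192 * n) * 0.000000000000000000000001 ≤ S n t * (t ^ 4 / (π ^ 3 * (n + 4))) := by
    gcongr
    exact le_trans (exp_pos _).le h3
  have h6 : exp (0.192 * n) = exp (0.19 * n) * exp (0.002 * n) := by rw [← exp_add]; ring_nf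
  have h7 : (10000000000000000000000000000000000000000000000 : ℝ) ≤ exp (0.002 * n) := by
    have : (2 : ℝ) ^ 160 ≤ exp (0.002 * n) := by
      have : exp (0.6932 * 160) ≤ exp (0.002 * n) := by
        apply exp_le_exp.2; rw [hn]; norm_num
      refine le_trans ?_ this
      rw [show (0.6932 : ℝ) * 160 = ((160 : ℕ) : ℝ) * 0.6932 by norm_num, exp_nat_mul]
      gcongr
      have := log_two_lt_d9
      rw [← log_le_iff_le_exp (by norm_num)]; linarith
    refine le_trans (by norm_num) this
  have h8 := exp_pos (0.19 * n)
  calc π * exp (0.19 * n) ≤ 0.00000000000000000001 * (exp (0.19 * n) * 10000000000000000000000000000000000000000000000 * 0.000000000000000000000001) := by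
        have : π * exp (0.19 * n) ≤ 100 * exp (0.19 * n) := by gcongr; linarith
        linarith
    _ ≤ 0.00000000000000000001 * (exp (0.192 * n) * 0.000000000000000000000001) := by rw [h6]; gcongr
    _ ≤ _ := by
        have := h5.trans (h1.trans h2)
        linarith

open MeasureTheory in
lemma tail_bd (n : ℕ) (hn : (n : ℝ) = 68533) {V : ℝ → ℝ} {A : ℝ} (hA : 0 ≤ A)
    (hV1 : ∀ x, |V x| ≤ A) :
    |∫ x in (2 * π / n)..π, S n x * V x| ≤ A * (π * exp (0.19 * n)) := by
  have hpi := pi_pos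
  have hn' : 68000 ≤ n := by
    have : (68000 : ℝ) ≤ n := by rw [hn]; norm_num
    exact_mod_cast this
  have hb : 2 * π / n ≤ π := by rw [hn]; rw [div_le_iff₀ (by norm_num)]; linarith
  have hb0 : 0 ≤ 2 * π / n := by positivity
  have := intervalIntegral.norm_integral_le_of_norm_le_const (a := 2 * π / n) (b := π) (C := exp (0.19 * n) * A)
    (f := fun x => S n x * V x) (fun x hx => by
      rw [Set.uIoc_of_le hb] at hx
      rw [norm_mul]
      have := S_tail n hn' x hx.1.le hx.2
      exact mul_le_mul this (hV1 x) (norm_nonneg _) (exp_pos _).le)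
  rw [norm_eq_abs, abs_of_nonneg (sub_nonneg.2 hb)] at this
  refine this.trans ?_
  have h2 : exp (0.19 * n) * A * (π - 2 * π / n) ≤ exp (0.19 * n) * A * π := by gcongr; linarith
  linarith

end QP

namespace QP
open Real Finset

open MeasureTheory in
lemma ibp_ge {n : ℕ} {g p p' : ℝ → ℝ} {e : ℝ} (he : 0 ≤ e) (heb : n * (e / 2) ≤ π) (hn : 0 < n)
    (hg : Continuous g) (hp : Continuous p)
    (hd : ∀ x, 0 < x → x < e → HasDerivAt p (p' x) x)
    (h : ∀ x, 0 < x → x < e → p' x * S n x + p x * (S n x * Bn n x / x) ≤ g x) :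
    p e * S n e ≤ ∫ x in (0 : ℝ)..e, g x := by
  have hn' : (0 : ℝ) < n := by exact_mod_cast hn
  have := inc (f := fun x => (∫ y in (0 : ℝ)..x, g y) - p x * S n x)
    (f' := fun x => g x - (p' x * S n x + p x * (S n x * Bn n x / x))) he
    (((continuous_iff_continuousAt.2 fun x => (intervalIntegral.integral_hasDerivAt_right (hg.intervalIntegrable 0 x)
      (hg.stronglyMeasurableAtFilter _ _) hg.continuousAt).continuousAt).sub (hp.mul (S_continuous n))).continuousOn)
    (fun x hx => by
      have h1 : n * (x / 2) < π := by
        refine lt_of_lt_of_le ?_ heb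
        have := hx.2
        gcongr
      exact (intervalIntegral.integral_hasDerivAt_right (hg.intervalIntegrable 0 x)
        (hg.stronglyMeasurableAtFilter _ _) hg.continuousAt).sub ((hd x hx.1 hx.2).mul (S_hasDeriv n hx.1 h1)))
    (fun x hx => by linarith [h x hx.1 hx.2])
  have h0 : S n 0 = 0 := by
    unfold S
    exact prod_eq_zero (mem_range.2 hn) (by simp)
  simp [h0] at this
  exact this

lemma S_end {n : ℕ} (hn : 0 < n) : S n (2 * π / n) = 0 := by
  have hn' : (0 : ℝ) < n := by exact_mod_cast hn
  unfold S
  apply prod_eq_zero (mem_range.2 (Nat.sub_lt hn one_pos))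
  have : (((n - 1 : ℕ) : ℝ) + 1) * (2 * π / n) / 2 = π := by
    rw [Nat.cast_sub hn]; push_cast; field_simp; ring
  rw [this]; simp

lemma sin_half_ge {x : ℝ} (h0 : 0 ≤ x) (h1 : x ≤ π) : x / π ≤ sin (x / 2) := by
  have := mul_le_sin (x := x / 2) (by linarith) (by linarith)
  calc x / π = 2 / π * (x / 2) := by ring
    _ ≤ _ := this

lemma cube_le {x : ℝ} (h0 : 0 ≤ x) (h1 : x ≤ π) : (x / π) ^ 3 ≤ x / π := by
  have h2 : x / π ≤ 1 := by rw [div_le_one pi_pos]; exact h1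
  have h3 : 0 ≤ x / π := by positivity
  nlinarith [mul_nonneg h3 (sub_nonneg.2 h2), mul_nonneg h3 h3]

lemma half_cos_le {x : ℝ} (h0 : 0 < x) (h1 : x < 2 * π) : x / 2 * cos (x / 2) ≤ sin (x / 2) := by
  have := bt_le_one (t := x / 2) (by linarith) (by linarith)
  rw [bt_eq (by linarith), div_le_one (sin_pos_of_pos_of_lt_pi (by linarith) (by linarith))] at this
  exact this

lemma p_deriv (μ x : ℝ) : HasDerivAt (fun x => μ * (x * sin (x / 2))) (μ * (sin (x / 2) + x / 2 * cos (x / 2))) x := by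
  refine (((hasDerivAt_id x).mul (((hasDerivAt_id x).div_const 2).sin)).const_mul μ).congr_deriv ?_
  simp only [id]; ring

lemma basics (n : ℕ) (hn : (n : ℝ) = 68533) : 0 < n ∧ (0 : ℝ) < 2 * π / n ∧ 2 * π / n ≤ 0.001 ∧ n * (2 * π / n / 2) = π := by
  have hpi := pi_pos
  have hpu := pi_lt_d20
  have h0 : (0 : ℝ) < n := by rw [hn]; norm_num
  refine ⟨by exact_mod_cast h0, by positivity, ?_, by field_simp⟩
  rw [hn, div_le_iff₀ (by norm_num)]; linarith

/-- passing from the main arc to the full integral -/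
lemma from_main (n : ℕ) (hn : (n : ℝ) = 68533) {V W : ℝ → ℝ} (hV : Continuous V) (hW : Continuous W)
    (hW1 : ∀ x, 0 ≤ x → x ≤ 2 * π / 86616 → (x / π) ^ 3 ≤ W x) (hW0 : ∀ x, 0 ≤ x → x ≤ 2 * π / n → 0 ≤ W x)
    {A κ : ℝ} (hA : 0 ≤ A) (hVA : ∀ x, |V x| ≤ A) (hκ : A * 0.00000000000000000001 < κ)
    (hmain : κ * ∫ x in (0 : ℝ)..(2 * π / n), S n x * W x ≤ ∫ x in (0 : ℝ)..(2 * π / n), S n x * V x) :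
    0 < ∫ x in (0 : ℝ)..π, S n x * V x := by
  have h1 := weight_lower n hn hW hW1 hW0
  have h2 := tail_bd n hn hA hVA
  have hc : Continuous fun x => S n x * V x := (S_continuous n).mul hV
  rw [← intervalIntegral.integral_add_adjacent_intervals (hc.intervalIntegrable 0 (2 * π / n)) (hc.intervalIntegrable (2 * π / n) π)]
  have h3 := neg_le_of_abs_le h2
  have h4 : 0 < π * exp (0.19 * n) := mul_pos pi_pos (exp_pos _)
  have h5 : 0 < ∫ x in (0 : ℝ)..(2 * π / n), S n x * W x := by
    by_contra hcon
    push Not at hcon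
    linarith
  have h6 := mul_le_mul_of_nonneg_left h1 hA
  have h7 := mul_lt_mul_of_pos_right hκ h5
  linarith

lemma C1_num1 {s : ℝ} (h' : -1/2 ≤ s) : (-(π * s / 2)) ^ 3 / 6 ≤ 0.3324 * s ^ 2 := by
  have hpi := pi_pos
  have hpu := pi_lt_d20
  have e : (-(π * s / 2)) ^ 3 / 6 = (π ^ 3 / 48 * (-s)) * s ^ 2 := by ring
  rw [e]
  have hp3 : π ^ 3 ≤ 3.1416 ^ 3 := pow_le_pow_left₀ hpi.le (by linarith) 3
  have h0 : 0 ≤ π ^ 3 := by positivity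
  have h1 : π ^ 3 * (-s) ≤ π ^ 3 * (1 / 2) := mul_le_mul_of_nonneg_left (by linarith) h0
  apply mul_le_mul_of_nonneg_right _ (sq_nonneg s)
  norm_num at hp3 ⊢
  linarith

lemma C1_num2 {μ Q Y n : ℝ} (hμ : μ * Q = π / 2) (Q2 : Q ≤ 3.231 * n) (hyy : 6.17 ≤ Y) (hμ0 : 0 < μ) (hnp : 0 < n) (s : ℝ) :
    0.3324 * s ^ 2 ≤ μ * (Y * n / 9 * s ^ 2) := by
  have hpl := pi_gt_d20
  have k : 0.485 ≤ μ * n := by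
    have := mul_le_mul_of_nonneg_left Q2 hμ0.le
    linarith
  have : (0.485 : ℝ) * 6.17 ≤ (μ * n) * Y := mul_le_mul k hyy (by norm_num) (by positivity)
  have h2 := mul_le_mul_of_nonneg_right this (sq_nonneg s)
  have h3 := sq_nonneg s
  norm_num at h2 ⊢
  linarith

lemma C1_pt (n : ℕ) (hn : (n : ℝ) = 68533) {x s μ : ℝ} (hx0 : 0 < x) (hx1 : x < 2 * π / n)
    (hs : x = 2 * π / 86616 * (1 + s)) (hμ : μ * Qn n (2 * π / 86616) = π / 2) (hμ0 : 0 < μ) :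
    μ * (Bn n x + 2.4) ≤ cos (21654 * x) := by
  obtain ⟨B0, Q1, Q2⟩ := num1 n hn
  have hpi := pi_pos
  have hpl := pi_gt_d20
  have hpu := pi_lt_d20
  obtain ⟨hn0, hb0, hb1, hb2⟩ := basics n hn
  have e1 : cos (21654 * x) = -sin (π * s / 2) := by
    rw [hs, show 21654 * (2 * π / 86616 * (1 + s)) = π * s / 2 + π / 2 by ring, cos_add_pi_div_two]
  have hxπ : n * (x / 2) < π := by rw [← hb2]; have : (0 : ℝ) < n := by exact_mod_cast hn0
                                   gcongr
  have ht := Bn_tangent (θ := 2 * π / 86616) (n := n) (by positivity) (by rw [hn]; linarith) hs hx0 hxπ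
  have hs1 : -1 < s := by
    by_contra hcon; push Not at hcon
    have : x ≤ 0 := by rw [hs]; apply mul_nonpos_of_nonneg_of_nonpos <;> [positivity; linarith]
    linarith
  rw [e1]
  generalize hQ : Qn n (2 * π / 86616) = Q at *
  generalize Bn n (2 * π / 86616) = B at *
  have hy : (n * (2 * π / 86616 / 2)) ^ 2 * n / 9 = (68533 * π / 86616) ^ 2 * n / 9 := by rw [hn]; ring
  rw [hy] at ht
  have hyy : 6.17 ≤ (68533 * π / 86616) ^ 2 := by
    have : 2.485 ≤ 68533 * π / 86616 := by linarith
    nlinarith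
  generalize (68533 * π / 86616) ^ 2 = Y at *
  have hnp : (0 : ℝ) < n := by exact_mod_cast hn0
  have ht' : Bn n x + 2.4 ≤ -(Q * s) - Y * n / 9 * s ^ 2 := by linarith
  have ht'' := mul_le_mul_of_nonneg_left ht' hμ0.le
  have ht3 : μ * (-(Q * s) - Y * n / 9 * s ^ 2) = -(π * s / 2) - μ * (Y * n / 9 * s ^ 2) := by
    linear_combination (-s) * hμ
  rcases le_or_gt 0 s with h | h
  · have h1 := sin_le (x := π * s / 2) (by positivity)
    have : 0 ≤ μ * (Y * n / 9 * s ^ 2) := by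
      have : 0 ≤ Y := by linarith
      positivity
    linarith
  · rcases le_or_gt (-1/2) s with h' | h'
    · have hps : 0 ≤ -(π * s / 2) := by
        have := mul_nonneg hpi.le (neg_nonneg.2 h.le)
        linarith
      have h1 := s3 hps
      rw [sin_neg] at h1
      have k3 := C1_num1 h'
      have k2 := C1_num2 hμ Q2 hyy hμ0 hnp s
      linarith
    · have h1 := Bn_le_n hx0 hxπ
      have k : μ * n ≤ 0.487 := by
        have := mul_le_mul_of_nonneg_left Q1 hμ0.le
        linarith
      have k1 : Bn n x + 2.4 ≤ n * 1.001 := by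
        rw [hn] at h1 ⊢; linarith
      have k2 := mul_le_mul_of_nonneg_left k1 hμ0.le
      have hq : π / 6 ≤ -(π * s / 2) := by
        have := mul_le_mul_of_nonneg_left h'.le hpi.le
        linarith
      have hq2 : -(π * s / 2) ≤ π / 2 := by
        have := mul_le_mul_of_nonneg_left hs1.le hpi.le
        linarith
      have k3 : sin (π / 6) ≤ sin (-(π * s / 2)) :=
        sin_le_sin_of_le_of_le_pi_div_two (by linarith) hq2 hq
      rw [sin_pi_div_six, sin_neg] at k3
      linarith

lemma C1 (n : ℕ) (hn : (n : ℝ) = 68533) : 0 < ∫ x in (0 : ℝ)..π, S n x * (sin (x / 2) * cos (21654 * x)) := by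
  obtain ⟨B0, Q1, Q2⟩ := num1 n hn
  have hpi := pi_pos
  have hpl := pi_gt_d20
  have hpu := pi_lt_d20
  obtain ⟨hn0, hb0, hb1, hb2⟩ := basics n hn
  have hnp : (0 : ℝ) < n := by exact_mod_cast hn0
  have hQ0 : 0 < Qn n (2 * π / 86616) := lt_of_lt_of_le (by positivity) Q1
  obtain ⟨μ, hμd⟩ : ∃ μ, μ = π / 2 / Qn n (2 * π / 86616) := ⟨_, rfl⟩
  have hμ : μ * Qn n (2 * π / 86616) = π / 2 := by rw [hμd]; exact div_mul_cancel₀ _ hQ0.ne'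
  have hμ0 : 0 < μ := by rw [hμd]; positivity
  have hμ1 : 0.000001 ≤ μ := by
    rw [hμd, le_div_iff₀ hQ0]
    rw [hn] at Q2
    linarith
  have hA : Continuous fun x => sin (x / 2) := by fun_prop
  refine from_main n hn (V := fun x => sin (x / 2) * cos (21654 * x)) (W := fun x => sin (x / 2)) (by fun_prop) hA
    (fun x h0 h1 => (cube_le h0 (by linarith)).trans (sin_half_ge h0 (by linarith)))
    (fun x h0 h1 => sin_nonneg_of_nonneg_of_le_pi (by linarith) (by linarith)) (A := 1) (κ := 0.4 * μ) (by norm_num)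
    (fun x => by rw [abs_mul]; exact mul_le_one₀ (abs_sin_le_one _) (abs_nonneg _) (abs_cos_le_one _)) (by linarith) ?_
  have key := ibp_ge (n := n) (g := fun x => S n x * (sin (x / 2) * cos (21654 * x)) - 0.4 * μ * (S n x * sin (x / 2)))
    (p := fun x => μ * (x * sin (x / 2))) (p' := fun x => μ * (sin (x / 2) + x / 2 * cos (x / 2))) (e := 2 * π / n)
    hb0.le hb2.le hn0 (((S_continuous n).mul (by fun_prop)).sub (continuous_const.mul ((S_continuous n).mul hA))) (by fun_prop)
    (fun x _ _ => p_deriv μ x) (fun x hx0 hx1 => by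
      have hxπ : n * (x / 2) < π := by
        rw [← hb2]; gcongr
      have hS := S_pos n hx0 hxπ
      have h1 := C1_pt n hn (s := x / (2 * π / 86616) - 1) hx0 hx1 (by field_simp; ring) hμ hμ0
      have h2 := half_cos_le hx0 (by linarith)
      have h3 : 0 < sin (x / 2) := sin_pos_of_pos_of_lt_pi (by linarith) (by linarith)
      have e : μ * (x * sin (x / 2)) * (S n x * Bn n x / x) = S n x * (sin (x / 2) * (μ * Bn n x)) := by field_simp
      rw [e]
      have h4 : S n x * (μ * (sin (x / 2) + x / 2 * cos (x / 2))) ≤ S n x * (μ * (sin (x / 2) + sin (x / 2))) := by gcongr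
      have h5 : S n x * (sin (x / 2) * (μ * (Bn n x + 2.4))) ≤ S n x * (sin (x / 2) * cos (21654 * x)) := by gcongr
      linarith)
  rw [S_end hn0, mul_zero, intervalIntegral.integral_sub, intervalIntegral.integral_const_mul] at key
  · linarith
  · exact ((S_continuous n).mul (by fun_prop)).intervalIntegrable _ _
  · exact (continuous_const.mul ((S_continuous n).mul hA)).intervalIntegrable _ _

end QP

namespace QP
open Real Finset

lemma C2_small {s ν Q B R n x : ℝ} (h1 : -0.2 ≤ s) (h2 : s ≤ 0.02) (hν : ν * Q = π / 2) (hν0 : 0 < ν)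
    (hn : 0 < n) (hQ : 3.229 * n ≤ Q) (hR : R ≤ 16.3 * n) (hB : 5.5 ≤ B) (hx : B - Q * s - R * (1 / 1.0404) / 2 * s ^ 2 ≤ x) :
    ν / 2 ≤ sin (π * s / 2) + ν * ((x + 1) * (1 - 5 * s) - 5 * (1 + s)) := by
  have hpi := pi_pos
  have hpu := pi_lt_d20
  have hs2 := sq_nonneg s
  have hR' : R * (1 / 1.0404) / 2 ≤ 2.43 * Q := by
    norm_num at *; linarith
  have h3 : 6.5 - Q * s - 2.43 * Q * s ^ 2 ≤ x + 1 := by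
    have := mul_le_mul_of_nonneg_right hR' hs2
    linarith
  have h4 := mul_le_mul_of_nonneg_right h3 (show 0 ≤ 1 - 5 * s by linarith)
  have h5 := mul_le_mul_of_nonneg_left h4 hν0.le
  have h6 : ν * ((6.5 - Q * s - 2.43 * Q * s ^ 2) * (1 - 5 * s)) = ν * (6.5 * (1 - 5 * s)) + π / 2 * (-s + 2.57 * s ^ 2 + 12.15 * s ^ 3) := by
    linear_combination (-s + 2.57 * s ^ 2 + 12.15 * s ^ 3) * hν
  rw [h6] at h5
  have h7 : 0 ≤ ν * (0.75 - 37.5 * s) := mul_nonneg hν0.le (by linarith)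
  rcases le_or_gt 0 s with h | h
  · have k1 := s3 (x := π * s / 2) (by positivity)
    have k2 : (π * s / 2) ^ 3 / 6 ≤ π / 2 * (2.57 * s ^ 2) := by
      have e : (π * s / 2) ^ 3 / 6 = π / 2 * (π ^ 2 * s / 24 * s ^ 2) := by ring
      rw [e]
      have : π ^ 2 ≤ 4 ^ 2 := pow_le_pow_left₀ hpi.le (by linarith) 2
      have k : π ^ 2 * s ≤ 4 ^ 2 * s := mul_le_mul_of_nonneg_right this h
      apply mul_le_mul_of_nonneg_left _ (by positivity)
      apply mul_le_mul_of_nonneg_right _ hs2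
      linarith
    have k3 : 0 ≤ π / 2 * (12.15 * s ^ 3) := by positivity
    linarith
  · have k1 := sin_le (x := -(π * s / 2)) (by have := mul_nonneg hpi.le (neg_nonneg.2 h.le); linarith)
    rw [sin_neg] at k1
    have k2 : 0 ≤ π / 2 * ((2.57 + 12.15 * s) * s ^ 2) := by
      have : 0 ≤ 2.57 + 12.15 * s := by linarith
      positivity
    have k3 : 0 ≤ ν * (-s) := mul_nonneg hν0.le (by linarith)
    linarith

lemma C2_large {s ν Q B R n x B8 : ℝ} (h1 : -1 < s) (h2 : s < -0.2) (hν : ν * Q = π / 2) (hν0 : 0 < ν) (hν1 : ν ≤ 0.001)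
    (hQ : 3.229 * n ≤ Q) (hQ' : Q ≤ 3.23 * n) (hn : 0 < n) (hR : R ≤ 16.3 * n) (hB : 5.5 ≤ B)
    (hB8 : B - Q * (-0.2) - R * (1 / 1.0404) / 2 * (-0.2) ^ 2 ≤ B8)
    (hx : (1 - (1 + s) / 0.8) * n + (1 + s) / 0.8 * B8 ≤ x) :
    ν / 2 ≤ sin (π * s / 2) + ν * ((x + 1) * (1 - 5 * s) - 5 * (1 + s)) := by
  have hpi := pi_pos
  have hpl := pi_gt_d20
  have hpu := pi_lt_d20
  have h3 : 0.3319 * n ≤ B8 := by norm_num at *; linarith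
  have h4 : (1 + s) / 0.8 * (0.3319 * n) ≤ (1 + s) / 0.8 * B8 :=
    mul_le_mul_of_nonneg_left h3 (by norm_num; linarith)
  have h5 : n * (0.1648 - 0.8351 * s) ≤ x := by
    have k1 := mul_nonneg hn.le (show 0 ≤ -s by linarith)
    norm_num at *; linarith
  have h6 := mul_le_mul_of_nonneg_right h5 (show 0 ≤ 1 - 5 * s by linarith)
  have h7 := mul_le_mul_of_nonneg_left h6 hν0.le
  have k : 0.4862 ≤ ν * n := by
    have := mul_le_mul_of_nonneg_left hQ' hν0.le
    linarith
  have k0 : 0 ≤ (0.1648 - 0.8351 * s) * (1 - 5 * s) := mul_nonneg (by linarith) (by linarith)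
  have h8 := mul_le_mul_of_nonneg_right k k0
  have k1 := sin_le (x := -(π * s / 2)) (by have := mul_nonneg hpi.le (show 0 ≤ -s by linarith); linarith)
  rw [sin_neg] at k1
  have k2 : π * (-s) ≤ 3.1416 * (-s) := mul_le_mul_of_nonneg_right (by linarith) (by linarith)
  have k3 : 0 ≤ ν * (-0.2 - s) := mul_nonneg hν0.le (by linarith)
  have k4 : 0 ≤ (s + 0.188) ^ 2 := sq_nonneg _
  have e : ν * (n * (0.1648 - 0.8351 * s) * (1 - 5 * s)) = ν * n * ((0.1648 - 0.8351 * s) * (1 - 5 * s)) := by ring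
  rw [e] at h7
  norm_num at *
  linarith

lemma C2_pt (n : ℕ) (hn : (n : ℝ) = 68533) {x s ν : ℝ} (hx0 : 0 < x) (hx1 : s ≤ 0.02)
    (hs : x = 2 * π / 86620 * (1 + s)) (hν : ν * Qn n (2 * π / 86620) = π / 2) (hν0 : 0 < ν) (hν1 : ν ≤ 0.001) :
    ν / 2 ≤ sin (π * s / 2) + ν * ((Bn n x + 1) * (1 - 5 * s) - 5 * (1 + s)) := by
  obtain ⟨B0, B1, Q1, Q2⟩ := num2 n hn
  obtain ⟨_, R1⟩ := num3 n hn
  have hpi := pi_pos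
  have hpl := pi_gt_d20
  have hpu := pi_lt_d20
  have hnp : (0 : ℝ) < n := by rw [hn]; norm_num
  have hs1 : -1 < s := by
    by_contra hcon; push Not at hcon
    have : x ≤ 0 := by rw [hs]; apply mul_nonpos_of_nonneg_of_nonpos <;> [positivity; linarith]
    linarith
  have hT : n * (1.02 * (2 * π / 86620) / 2) < π := by rw [hn]; linarith
  have hrat : (2 * π / 86620 / (1.02 * (2 * π / 86620))) ^ 2 = 1 / 1.0404 := by field_simp; norm_num
  have key : ∀ s', s' ≤ 0.02 → -1 < s' → Bn n (2 * π / 86620) - Qn n (2 * π / 86620) * s' - Rn n (1.02 * (2 * π / 86620)) * (1 / 1.0404) / 2 * s' ^ 2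
      ≤ Bn n (2 * π / 86620 * (1 + s')) := by
    intro s' h h'
    have hp : 0 < 1 + s' := by linarith
    have := Bn_lower (n := n) (θ := 2 * π / 86620) (T := 1.02 * (2 * π / 86620)) (s := s') (by positivity) rfl (by positivity) (by positivity) hT
      (by linarith) (by
        rw [mul_comm]
        exact mul_le_mul_of_nonneg_right (by linarith) (by positivity))
    rw [hrat] at this
    exact this
  rcases le_or_gt (-0.2) s with h | h
  · rw [hs]
    exact C2_small h hx1 hν hν0 hnp Q1 R1 B0 (key s hx1 hs1)
  · have k8 := key (-0.2) (by norm_num) (by norm_num)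
    have hc := Bn_chord (n := n) (θ := 2 * π / 86620 * (1 + -0.2)) (l := (1 + s) / 0.8) (by norm_num; positivity)
      (by rw [hn]; linarith) (by apply div_nonneg <;> linarith) (by rw [div_le_one (by norm_num)]; linarith)
    have e : (1 + s) / 0.8 * (2 * π / 86620 * (1 + -0.2)) = x := by rw [hs]; ring
    rw [e] at hc
    exact C2_large hs1 h hν hν0 hν1 Q1 Q2 hnp R1 B0 k8 hc

/-- boundary bound -/
lemma pow_anti {n N : ℕ} {u e : ℝ} (hu : 0 < u) (hue : u ≤ e) (he : n * (e / 2) < π) (hB : Bn n u ≤ -N) :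
    ∀ x, u ≤ x → x ≤ e → e ^ N * S n e ≤ x ^ N * S n x := by
  intro x h1 h2
  have := inc (f := fun x => -(x ^ N * S n x)) (f' := fun x => -(x ^ N * S n x * (N + Bn n x) / x)) h2
    (((continuous_pow N).mul (S_continuous n)).neg.continuousOn)
    (fun y hy => by
      have hy0 : 0 < y := by linarith [hy.1]
      have hyπ : n * (y / 2) < π := by
        refine lt_of_le_of_lt ?_ he
        have := hy.2
        gcongr
      refine (((hasDerivAt_pow N y).mul (S_hasDeriv n hy0 hyπ)).neg).congr_deriv ?_
      rcases N with _ | k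
      · simp
      · simp only [Nat.add_sub_cancel, pow_succ]
        field_simp)
    (fun y hy => by
      have hy0 : 0 < y := by linarith [hy.1]
      have hyπ : n * (y / 2) < π := by
        refine lt_of_le_of_lt ?_ he
        have := hy.2
        gcongr
      have hS := S_pos n hy0 hyπ
      have hb := Bn_anti (n := n) hu (show u ≤ y by linarith [hy.1]) hyπ
      have : 0 ≤ y ^ N * S n y * (-(N + Bn n y)) / y := by
        apply div_nonneg _ hy0.le
        apply mul_nonneg (by positivity)
        linarith
      calc 0 ≤ _ := this
        _ = _ := by ring)
  simpa using this

end QP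

namespace QP
open Real Finset

lemma bdry (n : ℕ) (hn : (n : ℝ) = 68533) {t : ℝ} (ht : t = 2 * π / 86620) :
    0.9 * (1.02 * t * (sin (1.02 * t / 2) * S n (1.02 * t))) ≤ 0.25 * ∫ x in (0 : ℝ)..(1.02 * t), S n x * sin (x / 2) := by
  obtain ⟨B0, B1, Q1, Q2⟩ := num2 n hn
  have hpi := pi_pos
  have hpl := pi_gt_d20
  have hpu := pi_lt_d20
  obtain ⟨hn0, hb0, hb1, hb2⟩ := basics n hn
  have hnp : (0 : ℝ) < n := by exact_mod_cast hn0
  have ht0 : 0 < t := by rw [ht]; positivity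
  have ht1 : t < 0.001 := by rw [ht]; linarith
  have htπ : n * (1.02 * t / 2) < π := by rw [hn, ht]; linarith
  have hB : Bn n (1.005 * t) ≤ -((1000 : ℕ) : ℝ) := by
    have := Bn_tangent (n := n) (θ := t) (s := 0.005) ht0 (by rw [hn, ht]; linarith) rfl (by norm_num; exact ht0) (by rw [hn, ht]; linarith)
    rw [← ht] at B1 Q1
    rw [show t * (1 + 0.005) = 1.005 * t by ring] at this
    have k : 0 ≤ (n * (t / 2)) ^ 2 * n / 9 * (0.005 : ℝ) ^ 2 := by positivity
    have k2 : 3.229 * 68533 ≤ Qn n t := by rw [← hn]; exact Q1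
    push_cast
    linarith
  have hp := pow_anti (n := n) (N := 1000) (u := 1.005 * t) (e := 1.02 * t) (by linarith) (by linarith) htπ hB
  have hSe : 0 < S n (1.02 * t) := S_pos n (by linarith) htπ
  have hb : ∀ x, 1.005 * t ≤ x → x ≤ 1.01 * t → 1200 * S n (1.02 * t) * (1.005 * t / π) ≤ S n x * sin (x / 2) := by
    intro x h1 h2
    have hx0 : 0 < x := by linarith
    have k1 := hp x h1 (by linarith)
    have k2 : 1200 * S n (1.02 * t) ≤ S n x := by
      have hc : (1200 : ℝ) ≤ (102 / 101) ^ 1000 := by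
        calc (1200 : ℝ) ≤ ((102 / 101) ^ 100) ^ 10 := by
              have : (2.6 : ℝ) ≤ (102 / 101) ^ 100 := by norm_num
              calc (1200 : ℝ) ≤ 2.6 ^ 10 := by norm_num
                _ ≤ _ := pow_le_pow_left₀ (by norm_num) this 10
          _ = (102 / 101) ^ 1000 := by rw [← pow_mul]
      generalize 1000 = N at *
      have k3 : x ^ N * (1200 * S n (1.02 * t)) ≤ x ^ N * S n x := by
        refine le_trans ?_ k1
        have k4 : x ^ N * (102 / 101) ^ N ≤ (1.02 * t) ^ N := by
          rw [← mul_pow]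
          apply pow_le_pow_left₀ (by positivity)
          linarith
        have k5 : x ^ N * 1200 ≤ x ^ N * (102 / 101) ^ N := by gcongr
        calc x ^ N * (1200 * S n (1.02 * t)) = x ^ N * 1200 * S n (1.02 * t) := by ring
          _ ≤ (1.02 * t) ^ N * S n (1.02 * t) := mul_le_mul_of_nonneg_right (k5.trans k4) hSe.le
      exact le_of_mul_le_mul_left k3 (by positivity)
    have k6 := sin_half_ge hx0.le (by linarith)
    have k7 : 1.005 * t / π ≤ x / π := by gcongr
    exact mul_le_mul k2 (k7.trans k6) (by positivity) (le_trans (by positivity) k2)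
  have hc : Continuous fun x => S n x * sin (x / 2) := (S_continuous n).mul (by fun_prop)
  have hnn : ∀ x, 0 ≤ x → x ≤ 1.02 * t → 0 ≤ S n x * sin (x / 2) := fun x h1 h2 => by
    apply mul_nonneg
    · apply S_nonneg n h1
      refine le_trans ?_ htπ.le
      gcongr
    · exact sin_nonneg_of_nonneg_of_le_pi (by linarith) (by linarith)
  have i1 : 0 ≤ ∫ x in (0 : ℝ)..(1.005 * t), S n x * sin (x / 2) :=
    intervalIntegral.integral_nonneg (by linarith) fun x hx => hnn x hx.1 (by linarith [hx.2])
  have i3 : 0 ≤ ∫ x in (1.01 * t)..(1.02 * t), S n x * sin (x / 2) :=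
    intervalIntegral.integral_nonneg (by linarith) fun x hx => hnn x (by linarith [hx.1]) hx.2
  have i2 : (1.01 * t - 1.005 * t) * (1200 * S n (1.02 * t) * (1.005 * t / π)) ≤ ∫ x in (1.005 * t)..(1.01 * t), S n x * sin (x / 2) := by
    have := intervalIntegral.integral_mono_on (a := 1.005 * t) (b := 1.01 * t) (f := fun _ => 1200 * S n (1.02 * t) * (1.005 * t / π))
      (g := fun x => S n x * sin (x / 2)) (μ := MeasureTheory.volume) (by linarith) (continuous_const.intervalIntegrable _ _) (hc.intervalIntegrable _ _) (fun x hx => hb x hx.1 hx.2)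
    rw [intervalIntegral.integral_const, smul_eq_mul] at this
    exact this
  have isum := intervalIntegral.integral_add_adjacent_intervals (hc.intervalIntegrable (μ := MeasureTheory.volume) 0 (1.005 * t)) (hc.intervalIntegrable (1.005 * t) (1.01 * t))
  have isum2 := intervalIntegral.integral_add_adjacent_intervals (hc.intervalIntegrable (μ := MeasureTheory.volume) 0 (1.01 * t)) (hc.intervalIntegrable (1.01 * t) (1.02 * t))
  have hs : sin (1.02 * t / 2) ≤ 1.02 * t / 2 := sin_le (by linarith)
  have f1 : 0.9 * (1.02 * t * (sin (1.02 * t / 2) * S n (1.02 * t))) ≤ 0.9 * (1.02 * t * (1.02 * t / 2 * S n (1.02 * t))) := by gcongr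
  have f2 : 0.9 * (1.02 * t * (1.02 * t / 2 * S n (1.02 * t))) ≤ 0.25 * ((1.01 * t - 1.005 * t) * (1200 * S n (1.02 * t) * (1.005 * t / π))) := by
    have e1 : 0.9 * (1.02 * t * (1.02 * t / 2 * S n (1.02 * t))) = 0.46818 * (t ^ 2 * S n (1.02 * t)) := by ring
    have e2 : 0.25 * ((1.01 * t - 1.005 * t) * (1200 * S n (1.02 * t) * (1.005 * t / π))) = 1.5075 / π * (t ^ 2 * S n (1.02 * t)) := by ring
    rw [e1, e2]
    apply mul_le_mul_of_nonneg_right _ (by positivity)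
    rw [le_div_iff₀ hpi]; linarith
  linarith

lemma p_deriv2 (ν t x : ℝ) (ht : t ≠ 0) : HasDerivAt (fun x => -(ν * (x * (6 - 5 * (x / t)) * sin (x / 2))))
    (-(ν * ((6 - 10 * (x / t)) * sin (x / 2) + (6 - 5 * (x / t)) * (x / 2 * cos (x / 2))))) x := by
  refine (((((hasDerivAt_id x).mul ((((hasDerivAt_id x).div_const t).const_mul 5).const_sub 6)).mul
    (((hasDerivAt_id x).div_const 2).sin)).const_mul ν).neg).congr_deriv ?_
  simp only [id, Pi.mul_apply]; field_simp; ring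

lemma C2_left (n : ℕ) (hn : (n : ℝ) = 68533) {t ν : ℝ} (ht : t = 2 * π / 86620) (hν : ν * Qn n t = π / 2)
    (hν0 : 0 < ν) (hν1 : ν ≤ 0.001) :
    0.25 * ν * ∫ x in (0 : ℝ)..(1.02 * t), S n x * sin (x / 2) ≤ ∫ x in (0 : ℝ)..(1.02 * t), S n x * (sin (x / 2) * sin (π * (x / t - 1) / 2)) := by
  have hpi := pi_pos
  have hpl := pi_gt_d20
  have hpu := pi_lt_d20
  obtain ⟨hn0, hb0, hb1, hb2⟩ := basics n hn
  have hnp : (0 : ℝ) < n := by exact_mod_cast hn0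
  have ht0 : 0 < t := by rw [ht]; positivity
  have ht1 : t < 0.001 := by rw [ht]; linarith
  have htπ : n * (1.02 * t / 2) < π := by rw [hn, ht]; linarith
  have hb := bdry n hn ht
  have hA : Continuous fun x => sin (x / 2) := by fun_prop
  have key := ibp_ge (n := n) (g := fun x => S n x * (sin (x / 2) * sin (π * (x / t - 1) / 2)) - ν / 2 * (S n x * sin (x / 2)))
    (p := fun x => -(ν * (x * (6 - 5 * (x / t)) * sin (x / 2))))
    (p' := fun x => -(ν * ((6 - 10 * (x / t)) * sin (x / 2) + (6 - 5 * (x / t)) * (x / 2 * cos (x / 2))))) (e := 1.02 * t)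
    (by linarith) htπ.le hn0 (((S_continuous n).mul (by fun_prop)).sub (continuous_const.mul ((S_continuous n).mul hA))) (by fun_prop)
    (fun x _ _ => p_deriv2 ν t x ht0.ne') (fun x hx0 hx1 => by
      have hxπ : n * (x / 2) < π := by
        refine lt_trans ?_ htπ; gcongr
      have hS := S_pos n hx0 hxπ
      have hxt : x / t < 1.02 := by rw [div_lt_iff₀ ht0]; exact hx1
      have h1 := C2_pt n hn (s := x / t - 1) hx0 (by linarith) (by rw [← ht]; field_simp; ring) (by rw [← ht]; exact hν) hν0 hν1
      have h3 : 0 < sin (x / 2) := sin_pos_of_pos_of_lt_pi (by linarith) (by linarith)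
      have h2 : 0 < cos (x / 2) := cos_pos_of_mem_Ioo ⟨by linarith, by linarith⟩
      have e : -(ν * (x * (6 - 5 * (x / t)) * sin (x / 2))) * (S n x * Bn n x / x) = -(S n x * (sin (x / 2) * (ν * (6 - 5 * (x / t)) * Bn n x))) := by
        generalize x / t = z
        field_simp
      rw [e]
      have h4 : 0 ≤ S n x * (ν * ((6 - 5 * (x / t)) * (x / 2 * cos (x / 2)))) := by
        have : 0 ≤ 6 - 5 * (x / t) := by linarith
        positivity
      have h5 := mul_le_mul_of_nonneg_left h1 (mul_pos hS h3).le
      generalize x / t = z at *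
      linarith)
  rw [intervalIntegral.integral_sub, intervalIntegral.integral_const_mul] at key
  · have e : 1.02 * t / t = 1.02 := by field_simp
    rw [e] at key
    have := mul_le_mul_of_nonneg_left hb hν0.le
    linarith
  · exact ((S_continuous n).mul (by fun_prop)).intervalIntegrable _ _
  · exact (continuous_const.mul ((S_continuous n).mul hA)).intervalIntegrable _ _

lemma C2 (n : ℕ) (hn : (n : ℝ) = 68533) : 0 < ∫ x in (0 : ℝ)..π, S n x * -(sin (x / 2) * cos (21655 * x)) := by
  obtain ⟨_, _, Q1, Q2⟩ := num2 n hn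
  have hpi := pi_pos
  have hpl := pi_gt_d20
  have hpu := pi_lt_d20
  obtain ⟨hn0, hb0, hb1, hb2⟩ := basics n hn
  have hnp : (0 : ℝ) < n := by exact_mod_cast hn0
  obtain ⟨t, ht⟩ : ∃ t, t = 2 * π / 86620 := ⟨_, rfl⟩
  rw [← ht] at Q1 Q2
  have ht0 : 0 < t := by rw [ht]; positivity
  have hQ0 : 0 < Qn n t := lt_of_lt_of_le (by positivity) Q1
  obtain ⟨ν, hνd⟩ : ∃ ν, ν = π / 2 / Qn n t := ⟨_, rfl⟩
  have hν : ν * Qn n t = π / 2 := by rw [hνd]; exact div_mul_cancel₀ _ hQ0.ne'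
  have hν0 : 0 < ν := by rw [hνd]; positivity
  have hν1 : 0.000001 ≤ ν := by
    rw [hνd, le_div_iff₀ hQ0]
    rw [hn] at Q2
    linarith
  have hν2 : ν ≤ 0.001 := by
    rw [hνd, div_le_iff₀ hQ0]
    rw [hn] at Q1
    linarith
  have hA : Continuous fun x => sin (x / 2) := by fun_prop
  have hVe : ∀ x, -(sin (x / 2) * cos (21655 * x)) = sin (x / 2) * sin (π * (x / t - 1) / 2) := by
    intro x
    have : 21655 * x = π * (x / t - 1) / 2 + π / 2 := by rw [ht]; field_simp; ring
    rw [this, cos_add_pi_div_two]; ring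
  simp only [hVe]
  refine from_main n hn (V := fun x => sin (x / 2) * sin (π * (x / t - 1) / 2)) (W := fun x => sin (x / 2)) (by fun_prop) hA
    (fun x h0 h1 => (cube_le h0 (by linarith)).trans (sin_half_ge h0 (by linarith)))
    (fun x h0 h1 => sin_nonneg_of_nonneg_of_le_pi (by linarith) (by linarith)) (A := 1) (κ := 0.25 * ν) (by norm_num)
    (fun x => by rw [abs_mul]; exact mul_le_one₀ (abs_sin_le_one _) (abs_nonneg _) (abs_sin_le_one _)) (by linarith) ?_
  have h1 := C2_left n hn ht hν hν0 hν2
  have hteb : 1.02 * t ≤ 2 * π / n := by rw [hn, ht]; linarith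
  have hbt : 2 * π / n ≤ 1.5 * t := by rw [hn, ht]; linarith
  have c1 : Continuous fun x => S n x * sin (x / 2) := (S_continuous n).mul hA
  have c2 : Continuous fun x => S n x * (sin (x / 2) * sin (π * (x / t - 1) / 2)) := (S_continuous n).mul (by fun_prop)
  have h2 : 0.25 * ν * ∫ x in (1.02 * t)..(2 * π / n), S n x * sin (x / 2) ≤
      ∫ x in (1.02 * t)..(2 * π / n), S n x * (sin (x / 2) * sin (π * (x / t - 1) / 2)) := by
    rw [← intervalIntegral.integral_const_mul]
    apply intervalIntegral.integral_mono_on hteb ((continuous_const.mul c1).intervalIntegrable _ _) (c2.intervalIntegrable _ _)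
    intro x hx
    have hx0 : 0 < x := by linarith [hx.1]
    have hxb : x ≤ 2 * π / n := hx.2
    have hxt : 1.02 ≤ x / t := by rw [le_div_iff₀ ht0]; exact hx.1
    have hxt2 : x / t ≤ 1.5 := by rw [div_le_iff₀ ht0]; linarith
    have k1 := mul_le_sin (x := π * (x / t - 1) / 2) (by apply div_nonneg _ (by norm_num); apply mul_nonneg hpi.le; linarith)
      (by have := mul_le_mul_of_nonneg_left (show x / t - 1 ≤ 1 by linarith) hpi.le; linarith)
    rw [show 2 / π * (π * (x / t - 1) / 2) = x / t - 1 by generalize x / t = z; field_simp] at k1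
    have hS : 0 ≤ S n x := S_nonneg n hx0.le (by rw [← hb2]; gcongr)
    have h3 : 0 < sin (x / 2) := sin_pos_of_pos_of_lt_pi (by linarith) (by linarith)
    have : 0.25 * ν ≤ sin (π * (x / t - 1) / 2) := by linarith
    have := mul_le_mul_of_nonneg_left this (mul_nonneg hS h3.le)
    show 0.25 * ν * (S n x * sin (x / 2)) ≤ S n x * (sin (x / 2) * sin (π * (x / t - 1) / 2))
    generalize sin (π * (x / t - 1) / 2) = z at *
    generalize sin (x / 2) = y at *
    linarith
  rw [← intervalIntegral.integral_add_adjacent_intervals (c1.intervalIntegrable 0 (1.02 * t)) (c1.intervalIntegrable (1.02 * t) _),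
    ← intervalIntegral.integral_add_adjacent_intervals (c2.intervalIntegrable 0 (1.02 * t)) (c2.intervalIntegrable (1.02 * t) _)]
  linarith

end QP

namespace QP
open Real Finset

lemma sinm_nonneg (n : ℕ) (hn : (n : ℝ) = 68533) {j x : ℝ} (hj0 : 0 ≤ j) (hj : j ≤ 34266.5) (h0 : 0 ≤ x) (h1 : x ≤ 2 * π / n) :
    0 ≤ sin (j * x) := by
  have hpi := pi_pos
  apply sin_nonneg_of_nonneg_of_le_pi (by positivity)
  have : j * x ≤ 34266.5 * (2 * π / n) := mul_le_mul hj h1 h0 (by norm_num)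
  rw [hn] at this
  linarith

lemma sinm_ge {j x : ℝ} (hj0 : 0.5 ≤ j) (hj : j ≤ 34266.5) (h0 : 0 ≤ x) (h1 : x ≤ 2 * π / 86616) :
    x / π ≤ sin (j * x) := by
  have hpi := pi_pos
  have hpl := pi_gt_d20
  have hpu := pi_lt_d20
  have hz : j * x ≤ 34266.5 * (2 * π / 86616) := mul_le_mul hj h1 h0 (by norm_num)
  have hz2 : 0.5 * x ≤ j * x := mul_le_mul_of_nonneg_right hj0 h0
  rw [div_le_iff₀ hpi]
  rcases le_or_gt (j * x) (π / 2) with h | h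
  · have := mul_le_sin (x := j * x) (by positivity) h
    rw [div_mul_eq_mul_div, div_le_iff₀ hpi] at this
    linarith
  · have := mul_le_sin (x := π - j * x) (by linarith) (by linarith)
    rw [sin_pi_sub, div_mul_eq_mul_div, div_le_iff₀ hpi] at this
    linarith

lemma D_pos (n : ℕ) (hn : (n : ℝ) = 68533) {j : ℝ} (hj0 : 0.5 ≤ j) (hj : j ≤ 34266.5) : 0 < F n j := by
  unfold F
  have hc : Continuous fun x => sin (j * x) := by fun_prop
  have hpu := pi_lt_d20
  have hpl := pi_gt_d20
  exact from_main n hn (V := fun x => sin (j * x)) (W := fun x => sin (j * x)) hc hc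
    (fun x h0 h1 => (cube_le h0 (by linarith)).trans (sinm_ge hj0 hj h0 h1))
    (fun x h0 h1 => sinm_nonneg n hn (by linarith) hj h0 h1) (A := 1) (κ := 1) (by norm_num) (fun x => abs_sin_le_one _)
    (by norm_num) (by rw [one_mul])

lemma D_cc (n : ℕ) (hn : (n : ℝ) = 68533) {j : ℝ} (hj0 : 0.5 ≤ j) (hj : j ≤ 34266.5) :
    F n (j + 1) + F n (j - 1) < 2 * F n j := by
  have hc : Continuous fun x => sin (x / 2) ^ 2 * sin (j * x) := by fun_prop
  have hpu := pi_lt_d20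
  have hpl := pi_gt_d20
  have hpi := pi_pos
  have := from_main n hn (V := fun x => sin (x / 2) ^ 2 * sin (j * x)) (W := fun x => sin (x / 2) ^ 2 * sin (j * x)) hc hc
    (fun x h0 h1 => by
      have k1 := sinm_ge hj0 hj h0 h1
      have k2 := sin_half_ge h0 (by linarith)
      have k3 : 0 ≤ x / π := by positivity
      calc (x / π) ^ 3 = (x / π) ^ 2 * (x / π) := by ring
        _ ≤ _ := mul_le_mul (pow_le_pow_left₀ k3 k2 2) k1 k3 (sq_nonneg _))
    (fun x h0 h1 => mul_nonneg (sq_nonneg _) (sinm_nonneg n hn (by linarith) hj h0 h1)) (A := 1) (κ := 1) (by norm_num)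
    (fun x => by
      rw [abs_mul, abs_of_nonneg (sq_nonneg (sin (x / 2)))]
      exact mul_le_one₀ (sin_sq_le_one _) (abs_nonneg _) (abs_sin_le_one _))
    (by norm_num) (by rw [one_mul])
  have hSc := S_continuous n
  have e : 2 * F n j - F n (j + 1) - F n (j - 1) = 4 * ∫ x in (0 : ℝ)..π, S n x * (sin (x / 2) ^ 2 * sin (j * x)) := by
    unfold F
    rw [← intervalIntegral.integral_const_mul, ← intervalIntegral.integral_const_mul, ← intervalIntegral.integral_sub, ← intervalIntegral.integral_sub]
    · congr 1; ext x
      rw [show (j + 1) * x = j * x + x by ring, show (j - 1) * x = j * x - x by ring, sin_add, sin_sub, sin_sq_eq_half_sub,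
        show 2 * (x / 2) = x by ring]
      ring
    all_goals exact Continuous.intervalIntegrable (by fun_prop) _ _
  linarith

lemma F_diff (n : ℕ) (k : ℝ) : F n (k + 1/2) - F n (k - 1/2) = 2 * ∫ x in (0 : ℝ)..π, S n x * (sin (x / 2) * cos (k * x)) := by
  have hSc := S_continuous n
  unfold F
  rw [← intervalIntegral.integral_const_mul, ← intervalIntegral.integral_sub]
  · congr 1; ext x
    rw [show (k + 1/2) * x = k * x + x / 2 by ring, show (k - 1/2) * x = k * x - x / 2 by ring, sin_add, sin_sub]
    ring
  all_goals exact Continuous.intervalIntegrable (by fun_prop) _ _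

lemma conc_max {u : ℕ → ℝ} {k K : ℕ} (hc : ∀ m, m + 1 ≤ K → u (m + 2) + u m < 2 * u (m + 1))
    (h1 : u k < u (k + 1)) (h2 : u (k + 2) < u (k + 1)) : ∀ m, m ≤ K + 1 → m ≠ k + 1 → k + 1 ≤ K → u m < u (k + 1) := by
  intro m hm hmk hkK
  have up : ∀ d, d ≤ k → u (k - d) < u (k - d + 1) := by
    intro d
    induction d with
    | zero => intro _; exact h1
    | succ d ih =>
      intro hd
      have h := ih (by omega)
      have := hc (k - (d + 1)) (by omega)
      rw [show k - (d + 1) + 2 = k - d + 1 by omega, show k - (d + 1) + 1 = k - d by omega] at this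
      rw [show k - (d + 1) + 1 = k - d by omega]
      linarith
  have dn : ∀ d, k + 1 + d ≤ K → u (k + 1 + d + 1) < u (k + 1 + d) := by
    intro d
    induction d with
    | zero => intro _; exact h2
    | succ d ih =>
      intro hd
      have h := ih (by omega)
      have := hc (k + 1 + d) (by omega)
      rw [show k + 1 + (d + 1) = k + 1 + d + 1 by omega]
      linarith
  have up2 : ∀ d, d ≤ k → u (k - d) < u (k + 1) := by
    intro d
    induction d with
    | zero => intro _; exact h1
    | succ d ih =>
      intro hd
      have := up (d + 1) hd
      rw [show k - (d + 1) + 1 = k - d by omega] at this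
      exact this.trans (ih (by omega))
  have dn2 : ∀ d, k + 1 + d ≤ K → u (k + 1 + d + 1) < u (k + 1) := by
    intro d
    induction d with
    | zero => intro _; exact h2
    | succ d ih =>
      intro hd
      exact (dn (d + 1) hd).trans (ih (by omega))
  rcases lt_or_ge m (k + 1) with h | h
  · have := up2 (k - m) (by omega)
    rwa [show k - (k - m) = m by omega] at this
  · have := dn2 (m - k - 2) (by omega)
    rwa [show k + 1 + (m - k - 2) + 1 = m by omega] at this

lemma D_final (n : ℕ) (hn : (n : ℝ) = 68533) (k K : ℕ) (hk : (k : ℝ) = 21653) (hK : (K : ℝ) = 34266) (m : ℕ) (hm : m ≤ K) :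
    0 < F n (m + 1/2) ∧ (m ≠ k + 1 → F n (m + 1/2) < F n (21654.5)) := by
  have hmr : (m : ℝ) ≤ 34266 := by rw [← hK]; exact_mod_cast hm
  have hm0 : (0 : ℝ) ≤ m := Nat.cast_nonneg m
  refine ⟨D_pos n hn (by linarith) (by linarith), fun hne => ?_⟩
  have c1 := C1 n hn
  have c2 := C2 n hn
  have f1 := F_diff n 21654
  have f2 := F_diff n 21655
  have c2' : 0 < -∫ x in (0 : ℝ)..π, S n x * (sin (x / 2) * cos (21655 * x)) := by
    rw [← intervalIntegral.integral_neg]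
    simpa only [mul_neg] using c2
  rw [show (21654 : ℝ) + 1/2 = 21654.5 by norm_num] at f1
  rw [show (21655 : ℝ) - 1/2 = 21654.5 by norm_num] at f2
  have e : ((k + 1 : ℕ) : ℝ) + 1/2 = 21654.5 := by push_cast; rw [hk]; norm_num
  have := conc_max (u := fun m : ℕ => F n (m + 1/2)) (k := k) (K := K)
    (fun p hp => by
      have hpr : (p : ℝ) + 1 ≤ 34266 := by rw [← hK]; exact_mod_cast hp
      have hp0 : (0 : ℝ) ≤ p := Nat.cast_nonneg p
      have := D_cc n hn (j := p + 1 + 1/2) (by linarith) (by linarith)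
      rw [show (p : ℝ) + 1 + 1/2 + 1 = ((p + 2 : ℕ) : ℝ) + 1/2 by push_cast; ring, show (p : ℝ) + 1 + 1/2 - 1 = p + 1/2 by ring,
        show (p : ℝ) + 1 + 1/2 = ((p + 1 : ℕ) : ℝ) + 1/2 by push_cast; ring] at this
      exact this)
    (by
      show F n (k + 1/2) < F n ((k + 1 : ℕ) + 1/2)
      rw [e, hk, show (21653 : ℝ) + 1/2 = 21654 - 1/2 by norm_num]; linarith)
    (by
      show F n ((k + 2 : ℕ) + 1/2) < F n ((k + 1 : ℕ) + 1/2)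
      rw [e]; push_cast
      rw [hk, show (21653 : ℝ) + 2 + 1/2 = 21655 + 1/2 by norm_num]; linarith)
    m (by omega) hne (by
      have : ((k + 1 : ℕ) : ℝ) ≤ K := by push_cast; rw [hk, hK]; norm_num
      exact_mod_cast this)
  simp only [e] at this
  exact this

end QP

namespace QP
open Real Finset

lemma Bn_cont (n : ℕ) {u e : ℝ} (hu : 0 < u) (he : n * (e / 2) < π) : ContinuousOn (Bn n) (Set.Icc u e) := by
  unfold Bn
  apply continuousOn_finsetSum
  intro k hk x hx
  have hx0 : 0 < x := lt_of_lt_of_le hu hx.1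
  have a1 := tk (n := n) hk hx0
  have hxe : n * (x / 2) < π := by
    refine lt_of_le_of_lt ?_ he
    have := hx.2
    gcongr
  have h1 := (bt_hasDeriv a1.1 (lt_of_le_of_lt a1.2 hxe)).continuousAt
  apply ContinuousAt.continuousWithinAt
  exact ContinuousAt.comp (f := fun x : ℝ => ((k : ℝ) + 1) * (x / 2)) (g := bt) h1 (by fun_prop)

lemma mode (n : ℕ) (hn : (n : ℝ) = 68533) : ∃ τ, 2 * π / 86620 ≤ τ ∧ τ ≤ 2 * π / 86616 ∧ Bn n τ = 0 := by
  obtain ⟨B0, _⟩ := num1 n hn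
  obtain ⟨B1, _⟩ := num2 n hn
  have hpi := pi_pos
  have := intermediate_value_Icc' (a := 2 * π / 86620) (b := 2 * π / 86616) (f := Bn n) (by linarith)
    (Bn_cont n (by positivity) (by rw [hn]; linarith))
  obtain ⟨τ, h1, h2⟩ := this (show (0 : ℝ) ∈ _ from ⟨by linarith, by linarith⟩)
  exact ⟨τ, h1.1, h1.2, h2⟩

lemma Bn_left {n : ℕ} {τ x : ℝ} (hτ0 : 0 < τ) (hτ : n * (τ / 2) < π) (hB : Bn n τ = 0) (hx0 : 0 < x) (hx : x ≤ τ) :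
    n * (1 - x / τ) ≤ Bn n x := by
  have := Bn_chord (n := n) (l := x / τ) hτ0 hτ (by positivity) (by rw [div_le_one hτ0]; exact hx)
  rw [hB, div_mul_cancel₀ _ hτ0.ne'] at this
  linarith

lemma Bn_right {n : ℕ} {τ x : ℝ} (hτ0 : 0 < τ) (hB : Bn n τ = 0) (hx : τ ≤ x) (hxπ : n * (x / 2) < π) :
    Bn n x ≤ -(n * (x / τ - 1)) := by
  have hx0 : 0 < x := by linarith
  have := Bn_chord (n := n) (l := τ / x) hx0 hxπ (by positivity) (by rw [div_le_one hx0]; exact hx)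
  rw [div_mul_cancel₀ _ hx0.ne', hB] at this
  have h2 := mul_le_mul_of_nonneg_left this (show 0 ≤ x / τ by positivity)
  have e : x / τ * ((1 - τ / x) * n + τ / x * Bn n x) = n * (x / τ - 1) + Bn n x := by field_simp
  rw [e] at h2
  linarith

lemma Bn_near {n : ℕ} (hn : (n : ℝ) = 68533) {τ x : ℝ} (hτ1 : 2 * π / 86620 ≤ τ) (hτ2 : τ ≤ 2 * π / 86616) (hB : Bn n τ = 0)
    (h1 : 0.99 * τ ≤ x) (h2 : x ≤ 1.01 * τ) : -(3.6 * n * (x / τ - 1) ^ 2) ≤ (x / τ - 1) * Bn n x := by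
  obtain ⟨Q1, _⟩ := num3 n hn
  have hpi := pi_pos
  have hpl := pi_gt_d20
  have hpu := pi_lt_d20
  have hτ0 : 0 < τ := by linarith
  have hnp : (0 : ℝ) < n := by rw [hn]; norm_num
  obtain ⟨T, hT⟩ : ∃ T, T = 1.02 * (2 * π / 86620) := ⟨_, rfl⟩
  rw [← hT] at Q1
  have hTπ : n * (T / 2) < π := by rw [hn, hT]; linarith
  have hTx : x ≤ T := by rw [hT]; linarith
  have hTτ : τ ≤ T := by rw [hT]; linarith
  have hT0 : 0 < T := by linarith
  rcases le_or_gt x τ with h | h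
  · have k := Bn_lip (n := n) (by linarith) h hTτ hTπ
    rw [hB] at k
    have k2 : (τ - x) / T ≤ (τ - x) / τ := by
      apply div_le_div_of_nonneg_left _ hτ0 hTτ; linarith
    have k3 : Qn n T * ((τ - x) / T) ≤ 3.6 * n * ((τ - x) / τ) :=
      mul_le_mul Q1 k2 (div_nonneg (by linarith) hT0.le) (by positivity)
    have e : (τ - x) / τ = -(x / τ - 1) := by field_simp; ring
    rw [e] at k3
    have hs : x / τ - 1 ≤ 0 := by rw [sub_nonpos, div_le_one hτ0]; exact h
    have := mul_le_mul_of_nonneg_left (k.trans k3) (neg_nonneg.2 hs)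
    linarith
  · have k := Bn_lip (n := n) hτ0 h.le hTx hTπ
    rw [hB] at k
    have k2 : (x - τ) / T ≤ (x - τ) / τ := by
      apply div_le_div_of_nonneg_left _ hτ0 hTτ; linarith
    have k3 : Qn n T * ((x - τ) / T) ≤ 3.6 * n * ((x - τ) / τ) :=
      mul_le_mul Q1 k2 (div_nonneg (by linarith) hT0.le) (by positivity)
    have e : (x - τ) / τ = x / τ - 1 := by field_simp
    rw [e] at k3
    have hs : 0 ≤ x / τ - 1 := by rw [sub_nonneg, one_le_div hτ0]; exact h.le
    have := mul_le_mul_of_nonneg_left (k.trans k3) hs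
    linarith

open MeasureTheory in
lemma ibp_ge2 {n : ℕ} {g p p' : ℝ → ℝ} {u e : ℝ} (hu : 0 ≤ u) (he : u ≤ e) (heb : n * (e / 2) ≤ π) (hn : 0 < n)
    (hg : Continuous g) (hp : Continuous p)
    (hd : ∀ x, u < x → x < e → HasDerivAt p (p' x) x)
    (h : ∀ x, u < x → x < e → p' x * S n x + p x * (S n x * Bn n x / x) ≤ g x) :
    p e * S n e - p u * S n u ≤ ∫ x in u..e, g x := by
  have hn' : (0 : ℝ) < n := by exact_mod_cast hn
  have := inc (f := fun x => (∫ y in u..x, g y) - p x * S n x)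
    (f' := fun x => g x - (p' x * S n x + p x * (S n x * Bn n x / x))) he
    (((continuous_iff_continuousAt.2 fun x => (intervalIntegral.integral_hasDerivAt_right (hg.intervalIntegrable u x)
      (hg.stronglyMeasurableAtFilter _ _) hg.continuousAt).continuousAt).sub (hp.mul (S_continuous n))).continuousOn)
    (fun x hx => by
      have h1 : n * (x / 2) < π := by
        refine lt_of_lt_of_le ?_ heb
        have := hx.2
        gcongr
      exact (intervalIntegral.integral_hasDerivAt_right (hg.intervalIntegrable u x)
        (hg.stronglyMeasurableAtFilter _ _) hg.continuousAt).sub ((hd x hx.1 hx.2).mul (S_hasDeriv n (lt_of_le_of_lt hu hx.1) h1)))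
    (fun x hx => by linarith [h x hx.1 hx.2])
  simp at this
  linarith

/-- variance upper bound -/
lemma var_upper {n : ℕ} (hn : (n : ℝ) = 68533) {τ : ℝ} (hτ1 : 2 * π / 86620 ≤ τ) (hτ2 : τ ≤ 2 * π / 86616) (hB : Bn n τ = 0) :
    0 ≤ ∫ x in (0 : ℝ)..(2 * π / n), S n x * (1 - n / 1.27 * (x / τ - 1) ^ 2) := by
  have hpi := pi_pos
  obtain ⟨hn0, hb0, hb1, hb2⟩ := basics n hn
  have hnp : (0 : ℝ) < n := by exact_mod_cast hn0
  have hτ0 : 0 < τ := by linarith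
  have hτπ : n * (τ / 2) < π := by rw [hn]; linarith
  have hbτ : 2 * π / n ≤ 1.27 * τ := by rw [hn]; linarith
  have key := ibp_ge (n := n) (g := fun x => S n x * (1 - n / 1.27 * (x / τ - 1) ^ 2))
    (p := fun x => x - τ) (p' := fun _ => 1) (e := 2 * π / n) hb0.le hb2.le hn0 ((S_continuous n).mul (by fun_prop)) (by fun_prop)
    (fun x _ _ => (hasDerivAt_id x).sub_const τ) (fun x hx0 hx1 => by
      have hxπ : n * (x / 2) < π := by rw [← hb2]; gcongr
      have hS := S_pos n hx0 hxπ
      have hz : 0 < x / τ := by positivity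
      have hz2 : x / τ ≤ 1.27 := by rw [div_le_iff₀ hτ0]; linarith
      have e : (x - τ) * (S n x * Bn n x / x) = S n x * ((x / τ - 1) * Bn n x / (x / τ)) := by field_simp
      have k : (x / τ - 1) * Bn n x ≤ -(n * (x / τ - 1) ^ 2) := by
        rcases le_or_gt x τ with h | h
        · have k := Bn_left hτ0 hτπ hB hx0 h
          have hs : x / τ - 1 ≤ 0 := by rw [sub_nonpos, div_le_one hτ0]; exact h
          have := mul_le_mul_of_nonneg_left k (neg_nonneg.2 hs)
          linarith
        · have k := Bn_right hτ0 hB h.le hxπ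
          have hs : 0 ≤ x / τ - 1 := by rw [sub_nonneg, one_le_div hτ0]; exact h.le
          have := mul_le_mul_of_nonneg_left k hs
          linarith
      have k2 : (x / τ - 1) * Bn n x / (x / τ) ≤ -(n / 1.27 * (x / τ - 1) ^ 2) := by
        rw [div_le_iff₀ hz]
        refine k.trans ?_
        have : n / 1.27 * (x / τ - 1) ^ 2 * (x / τ) ≤ n / 1.27 * (x / τ - 1) ^ 2 * 1.27 := by gcongr
        have e2 : n / 1.27 * (x / τ - 1) ^ 2 * 1.27 = n * (x / τ - 1) ^ 2 := by field_simp
        linarith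
      rw [e]
      have := mul_le_mul_of_nonneg_left k2 hS.le
      linarith)
  rw [S_end hn0, mul_zero] at key
  exact key

lemma p_deriv3 (τ x : ℝ) : HasDerivAt (fun x => (x / τ - 1) - 10000 * (x / τ - 1) ^ 3)
    (1 / τ * (1 - 30000 * (x / τ - 1) ^ 2)) x := by
  have h := ((hasDerivAt_id x).div_const τ).sub_const 1
  refine (h.sub ((h.pow 3).const_mul 10000)).congr_deriv ?_
  simp only [id]; ring

/-- variance lower bound -/
lemma var_lower {n : ℕ} (hn : (n : ℝ) = 68533) {τ : ℝ} (hτ1 : 2 * π / 86620 ≤ τ) (hτ2 : τ ≤ 2 * π / 86616) (hB : Bn n τ = 0) :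
    0 ≤ ∫ x in (0 : ℝ)..(2 * π / n), S n x * (300000 * (x / τ - 1) ^ 2 - 1) := by
  have hpi := pi_pos
  obtain ⟨hn0, hb0, hb1, hb2⟩ := basics n hn
  have hnp : (0 : ℝ) < n := by exact_mod_cast hn0
  have hτ0 : 0 < τ := by linarith
  have hτπ : n * (1.01 * τ / 2) < π := by rw [hn]; linarith
  have hbτ : 1.01 * τ ≤ 2 * π / n := by rw [hn]; linarith
  have hc : Continuous fun x => S n x * (300000 * (x / τ - 1) ^ 2 - 1) := (S_continuous n).mul (by fun_prop)
  have key := ibp_ge2 (n := n) (g := fun x => S n x * (300000 * (x / τ - 1) ^ 2 - 1))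
    (p := fun x => -(τ * ((x / τ - 1) - 10000 * (x / τ - 1) ^ 3))) (p' := fun x => -(τ * (1 / τ * (1 - 30000 * (x / τ - 1) ^ 2))))
    (u := 0.99 * τ) (e := 1.01 * τ) (by linarith) (by linarith) hτπ.le hn0 hc (by fun_prop)
    (fun x _ _ => ((p_deriv3 τ x).const_mul τ).neg) (fun x hx0' hx1 => by
      have hx0 : 0 < x := by linarith
      have hxπ : n * (x / 2) < π := by refine lt_trans ?_ hτπ; gcongr
      have hS := S_pos n hx0 hxπ
      have k := Bn_near hn hτ1 hτ2 hB hx0'.le hx1.le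
      have e : -(τ * ((x / τ - 1) - 10000 * (x / τ - 1) ^ 3)) * (S n x * Bn n x / x) =
        S n x * ((1 - 10000 * (x / τ - 1) ^ 2) * -((x / τ - 1) * Bn n x) / (x / τ)) := by field_simp
      have e2 : τ * (1 / τ * (1 - 30000 * (x / τ - 1) ^ 2)) = 1 - 30000 * (x / τ - 1) ^ 2 := by
        rw [← mul_assoc, mul_one_div_cancel hτ0.ne', one_mul]
      have hz : 0.99 ≤ x / τ := by rw [le_div_iff₀ hτ0]; exact hx0'.le
      have hz2 : x / τ ≤ 1.01 := by rw [div_le_iff₀ hτ0]; exact hx1.le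
      rw [e, e2]
      generalize x / τ = z at *
      have w0 : 0 ≤ 1 - 10000 * (z - 1) ^ 2 := by
        have : (z - 1) ^ 2 ≤ 0.01 ^ 2 := by
          apply sq_le_sq'
          · linarith
          · linarith
        norm_num at this; linarith
      have k1 : (1 - 10000 * (z - 1) ^ 2) * -((z - 1) * Bn n x) ≤ 1 * (3.6 * n * (z - 1) ^ 2) := by
        have r1 := mul_le_mul_of_nonneg_left (show -((z - 1) * Bn n x) ≤ 3.6 * n * (z - 1) ^ 2 by linarith) w0
        have r2 : (1 - 10000 * (z - 1) ^ 2) * (3.6 * n * (z - 1) ^ 2) ≤ 1 * (3.6 * n * (z - 1) ^ 2) := by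
          apply mul_le_mul_of_nonneg_right _ (by positivity)
          linarith [sq_nonneg (z - 1)]
        linarith
      have k2 : (1 - 10000 * (z - 1) ^ 2) * -((z - 1) * Bn n x) / z ≤ 270000 * (z - 1) ^ 2 := by
        rw [div_le_iff₀ (by linarith)]
        refine k1.trans ?_
        rw [hn]
        have : 270000 * (z - 1) ^ 2 * 0.99 ≤ 270000 * (z - 1) ^ 2 * z := by gcongr
        linarith [sq_nonneg (z - 1)]
      have k3 := mul_le_mul_of_nonneg_left k2 hS.le
      linarith)
  have z1 : -(τ * ((1.01 * τ / τ - 1) - 10000 * (1.01 * τ / τ - 1) ^ 3)) = 0 := by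
    rw [mul_div_cancel_right₀ _ hτ0.ne']; ring
  have z2 : -(τ * ((0.99 * τ / τ - 1) - 10000 * (0.99 * τ / τ - 1) ^ 3)) = 0 := by
    rw [mul_div_cancel_right₀ _ hτ0.ne']; ring
  rw [z1, z2] at key
  have out : ∀ x, 0 ≤ x → x ≤ 2 * π / n → (x ≤ 0.99 * τ ∨ 1.01 * τ ≤ x) → 0 ≤ S n x * (300000 * (x / τ - 1) ^ 2 - 1) := by
    intro x h0 h1 h2
    have hS : 0 ≤ S n x := S_nonneg n h0 (by rw [← hb2]; gcongr)
    apply mul_nonneg hS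
    have : 0.01 ^ 2 ≤ (x / τ - 1) ^ 2 := by
      rcases h2 with h | h
      · have : x / τ ≤ 0.99 := by rw [div_le_iff₀ hτ0]; exact h
        rw [← neg_sq (x / τ - 1)]
        exact pow_le_pow_left₀ (by norm_num) (by linarith) 2
      · have : 1.01 ≤ x / τ := by rw [le_div_iff₀ hτ0]; exact h
        exact pow_le_pow_left₀ (by norm_num) (by linarith) 2
    norm_num at this; linarith
  have i1 : 0 ≤ ∫ x in (0 : ℝ)..(0.99 * τ), S n x * (300000 * (x / τ - 1) ^ 2 - 1) :=
    intervalIntegral.integral_nonneg (by linarith) fun x hx => out x hx.1 (by linarith [hx.2]) (Or.inl hx.2)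
  have i3 : 0 ≤ ∫ x in (1.01 * τ)..(2 * π / n), S n x * (300000 * (x / τ - 1) ^ 2 - 1) :=
    intervalIntegral.integral_nonneg hbτ fun x hx => out x (by linarith [hx.1]) hx.2 (Or.inr hx.1)
  have isum := intervalIntegral.integral_add_adjacent_intervals (hc.intervalIntegrable (μ := MeasureTheory.volume) 0 (0.99 * τ)) (hc.intervalIntegrable (0.99 * τ) (1.01 * τ))
  have isum2 := intervalIntegral.integral_add_adjacent_intervals (hc.intervalIntegrable (μ := MeasureTheory.volume) 0 (1.01 * τ)) (hc.intervalIntegrable (1.01 * τ) (2 * π / n))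
  linarith

end QP

namespace QP
open Real Finset

lemma cos_pert (y h : ℝ) : cos y - 0.01 * y ^ 2 - 25.5 * h ^ 2 ≤ cos (y + h) := by
  rw [cos_add]
  have h1 : cos y - h ^ 2 / 2 ≤ cos y * cos h := by
    have a := one_sub_sq_div_two_le_cos (x := h)
    have b := cos_le_one y
    have c := cos_le_one h
    have := mul_nonneg (sub_nonneg.2 b) (sub_nonneg.2 c)
    linarith [neg_one_le_cos y]
  have h2 : sin y * sin h ≤ |y| * |h| := by
    calc sin y * sin h ≤ |sin y * sin h| := le_abs_self _
      _ = |sin y| * |sin h| := abs_mul _ _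
      _ ≤ |y| * |h| := mul_le_mul abs_sin_le_abs abs_sin_le_abs (abs_nonneg _) (abs_nonneg _)
  have h3 : |y| * |h| ≤ 0.01 * y ^ 2 + 25 * h ^ 2 := by
    have := sq_nonneg (0.1 * |y| - 5 * |h|)
    have e1 := sq_abs y
    have e2 := sq_abs h
    rw [← e1, ← e2]
    linarith
  linarith

lemma cos_gap_pos {x : ℝ} (h0 : 0 ≤ x) (h1 : x ≤ 1.571) : 0.05 * x ^ 2 ≤ cos x - cos (1.1 * x) := by
  have e : cos x - cos (1.1 * x) = 2 * sin (1.05 * x) * sin (0.05 * x) := by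
    rw [cos_sub_cos, show (x + 1.1 * x) / 2 = 1.05 * x by ring, show (x - 1.1 * x) / 2 = -(0.05 * x) by ring, sin_neg]; ring
  rw [e]
  have a := s3 (x := 1.05 * x) (by linarith)
  have b := s3 (x := 0.05 * x) (by linarith)
  have hx2 : x ^ 2 ≤ 1.571 ^ 2 := pow_le_pow_left₀ h0 h1 2
  have hx3 : x ^ 2 * x ≤ 1.571 ^ 2 * x := mul_le_mul_of_nonneg_right hx2 h0
  norm_num at hx3
  have a' : 0.55 * x ≤ sin (1.05 * x) := by
    refine le_trans ?_ a
    norm_num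
    linarith
  have b' : 0.049 * x ≤ sin (0.05 * x) := by
    refine le_trans ?_ b
    norm_num
    linarith
  have := mul_le_mul a' b' (by positivity) (le_trans (by positivity) a')
  norm_num at *
  linarith [sq_nonneg x]

lemma cos_gap {x : ℝ} (h1 : |x| ≤ 1.571) : 0.05 * x ^ 2 ≤ cos x - cos (1.1 * x) := by
  have := cos_gap_pos (abs_nonneg x) h1
  rw [sq_abs, cos_abs] at this
  rcases abs_choice x with h | h
  · rwa [h] at this
  · rwa [h, mul_neg, cos_neg] at this

lemma sinJ {τ x : ℝ} (hτ1 : 2 * π / 86620 ≤ τ) (hτ2 : τ ≤ 2 * π / 86616) (hx0 : 0 ≤ x) (hx : x ≤ 1.27 * τ) :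
    ∃ h : ℝ, h ^ 2 ≤ 0.0000000025 ∧ sin (21654.5 * x) = cos (π / 2 * (x / τ - 1) + h) := by
  have hpi := pi_pos
  have hpl := pi_gt_d20
  have hpu := pi_lt_d20
  have hτ0 : 0 < τ := by linarith
  have hz : 0 ≤ x / τ := by positivity
  have hz2 : x / τ ≤ 1.27 := by rw [div_le_iff₀ hτ0]; exact hx
  refine ⟨(21654.5 * τ - π / 2) * (x / τ), ?_, ?_⟩
  · have hy : |(21654.5 * τ - π / 2) * (x / τ)| ≤ 0.00005 := by
      rw [abs_mul, abs_of_nonneg hz]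
      have : |21654.5 * τ - π / 2| ≤ 0.000037 := by
        rw [abs_le]; constructor <;> linarith
      calc _ ≤ 0.000037 * 1.27 := mul_le_mul this hz2 hz (by norm_num)
        _ ≤ 0.00005 := by norm_num
    rw [← sq_abs]
    calc _ ≤ (0.00005 : ℝ) ^ 2 := pow_le_pow_left₀ (abs_nonneg _) hy 2
      _ ≤ _ := by norm_num
  · rw [← sin_add_pi_div_two]
    congr 1
    field_simp; ring

lemma sin_mul_le {a x : ℝ} (ha : 1.02 ≤ a) (h0 : 0 ≤ x) (h1 : x ≤ 1.1 * (π / 2)) : |sin (a * x)| ≤ a * sin x := by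
  have hpi := pi_pos
  have hpl := pi_gt_d20
  have hpu := pi_lt_d20
  have ha0 : 0 < a := by linarith
  rcases le_or_gt (a * x) (π / 2) with h | h
  · have hax : 0 ≤ a * x := by positivity
    rw [abs_of_nonneg (sin_nonneg_of_nonneg_of_le_pi hax (by linarith))]
    have := strictConcaveOn_sin_Icc.concaveOn.2 (show a * x ∈ Set.Icc 0 π from ⟨hax, by linarith⟩)
      (show (0 : ℝ) ∈ Set.Icc 0 π from ⟨le_refl _, hpi.le⟩)
      (show 0 ≤ 1 / a by positivity) (show 0 ≤ 1 - 1 / a by rw [sub_nonneg, div_le_one ha0]; linarith) (by ring)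
    simp only [smul_eq_mul, sin_zero, mul_zero, add_zero] at this
    rw [show 1 / a * (a * x) = x by field_simp, one_div_mul_eq_div, div_le_iff₀ ha0] at this
    linarith
  · refine (abs_sin_le_one _).trans ?_
    rcases le_or_gt x (π / 2) with hx | hx
    · have k := mul_le_sin h0 hx
      have k2 := mul_le_mul_of_nonneg_left k ha0.le
      have : 1 ≤ a * (2 / π * x) := by
        rw [show a * (2 / π * x) = 2 * (a * x) / π by ring, le_div_iff₀ hpi]; linarith
      linarith
    · have k := one_sub_sq_div_two_le_cos (x := x - π / 2)
      rw [cos_sub_pi_div_two] at k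
      have k2 : (x - π / 2) ^ 2 ≤ 0.16 ^ 2 := pow_le_pow_left₀ (by linarith) (by linarith) 2
      have k3 : 0.987 ≤ sin x := by norm_num at k2 ⊢; linarith
      have := mul_le_mul ha k3 (by norm_num) ha0.le
      norm_num at this ⊢; linarith

/-- mid range pointwise bound -/
lemma mid_pt {j τ x : ℝ} (hτ1 : 2 * π / 86620 ≤ τ) (hτ2 : τ ≤ 2 * π / 86616) (hx0 : 0 ≤ x) (hx : x ≤ 1.27 * τ)
    (hj1 : 34266.5 ≤ j) (hj2 : j * τ ≤ 2.3 * (π / 2)) {ε : ℝ} (hε : |ε| ≤ 1) :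
    0.31 - 184 * (x / τ - 1) ^ 2 ≤ sin (21654.5 * x) - ε * sin (j * x) := by
  have hpi := pi_pos
  have hpl := pi_gt_d20
  have hpu := pi_lt_d20
  have hτ0 : 0 < τ := by linarith
  obtain ⟨h, hh, e⟩ := sinJ hτ1 hτ2 hx0 hx
  have k1 := cos_pert (π / 2 * (x / τ - 1)) h
  have k2 := one_sub_sq_div_two_le_cos (x := π / 2 * (x / τ - 1))
  have k3 : (π / 2 * (x / τ - 1)) ^ 2 ≤ 2.5 * (x / τ - 1) ^ 2 := by
    rw [mul_pow]
    apply mul_le_mul_of_nonneg_right _ (sq_nonneg _)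
    calc (π / 2) ^ 2 ≤ 1.571 ^ 2 := pow_le_pow_left₀ (by positivity) (by linarith) 2
      _ ≤ 2.5 := by norm_num
  have hjτ : 34266.5 * (2 * π / 86620) ≤ j * τ := mul_le_mul hj1 hτ1 (by positivity) (by linarith)
  have j1 : |sin (j * τ)| ≤ 0.66 := by
    rw [← sin_pi_sub]
    refine abs_sin_le_abs.trans ?_
    rw [abs_le]; constructor <;> linarith
  have j2 : |sin (j * x) - sin (j * τ)| ≤ 3.62 * |x / τ - 1| := by
    rw [sin_sub_sin, abs_mul, abs_mul, abs_of_pos (show (0 : ℝ) < 2 by norm_num)]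
    have a1 : |sin ((j * x - j * τ) / 2)| ≤ |(j * x - j * τ) / 2| := abs_sin_le_abs
    have a2 : (j * x - j * τ) / 2 = j * τ / 2 * (x / τ - 1) := by field_simp
    rw [a2] at a1
    rw [abs_mul, abs_of_pos (show 0 < j * τ / 2 by linarith)] at a1
    have a3 : |cos ((j * x + j * τ) / 2)| ≤ 1 := abs_cos_le_one _
    rw [a2]
    have a4 : j * τ / 2 * |x / τ - 1| ≤ 1.81 * |x / τ - 1| := mul_le_mul_of_nonneg_right (by linarith) (abs_nonneg _)
    have a5 := mul_le_mul (a1.trans a4) a3 (abs_nonneg _) (by positivity)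
    linarith
  have j3 : |sin (j * x)| ≤ 0.66 + 3.62 * |x / τ - 1| := by
    have := abs_sub_abs_le_abs_sub (sin (j * x)) (sin (j * τ))
    linarith
  have j4 : 3.62 * |x / τ - 1| ≤ 0.0181 + 181 * (x / τ - 1) ^ 2 := by
    have := sq_nonneg (|x / τ - 1| - 0.01)
    rw [← sq_abs (x / τ - 1)]
    linarith
  have j5 : ε * sin (j * x) ≤ |sin (j * x)| := by
    refine (le_abs_self _).trans ?_
    rw [abs_mul]
    exact mul_le_of_le_one_left (abs_nonneg _) hε
  rw [e]
  have := sq_nonneg (x / τ - 1)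
  norm_num at *
  linarith

/-- far range pointwise comparison of the target with a cosine -/
lemma far_pt {τ x : ℝ} (hτ1 : 2 * π / 86620 ≤ τ) (hτ2 : τ ≤ 2 * π / 86616) (hx0 : 0 ≤ x) (hx : x ≤ 1.27 * τ) :
    0.098 * (x / τ - 1) ^ 2 - 0.00000007 ≤ sin (21654.5 * x) - cos (1.1 * (π / 2) / τ * (x - τ)) := by
  have hpi := pi_pos
  have hpl := pi_gt_d20
  have hpu := pi_lt_d20
  have hτ0 : 0 < τ := by linarith
  have hz : 0 ≤ x / τ := by positivity
  have hz2 : x / τ ≤ 1.27 := by rw [div_le_iff₀ hτ0]; exact hx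
  obtain ⟨h, hh, e⟩ := sinJ hτ1 hτ2 hx0 hx
  have k1 := cos_pert (π / 2 * (x / τ - 1)) h
  have k2 := cos_gap (x := π / 2 * (x / τ - 1)) (by
    rw [abs_mul, abs_of_pos (show 0 < π / 2 by positivity)]
    have : |x / τ - 1| ≤ 1 := by rw [abs_le]; constructor <;> linarith
    calc π / 2 * |x / τ - 1| ≤ 1.571 * 1 := mul_le_mul (by linarith) this (abs_nonneg _) (by norm_num)
      _ = 1.571 := by norm_num)
  have k3 : 2.46 * (x / τ - 1) ^ 2 ≤ (π / 2 * (x / τ - 1)) ^ 2 := by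
    rw [mul_pow]
    apply mul_le_mul_of_nonneg_right _ (sq_nonneg _)
    calc (2.46 : ℝ) ≤ 1.57 ^ 2 := by norm_num
      _ ≤ (π / 2) ^ 2 := pow_le_pow_left₀ (by norm_num) (by linarith) 2
  have e2 : 1.1 * (π / 2) / τ * (x - τ) = 1.1 * (π / 2 * (x / τ - 1)) := by field_simp
  rw [e, e2]
  have := sq_nonneg (x / τ - 1)
  norm_num at *
  linarith

/-- the key comparison for large frequency -/
lemma far_cmp {n : ℕ} (hn : (n : ℝ) = 68533) {τ : ℝ} (hτ1 : 2 * π / 86620 ≤ τ) (hτ2 : τ ≤ 2 * π / 86616) (hB : Bn n τ = 0)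
    {j : ℝ} (hj : 2.3 * (π / 2) ≤ j * τ) {ε : ℝ} (hε : |ε| ≤ 1) :
    0 ≤ ∫ x in (0 : ℝ)..(2 * π / n), S n x * (cos (1.1 * (π / 2) / τ * (x - τ)) - ε * sin (j * x)) := by
  have hpi := pi_pos
  obtain ⟨hn0, hb0, hb1, hb2⟩ := basics n hn
  have hnp : (0 : ℝ) < n := by exact_mod_cast hn0
  have hτ0 : 0 < τ := by linarith
  have hτπ : n * (τ / 2) < π := by rw [hn]; linarith
  have hbτ : 2 * π / n ≤ 1.27 * τ := by rw [hn]; linarith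
  have hj0 : 0 < j := by
    by_contra hc; push Not at hc
    have := mul_nonpos_of_nonpos_of_nonneg hc hτ0.le
    linarith
  obtain ⟨k, hk⟩ : ∃ k, k = 1.1 * (π / 2) / τ := ⟨_, rfl⟩
  have hk0 : 0 < k := by rw [hk]; positivity
  have hkτ : k * τ = 1.1 * (π / 2) := by rw [hk, div_mul_cancel₀ _ hτ0.ne']
  have ha : 1.02 ≤ j / (2 * k) := by
    rw [le_div_iff₀ (by positivity)]
    apply le_of_mul_le_mul_right _ hτ0
    linarith
  have main : ∀ d, 0 ≤ d → d ≤ τ → ∀ y, |cos y - cos (y + j * d)| / j ≤ sin (k * d) / k ∧ |cos y - cos (y - j * d)| / j ≤ sin (k * d) / k := by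
    intro d hd0 hd1 y
    have h1 := sin_mul_le ha (x := k * d) (by positivity) (by rw [← hkτ]; gcongr)
    have e1 : j / (2 * k) * (k * d) = j * d / 2 := by field_simp
    rw [e1] at h1
    have e2 : j / (2 * k) * sin (k * d) = j / 2 * (sin (k * d) / k) := by field_simp
    rw [e2] at h1
    have hs : ∀ z, |sin z * sin (j * d / 2)| ≤ |sin (j * d / 2)| := by
      intro z
      rw [abs_mul]
      exact mul_le_of_le_one_left (abs_nonneg _) (abs_sin_le_one _)
    constructor
    · rw [div_le_iff₀ hj0, cos_sub_cos, show (y - (y + j * d)) / 2 = -(j * d / 2) by ring, sin_neg]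
      have := hs ((y + (y + j * d)) / 2)
      rw [show -2 * sin ((y + (y + j * d)) / 2) * -sin (j * d / 2) = 2 * (sin ((y + (y + j * d)) / 2) * sin (j * d / 2)) by ring,
        abs_mul, abs_of_pos (show (0 : ℝ) < 2 by norm_num)]
      linarith
    · rw [div_le_iff₀ hj0, cos_sub_cos, show (y - (y - j * d)) / 2 = j * d / 2 by ring]
      have := hs ((y + (y - j * d)) / 2)
      rw [show -2 * sin ((y + (y - j * d)) / 2) * sin (j * d / 2) = -(2 * (sin ((y + (y - j * d)) / 2) * sin (j * d / 2))) by ring,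
        abs_neg, abs_mul, abs_of_pos (show (0 : ℝ) < 2 by norm_num)]
      linarith
  have hεb : ∀ z, |ε * z| ≤ |z| := fun z => by
    rw [abs_mul]; exact mul_le_of_le_one_left (abs_nonneg _) hε
  rw [← hk]
  have key := ibp_ge (n := n) (g := fun x => S n x * (cos (k * (x - τ)) - ε * sin (j * x)))
    (p := fun x => sin (k * (x - τ)) / k - ε * ((cos (j * τ) - cos (j * x)) / j)) (p' := fun x => cos (k * (x - τ)) - ε * sin (j * x))
    (e := 2 * π / n) hb0.le hb2.le hn0 ((S_continuous n).mul (by fun_prop)) (by fun_prop)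
    (fun x _ _ => by
      have h1 := (((((hasDerivAt_id x).sub_const τ).const_mul k).sin).div_const k)
      have h2 := ((((((hasDerivAt_id x).const_mul j).cos).const_sub (cos (j * τ))).div_const j).const_mul ε)
      refine (h1.sub h2).congr_deriv ?_
      simp only [id]
      field_simp)
    (fun x hx0 hx1 => by
      have hxπ : n * (x / 2) < π := by rw [← hb2]; gcongr
      have hS := S_pos n hx0 hxπ
      have sgn : (sin (k * (x - τ)) / k - ε * ((cos (j * τ) - cos (j * x)) / j)) * Bn n x ≤ 0 := by
        have hq := hεb ((cos (j * τ) - cos (j * x)) / j)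
        rw [abs_div, abs_of_pos hj0] at hq
        rcases le_or_gt x τ with h | h
        · have b := Bn_left hτ0 hτπ hB hx0 h
          have b0 : 0 ≤ Bn n x := by
            refine le_trans ?_ b
            apply mul_nonneg hnp.le
            rw [sub_nonneg, div_le_one hτ0]; exact h
          have m := (main (τ - x) (by linarith) (by linarith) (j * τ)).2
          rw [show j * τ - j * (τ - x) = j * x by ring, show k * (τ - x) = -(k * (x - τ)) by ring, sin_neg, neg_div] at m
          apply mul_nonpos_of_nonpos_of_nonneg _ b0
          have := neg_le_of_abs_le (hq.trans m)
          linarith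
        · have b := Bn_right hτ0 hB h.le hxπ
          have b0 : Bn n x ≤ 0 := by
            refine le_trans b ?_
            rw [neg_nonpos]
            apply mul_nonneg hnp.le
            rw [sub_nonneg, one_le_div hτ0]; exact h.le
          have m := (main (x - τ) (by linarith) (by linarith) (j * τ)).1
          rw [show j * τ + j * (x - τ) = j * x by ring] at m
          apply mul_nonpos_of_nonneg_of_nonpos _ b0
          have := le_of_abs_le (hq.trans m)
          linarith
      have k2 := mul_nonpos_of_nonpos_of_nonneg sgn (show 0 ≤ S n x / x by positivity)
      generalize sin (k * (x - τ)) / k - ε * ((cos (j * τ) - cos (j * x)) / j) = C at *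
      have e : C * (S n x * Bn n x / x) = C * Bn n x * (S n x / x) := by ring
      rw [e]
      linarith)
  rw [S_end hn0, mul_zero] at key
  exact key

lemma E_main {n : ℕ} (hn : (n : ℝ) = 68533) {j : ℝ} (hj : 34266.5 ≤ j) {ε : ℝ} (hε : |ε| ≤ 1) :
    0.0000001 * ∫ x in (0 : ℝ)..(2 * π / n), S n x * 1 ≤ ∫ x in (0 : ℝ)..(2 * π / n), S n x * (sin (21654.5 * x) - ε * sin (j * x)) := by
  obtain ⟨τ, hτ1, hτ2, hB⟩ := mode n hn
  have hpi := pi_pos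
  obtain ⟨hn0, hb0, hb1, hb2⟩ := basics n hn
  have hnp : (0 : ℝ) < n := by exact_mod_cast hn0
  have hτ0 : 0 < τ := by linarith
  have hbτ : 2 * π / n ≤ 1.27 * τ := by rw [hn]; linarith
  have hSc := S_continuous n
  have hS : ∀ x ∈ Set.Icc 0 (2 * π / n), 0 ≤ S n x := fun x hx => S_nonneg n hx.1 (by
    have := hx.2
    rw [← hb2]; gcongr)
  have hZ : 0 ≤ ∫ x in (0 : ℝ)..(2 * π / n), S n x * 1 :=
    intervalIntegral.integral_nonneg hb0.le fun x hx => by rw [mul_one]; exact hS x hx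
  rcases le_total (j * τ) (2.3 * (π / 2)) with h | h
  · have v := var_upper hn hτ1 hτ2 hB
    have k : ∫ x in (0 : ℝ)..(2 * π / n), (0.3 * (S n x * 1) + 0.01 * (S n x * (1 - n / 1.27 * (x / τ - 1) ^ 2))) ≤
        ∫ x in (0 : ℝ)..(2 * π / n), S n x * (sin (21654.5 * x) - ε * sin (j * x)) := by
      apply intervalIntegral.integral_mono_on hb0.le
      · exact Continuous.intervalIntegrable (by fun_prop) _ _
      · exact Continuous.intervalIntegrable (by fun_prop) _ _
      · intro x hx
        have m := mid_pt hτ1 hτ2 hx.1 (hx.2.trans hbτ) hj h hε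
        have m2 := mul_le_mul_of_nonneg_left m (hS x hx)
        refine le_trans ?_ m2
        rw [hn, show 0.3 * (S n x * 1) + 0.01 * (S n x * (1 - 68533 / 1.27 * (x / τ - 1) ^ 2)) =
          S n x * (0.31 - 685.33 / 1.27 * (x / τ - 1) ^ 2) by ring]
        apply mul_le_mul_of_nonneg_left _ (hS x hx)
        have := sq_nonneg (x / τ - 1)
        norm_num at *
        linarith
    rw [intervalIntegral.integral_add, intervalIntegral.integral_const_mul, intervalIntegral.integral_const_mul] at k
    · linarith
    · exact Continuous.intervalIntegrable (by fun_prop) _ _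
    · exact Continuous.intervalIntegrable (by fun_prop) _ _
  · have v := var_lower hn hτ1 hτ2 hB
    have c := far_cmp hn hτ1 hτ2 hB h hε
    have k : ∫ x in (0 : ℝ)..(2 * π / n), (0.0000001 * (S n x * 1) + (0.0000002 * (S n x * (300000 * (x / τ - 1) ^ 2 - 1)) +
          S n x * (cos (1.1 * (π / 2) / τ * (x - τ)) - ε * sin (j * x)))) ≤
        ∫ x in (0 : ℝ)..(2 * π / n), S n x * (sin (21654.5 * x) - ε * sin (j * x)) := by
      apply intervalIntegral.integral_mono_on hb0.le
      · exact Continuous.intervalIntegrable (by fun_prop) _ _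
      · exact Continuous.intervalIntegrable (by fun_prop) _ _
      · intro x hx
        have m := far_pt hτ1 hτ2 hx.1 (hx.2.trans hbτ)
        have s0 := sq_nonneg (x / τ - 1)
        have m1 : 0.0000001 + 0.0000002 * (300000 * (x / τ - 1) ^ 2 - 1) ≤ sin (21654.5 * x) - cos (1.1 * (π / 2) / τ * (x - τ)) := by
          norm_num at *
          linarith
        have m2 := mul_le_mul_of_nonneg_left m1 (hS x hx)
        generalize cos (1.1 * (π / 2) / τ * (x - τ)) = A at *
        generalize (x / τ - 1) ^ 2 = D at *
        linarith
    rw [intervalIntegral.integral_add, intervalIntegral.integral_add, intervalIntegral.integral_const_mul, intervalIntegral.integral_const_mul] at k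
    · linarith
    all_goals exact Continuous.intervalIntegrable (by fun_prop) _ _

lemma E_final {n : ℕ} (hn : (n : ℝ) = 68533) {j : ℝ} (hj : 34266.5 ≤ j) {ε : ℝ} (hε : |ε| ≤ 1) :
    ε * F n j < F n 21654.5 := by
  have hSc := S_continuous n
  have hpl := pi_gt_d20
  have := from_main n hn (V := fun x => sin (21654.5 * x) - ε * sin (j * x)) (W := fun _ => 1) (by fun_prop) (by fun_prop)
    (fun x h0 h1 => by
      refine (cube_le h0 (by linarith)).trans ?_
      rw [div_le_one pi_pos]; linarith)
    (fun x _ _ => by norm_num) (A := 2) (κ := 0.0000001) (by norm_num) (fun x => by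
      refine (abs_sub _ _).trans ?_
      rw [abs_mul]
      have := mul_le_one₀ hε (abs_nonneg _) (abs_sin_le_one (j * x))
      linarith [abs_sin_le_one (21654.5 * x)]) (by norm_num) (E_main hn hj hε)
  have e : F n 21654.5 - ε * F n j = ∫ x in (0 : ℝ)..π, S n x * (sin (21654.5 * x) - ε * sin (j * x)) := by
    unfold F
    rw [← intervalIntegral.integral_const_mul, ← intervalIntegral.integral_sub]
    · congr 1; ext x; ring
    all_goals exact Continuous.intervalIntegrable (by fun_prop) _ _
  linarith

end QP

namespace QP
open Real Finset

lemma F_neg (n : ℕ) (x : ℝ) : F n (-x) = -F n x := by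
  unfold F
  rw [← intervalIntegral.integral_neg]
  congr 1; ext y
  rw [neg_mul, sin_neg, mul_neg]

lemma F_bound {n : ℕ} (hn : (n : ℝ) = 68533) (m : ℕ) : |F n (m + 1/2)| ≤ F n 21654.5 ∧ (m ≠ 21654 → |F n (m + 1/2)| < F n 21654.5) := by
  rcases le_or_gt m 34266 with h | h
  · obtain ⟨h1, h2⟩ := D_final n hn 21653 34266 (by norm_num) (by norm_num) m h
    rw [abs_of_pos h1]
    rcases eq_or_ne m 21654 with h3 | h3
    · refine ⟨?_, fun h4 => absurd h3 h4⟩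
      rw [h3]; norm_num
    · have := h2 (by simpa using h3)
      exact ⟨this.le, fun _ => this⟩
  · have hm : (34266.5 : ℝ) ≤ m + 1/2 := by
      have : (34267 : ℝ) ≤ m := by exact_mod_cast h
      linarith
    have h1 := E_final hn hm (ε := 1) (by norm_num)
    have h2 := E_final hn hm (ε := -1) (by norm_num)
    have : |F n (m + 1/2)| < F n 21654.5 := by
      rw [abs_lt]; constructor <;> linarith
    exact ⟨this.le, fun _ => this⟩

lemma final {n : ℕ} (hn : (n : ℝ) = 68533) : L n = 1174188501 := by
  have hnn : n = 68533 := by exact_mod_cast hn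
  have hN : n * (n + 1) / 2 = 2348420311 := by rw [hnn]
  have h4 : n % 4 = 1 := by rw [hnn]
  have hpi := pi_pos
  have hcf : ∀ i, i ≤ n * (n + 1) / 2 → (a n i : ℝ) * π = F n (1174210155.5 - i) := by
    intro i hi
    rw [coeff_formula n i h4 hi, hn]
    norm_num
  have habs : ∀ i, i ≤ n * (n + 1) / 2 → ((a n i).natAbs : ℝ) * π = |F n (1174210155.5 - i)| := by
    intro i hi
    rw [← hcf i hi, abs_mul, abs_of_pos hpi, Nat.cast_natAbs, Int.cast_abs]
  have hi0 : ((a n 1174188501).natAbs : ℝ) * π = F n 21654.5 := by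
    rw [habs _ (by rw [hN]; norm_num)]
    have e : (1174210155.5 : ℝ) - ((1174188501 : ℕ) : ℝ) = ((21654 : ℕ) : ℝ) + 1/2 := by norm_num
    have e2 : ((21654 : ℕ) : ℝ) + 1/2 = 21654.5 := by norm_num
    rw [e, abs_of_pos (D_final n hn 21653 34266 (by norm_num) (by norm_num) 21654 (by norm_num)).1, e2]
  have hle : ∀ i, i ≤ n * (n + 1) / 2 → (a n i).natAbs ≤ (a n 1174188501).natAbs := by
    intro i hi
    have : ((a n i).natAbs : ℝ) * π ≤ ((a n 1174188501).natAbs : ℝ) * π := by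
      rw [hi0, habs i hi]
      rcases le_or_gt i 1174210155 with h | h
      · obtain ⟨m, hm⟩ : ∃ m, i + m = 1174210155 := ⟨1174210155 - i, by omega⟩
        have hr : (i : ℝ) + m = 1174210155 := by exact_mod_cast hm
        rw [show (1174210155.5 : ℝ) - i = m + 1/2 by norm_num; linarith]
        exact (F_bound hn m).1
      · obtain ⟨m, hm⟩ : ∃ m, i = 1174210155 + 1 + m := ⟨i - 1174210155 - 1, by omega⟩
        have hr : (i : ℝ) = 1174210155 + 1 + m := by exact_mod_cast hm
        rw [show (1174210155.5 : ℝ) - i = -(m + 1/2) by norm_num; linarith, F_neg, abs_neg]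
        exact (F_bound hn m).1
    have := le_of_mul_le_mul_right this hpi
    exact_mod_cast this
  have hlt : ∀ i, i < 1174188501 → (a n i).natAbs < (a n 1174188501).natAbs := by
    intro i hi
    have : ((a n i).natAbs : ℝ) * π < ((a n 1174188501).natAbs : ℝ) * π := by
      rw [hi0, habs i (by rw [hN]; omega)]
      obtain ⟨m, hm⟩ : ∃ m, i + m = 1174210155 := ⟨1174210155 - i, by omega⟩
      have hr : (i : ℝ) + m = 1174210155 := by exact_mod_cast hm
      rw [show (1174210155.5 : ℝ) - i = m + 1/2 by norm_num; linarith]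
      exact (F_bound hn m).2 (by omega)
    have := lt_of_mul_lt_mul_right this hpi.le
    exact_mod_cast this
  have hM : M n = (a n 1174188501).natAbs := by
    unfold M
    apply le_antisymm
    · apply Finset.sup_le
      intro i hi
      exact hle i (Nat.lt_succ_iff.1 (mem_range.1 hi))
    · exact Finset.le_sup (f := fun i => (a n i).natAbs) (mem_range.2 (by rw [hN]; norm_num))
  unfold L
  rw [hM]
  apply le_antisymm
  · exact Nat.sInf_le rfl
  · have hne : {i : ℕ | (a n i).natAbs = (a n 1174188501).natAbs}.Nonempty := ⟨1174188501, rfl⟩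
    have := Nat.sInf_mem hne
    by_contra hcon
    push Not at hcon
    have h5 := hlt _ hcon
    rw [Set.mem_ofPred_eq] at this
    omega

end QP

/-- `L(68533) = (68533·68534 - 2·3735)/4 - 19787`, where `68533 = 5909 + 62624`. -/
theorem stmt_18 : L 68533 = (68533 * 68534 - 2 * 3735) / 4 - 19787 := by
  rw [QP.final (n := 68533) (by norm_num)]
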